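/- arXiv:1410.6800 — 3 statements merged into one kernel-verified Lean document; each statement's English description precedes it below -/
import Mathlib

section
/- Let f be a strictly convex continuous function on a compact interval [a,b] and let ε > 0. Then there exists δ > 0 such that: for every complex Hilbert space 𝓗, every closed subspace M of 𝓗 with orthogonal projection P onto M, and every self-adjoint bounded operator H on 𝓗 with σ(H) ⊆ [a,b], if ‖f(pr(H)) − pr(f(H))‖ < δ then ‖P H − H P‖ < ε, where pr denotes compression to M. -/
set_option synthInstance.maxHeartbeats 400000
set_option maxHeartbeats 800000

open scoped InnerProductSpace
open ContinuousLinearMap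

universe u v

lemma aux_gap {a b : ℝ} {f : ℝ → ℝ} (hf : StrictConvexOn ℝ (Set.Icc a b) f)
    (hfc : ContinuousOn f (Set.Icc a b)) {κ : ℝ} (hκ : 0 < κ) :
    ∃ γ : ℝ, 0 < γ ∧ ∀ s ∈ Set.Icc a b, ∀ t ∈ Set.Icc a b, κ ≤ |t - s| →
      γ ≤ (f s + f t) / 2 - f ((s + t) / 2) := by
  have hK : IsCompact ((Set.Icc a b ×ˢ Set.Icc a b) ∩ {p : ℝ × ℝ | κ ≤ |p.2 - p.1|}) := by
    apply (isCompact_Icc.prod isCompact_Icc).inter_right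
    exact isClosed_le continuous_const (by fun_prop)
  set S := (Set.Icc a b ×ˢ Set.Icc a b) ∩ {p : ℝ × ℝ | κ ≤ |p.2 - p.1|} with hS
  rcases S.eq_empty_or_nonempty with hE | hE
  · refine ⟨1, one_pos, fun s hs t ht h => ?_⟩
    have : (s, t) ∈ S := ⟨⟨hs, ht⟩, h⟩
    rw [hE] at this
    exact this.elim
  · have hc : ContinuousOn (fun p : ℝ × ℝ => (f p.1 + f p.2) / 2 - f ((p.1 + p.2) / 2)) S := by
      have h1 : ContinuousOn (fun p : ℝ × ℝ => f p.1) S :=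
        hfc.comp continuous_fst.continuousOn (fun p hp => hp.1.1)
      have h2 : ContinuousOn (fun p : ℝ × ℝ => f p.2) S :=
        hfc.comp continuous_snd.continuousOn (fun p hp => hp.1.2)
      have h3 : ContinuousOn (fun p : ℝ × ℝ => f ((p.1 + p.2) / 2)) S := by
        refine hfc.comp (f := fun p : ℝ × ℝ => (p.1 + p.2) / 2)
          (Continuous.continuousOn (by fun_prop)) (fun p hp => ?_)
        have h1 := hp.1.1
        have h2 := hp.1.2
        simp only [Set.mem_Icc] at *
        constructor <;> linarith
      exact ((h1.add h2).div_const 2).sub h3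
    obtain ⟨p, hp, hmin⟩ := hK.exists_isMinOn hE hc
    refine ⟨_, ?_, fun s hs t ht h => hmin (a := (s, t)) ⟨⟨hs, ht⟩, h⟩⟩
    have hne : p.1 ≠ p.2 := by
      intro h
      have := hp.2
      simp only [Set.mem_ofPred_eq, h, sub_self, abs_zero] at this
      linarith
    have := hf.2 hp.1.1 hp.1.2 hne (show (0:ℝ) < 1 / 2 by norm_num) (show (0:ℝ) < 1 / 2 by norm_num) (by norm_num)
    simp only [smul_eq_mul] at this
    have e : (p.1 + p.2) / 2 = 1 / 2 * p.1 + 1 / 2 * p.2 := by ring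
    change 0 < (f p.1 + f p.2) / 2 - f ((p.1 + p.2) / 2)
    rw [e]
    linarith

lemma aux_three {a b : ℝ} {f : ℝ → ℝ} (hf : ConvexOn ℝ (Set.Icc a b) f) {x y z : ℝ}
    (hx : x ∈ Set.Icc a b) (hz : z ∈ Set.Icc a b) (hxy : x ≤ y) (hyz : y ≤ z) :
    (z - x) * f y ≤ (z - y) * f x + (y - x) * f z := by
  rcases eq_or_lt_of_le (hxy.trans hyz) with h | h
  · have h1 : y = x := by linarith
    have h2 : z = x := by linarith
    subst h1; subst h2; simp
  · have hp : 0 < z - x := by linarith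
    have := hf.2 hx hz (show 0 ≤ (z - y) / (z - x) from div_nonneg (by linarith) hp.le)
      (show 0 ≤ (y - x) / (z - x) from div_nonneg (by linarith) hp.le) (by field_simp; ring)
    simp only [smul_eq_mul] at this
    have e : (z - y) / (z - x) * x + (y - x) / (z - x) * z = y := by field_simp; ring
    rw [e] at this
    calc (z - x) * f y ≤ (z - x) * ((z - y) / (z - x) * f x + (y - x) / (z - x) * f z) :=
          mul_le_mul_of_nonneg_left this hp.le
      _ = _ := by field_simp

lemma aux_partition {a b : ℝ} (hab : a < b) (N : ℕ) (hN : 0 < N) :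
    ∃ ρ : ℕ → ℝ → ℝ, (∀ i, Continuous (ρ i)) ∧ (∀ i t, 0 ≤ ρ i t) ∧
      (∀ t, ∑ i ∈ Finset.range N, ρ i t = 1) ∧
      ∀ i < N, ∀ t ∈ Set.Icc a b, ρ i t ≠ 0 → |t - (a + i * ((b - a) / N))| ≤ (b - a) / N := by
  set w := (b - a) / N with hw
  have hNr : (0 : ℝ) < N := by exact_mod_cast hN
  have hwpos : 0 < w := div_pos (by linarith) hNr
  have hNw : N * w = b - a := by rw [hw]; field_simp
  let r : ℕ → ℝ → ℝ := fun i t =>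
    if i = 0 then 1 else if N ≤ i then 0 else max 0 (min 1 ((t - (a + (i - 1) * w)) / w))
  have hr : ∀ i t, r (i + 1) t ≤ r i t := by
    intro i t
    simp only [r]
    by_cases hi : i = 0
    · simp only [hi]
      split_ifs <;> simp_all
    · have : i + 1 ≠ 0 := by omega
      simp only [hi, this, if_false]
      by_cases h1 : N ≤ i
      · have : N ≤ i + 1 := by omega
        simp [h1, this]
      · simp only [h1, if_false]
        split_ifs
        · exact le_max_left _ _
        · push_cast
          gcongr
          linarith
  refine ⟨fun i t => r i t - r (i + 1) t, fun i => ?_, fun i t => sub_nonneg.2 (hr i t),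
    fun t => ?_, fun i hi t ht hne => ?_⟩
  · have : ∀ i, Continuous (r i) := by
      intro i
      simp only [r]
      split_ifs <;> fun_prop
    exact (this i).sub (this (i + 1))
  · rw [Finset.sum_range_sub']
    simp only [r]
    simp [hN.ne']
  · by_contra hcon
    apply hne
    rw [abs_le, not_and_or, not_le, not_le] at hcon
    rcases hcon with h | h
    · have hi0 : i ≠ 0 := by
        rintro rfl
        have := ht.1
        push_cast at h
        linarith
      have h0 : r i t = 0 := by
        simp only [r, hi0, if_false, not_le.2 hi]
        apply max_eq_left
        refine (min_le_right _ _).trans ?_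
        apply div_nonpos_of_nonpos_of_nonneg _ hwpos.le
        linarith
      have h1 : 0 ≤ r (i + 1) t := by
        simp only [r]
        split_ifs <;> simp
      have := hr i t
      linarith
    · have hiN : ¬ N ≤ i + 1 := by
        intro h'
        have h2 : N = i + 1 := by omega
        have h3 : (N : ℝ) = i + 1 := by exact_mod_cast h2
        have := ht.2
        rw [h3] at hNw
        linarith
      have h1 : r (i + 1) t = 1 := by
        simp only [r, hiN, if_false, Nat.succ_ne_zero]
        rw [min_eq_left]
        · simp
        · rw [le_div_iff₀ hwpos]
          push_cast
          linarith
      have h2 : r i t ≤ 1 := by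
        simp only [r]
        split_ifs <;> simp
      have := hr i t
      linarith

lemma aux_lines {a b : ℝ} (hab : a < b) {f : ℝ → ℝ} (hf : ConvexOn ℝ (Set.Icc a b) f)
    (hfc : ContinuousOn f (Set.Icc a b)) {η : ℝ} (hη : 0 < η) (N₀ : ℕ) :
    ∃ N : ℕ, N₀ ≤ N ∧ 0 < N ∧ ∃ c e : ℕ → ℝ, (∑ i ∈ Finset.range N, e i ≤ η) ∧
      ∀ i < N, 0 ≤ e i ∧ ∀ t ∈ Set.Icc a b,
        (-e i ≤ f t - f (a + i * ((b - a) / N)) - c i * (t - (a + i * ((b - a) / N)))) ∧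
        (|t - (a + i * ((b - a) / N))| ≤ (b - a) / N →
          f t - f (a + i * ((b - a) / N)) - c i * (t - (a + i * ((b - a) / N))) ≤ e i) := by
  have huc := isCompact_Icc.uniformContinuousOn_of_continuous hfc
  rw [Metric.uniformContinuousOn_iff] at huc
  obtain ⟨d, hd, hdf⟩ := huc (η / 4) (by linarith)
  obtain ⟨N₁, hN₁⟩ := exists_nat_gt ((b - a) / d)
  obtain ⟨n, hn⟩ : ∃ n, n = max N₀ N₁ := ⟨_, rfl⟩
  refine ⟨n + 1, by omega, by omega, ?_⟩
  have hNr : (0 : ℝ) < (n + 1 : ℕ) := by positivity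
  set w := (b - a) / (n + 1 : ℕ) with hw
  have hwpos : 0 < w := div_pos (by linarith) hNr
  have hNw : (n + 1 : ℕ) * w = b - a := by rw [hw]; field_simp
  have hwd : w < d := by
    rw [hw, div_lt_iff₀ hNr]
    rw [div_lt_iff₀ hd] at hN₁
    have : (N₁ : ℝ) ≤ (n + 1 : ℕ) := by
      have : N₁ ≤ n + 1 := by omega
      exact_mod_cast this
    nlinarith
  have hosc : ∀ x ∈ Set.Icc a b, ∀ y ∈ Set.Icc a b, |x - y| ≤ w → |f x - f y| ≤ η / 4 := by
    intro x hx y hy h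
    have := hdf x hx y hy (by rw [Real.dist_eq]; linarith)
    rw [Real.dist_eq] at this
    exact this.le
  have hmem : ∀ i : ℕ, i ≤ n + 1 → a + i * w ∈ Set.Icc a b := by
    intro i hi
    have h1 : (i : ℝ) ≤ (n + 1 : ℕ) := by exact_mod_cast hi
    have h2 : (i : ℝ) * w ≤ (n + 1 : ℕ) * w := by gcongr
    constructor
    · have : 0 ≤ (i : ℝ) * w := by positivity
      linarith
    · linarith
  let D : ℕ → ℝ := fun i => f (a + (i + 1 : ℕ) * w) - f (a + i * w)
  let e : ℕ → ℝ := fun i => if i = 0 then η / 2 else D i - D (i - 1)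
  have hDle : ∀ i, i ≤ n → |D i| ≤ η / 4 := by
    intro i hi
    apply hosc _ (hmem _ (by omega)) _ (hmem _ (by omega))
    push_cast
    rw [show a + ((i : ℝ) + 1) * w - (a + i * w) = w by ring, abs_of_pos hwpos]
  refine ⟨fun i => D i / w, e, ?_, ?_⟩
  · rw [Finset.sum_range_succ']
    have : ∀ i, e (i + 1) = D (i + 1) - D i := by intro i; simp [e]
    simp only [this]
    rw [Finset.sum_range_sub]
    have h1 := abs_le.1 (hDle n le_rfl)
    have h2 := abs_le.1 (hDle 0 (by omega))
    have : e 0 = η / 2 := by simp [e]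
    rw [this]
    linarith
  · intro i hi
    set s := a + i * w with hs
    have hsm : s ∈ Set.Icc a b := hmem i (by omega)
    have hum : s + w ∈ Set.Icc a b := by
      have := hmem (i + 1) (by omega)
      push_cast at this
      rw [hs]; convert this using 1; ring
    have hDi : D i = f (s + w) - f s := by
      simp only [D]
      congr 2
      push_cast
      rw [hs]; ring
    set m := D i / w with hm
    have hmw : m * w = f (s + w) - f s := by rw [hm, ← hDi]; field_simp
    -- lower bound outside
    have hlow1 : ∀ t ∈ Set.Icc a b, t ≤ s → 0 ≤ f t - f s - m * (t - s) := by
      intro t ht hts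
      have h := aux_three hf ht hum hts (by linarith : s ≤ s + w)
      have h2 : 0 ≤ w * (f t - f s - m * (t - s)) := by
        have : f (s + w) = f s + m * w := by linarith
        rw [this] at h
        nlinarith
      exact nonneg_of_mul_nonneg_right h2 hwpos
    have hlow2 : ∀ t ∈ Set.Icc a b, s + w ≤ t → 0 ≤ f t - f s - m * (t - s) := by
      intro t ht hts
      have h := aux_three hf hsm ht (by linarith : s ≤ s + w) hts
      have h2 : 0 ≤ w * (f t - f s - m * (t - s)) := by
        have : f (s + w) = f s + m * w := by linarith
        rw [this] at h
        nlinarith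
      exact nonneg_of_mul_nonneg_right h2 hwpos
    by_cases hi0 : i = 0
    · have he : e i = η / 2 := by simp [e, hi0]
      have hsa : s = a := by rw [hs, hi0]; simp
      rw [he]
      refine ⟨by linarith, fun t ht => ?_⟩
      have key : t ≤ s + w → |f t - f s - m * (t - s)| ≤ η / 2 := by
        intro h
        have h0 : 0 ≤ t - s := by have := ht.1; linarith
        have h1 := hosc t ht s hsm (by rw [abs_of_nonneg h0]; linarith)
        have h2 : |m * (t - s)| ≤ η / 4 := by
          have h3 := hosc _ hum _ hsm (by rw [add_sub_cancel_left, abs_of_pos hwpos])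
          rw [← hmw] at h3
          refine le_trans ?_ h3
          rw [abs_mul, abs_mul, abs_of_nonneg h0, abs_of_pos hwpos]
          gcongr
          linarith
        have := abs_sub (f t - f s) (m * (t - s))
        linarith
      constructor
      · rcases le_total t (s + w) with h | h
        · exact (abs_le.1 (key h)).1
        · have := hlow2 t ht h
          linarith
      · intro h
        exact (abs_le.1 (key (by have := (abs_le.1 h).2; linarith))).2
    · obtain ⟨k, rfl⟩ := Nat.exists_eq_succ_of_ne_zero hi0
      have hvm : s - w ∈ Set.Icc a b := by
        have := hmem k (by omega)
        rw [hs]; convert this using 1; push_cast; ring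
      have he : e (k.succ) = m * w - f s + f (s - w) := by
        simp only [e, hi0, if_false, hDi, hmw]
        simp only [D, Nat.succ_sub_one]
        have e1 : a + ((k + 1 : ℕ) : ℝ) * w = s := by rw [hs]
        have e2 : a + (k : ℝ) * w = s - w := by rw [hs]; push_cast; ring
        rw [e1, e2]; ring
      have he0 : 0 ≤ m * w - f s + f (s - w) := by
        have := hlow1 _ hvm (by linarith)
        linarith [this]
      rw [he]
      refine ⟨he0, fun t ht => ?_⟩
      constructor
      · rcases le_total t s with h | h
        · linarith [hlow1 t ht h]
        rcases le_total (s + w) t with h' | h'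
        · linarith [hlow2 t ht h']
        have h3 := aux_three hf hvm ht (by linarith : s - w ≤ s) h
        have h4 : 0 ≤ w * (f t - f s - m * (t - s) + (m * w - f s + f (s - w))) := by
          have : 0 ≤ (w - (t - s)) * (m * w - f s + f (s - w)) :=
            mul_nonneg (by linarith) he0
          nlinarith
        have := nonneg_of_mul_nonneg_right h4 hwpos
        linarith
      · intro habs
        have := abs_le.1 habs
        have h4 : 0 ≤ w * ((m * w - f s + f (s - w)) - (f t - f s - m * (t - s))) := by
          rcases le_total t s with h | h
          · have h3 := aux_three hf hvm hsm (by linarith : s - w ≤ t) h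
            have : 0 ≤ (w - (s - t)) * (m * w - f s + f (s - w)) :=
              mul_nonneg (by linarith) he0
            nlinarith
          · have h3 := aux_three hf hsm hum h (by linarith : t ≤ s + w)
            have hfu : f (s + w) = f s + m * w := by linarith
            rw [hfu] at h3
            have : 0 ≤ w * (m * w - f s + f (s - w)) := mul_nonneg hwpos.le he0
            nlinarith
        have := nonneg_of_mul_nonneg_right h4 hwpos
        linarith

section op
variable {E : Type*} [NormedAddCommGroup E] [InnerProductSpace ℂ E] [CompleteSpace E]

lemma aux_cfc_re_mono {a b : ℝ} {A : E →L[ℂ] E} (hs : spectrum ℝ A ⊆ Set.Icc a b)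
    {g h : ℝ → ℝ} (hg : ContinuousOn g (Set.Icc a b)) (hh : ContinuousOn h (Set.Icc a b))
    (hgh : ∀ t ∈ Set.Icc a b, g t ≤ h t) (x : E) :
    (⟪cfc g A x, x⟫_ℂ).re ≤ (⟪cfc h A x, x⟫_ℂ).re := by
  have h1 : cfc g A ≤ cfc h A :=
    cfc_mono (fun t ht => hgh t (hs ht)) (hg.mono hs) (hh.mono hs)
  rw [ContinuousLinearMap.le_def] at h1
  have := h1.re_inner_nonneg_left x
  simp only [sub_apply, inner_sub_left, map_sub] at this
  simpa using this

lemma aux_cfc_symm (A : E →L[ℂ] E) (g : ℝ → ℝ) (x y : E) :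
    ⟪cfc g A x, y⟫_ℂ = ⟪x, cfc g A y⟫_ℂ := by
  have h : IsSelfAdjoint (cfc g A) := cfc_predicate g A
  rw [ContinuousLinearMap.isSelfAdjoint_iff_isSymmetric] at h
  exact h x y

lemma aux_cfc_mul {a b : ℝ} {A : E →L[ℂ] E} (hs : spectrum ℝ A ⊆ Set.Icc a b)
    {g h : ℝ → ℝ} (hg : ContinuousOn g (Set.Icc a b)) (hh : ContinuousOn h (Set.Icc a b))
    (x : E) : cfc (fun t => g t * h t) A x = cfc g A (cfc h A x) := by
  rw [cfc_mul g h A (hg.mono hs) (hh.mono hs)]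
  rfl

lemma aux_cfc_norm_sq {a b : ℝ} {A : E →L[ℂ] E} (hs : spectrum ℝ A ⊆ Set.Icc a b)
    {g : ℝ → ℝ} (hg : ContinuousOn g (Set.Icc a b)) (x : E) :
    ‖cfc g A x‖ ^ 2 = (⟪cfc (fun t => g t * g t) A x, x⟫_ℂ).re := by
  rw [aux_cfc_mul hs hg hg, aux_cfc_symm]
  exact norm_sq_eq_re_inner (𝕜 := ℂ) _

lemma aux_cfc_aff {a b : ℝ} {A : E →L[ℂ] E} (hA : IsSelfAdjoint A)
    (hs : spectrum ℝ A ⊆ Set.Icc a b)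
    {g : ℝ → ℝ} (hg : ContinuousOn g (Set.Icc a b)) (p q : ℝ) (x : E) :
    cfc (fun t => g t + (p * t + q)) A x = cfc g A x + ((p : ℂ) • A x + (q : ℂ) • x) := by
  rw [cfc_add A g (fun t => p * t + q) (hg.mono hs) (by fun_prop),
    cfc_add A (fun t => p * t) (fun _ => q) (by fun_prop) (by fun_prop),
    cfc_const_mul_id p A hA, cfc_const q A hA]
  simp [Algebra.algebraMap_eq_smul_one]

lemma aux_cfc_aff_re {a b : ℝ} {A : E →L[ℂ] E} (hA : IsSelfAdjoint A)
    (hs : spectrum ℝ A ⊆ Set.Icc a b)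
    {g : ℝ → ℝ} (hg : ContinuousOn g (Set.Icc a b)) (p q : ℝ) (x : E) :
    (⟪cfc (fun t => g t + (p * t + q)) A x, x⟫_ℂ).re =
      (⟪cfc g A x, x⟫_ℂ).re + (p * (⟪A x, x⟫_ℂ).re + q * ‖x‖ ^ 2) := by
  rw [aux_cfc_aff hA hs hg, inner_add_left, inner_add_left, inner_smul_left, inner_smul_left,
    inner_self_eq_norm_sq_to_K]
  simp [← Complex.ofReal_pow]

lemma aux_cfc_lin {a b : ℝ} {A : E →L[ℂ] E} (hA : IsSelfAdjoint A)
    (hs : spectrum ℝ A ⊆ Set.Icc a b) (c : ℝ) (x : E) :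
    cfc (fun t => t - c) A x = A x - (c : ℂ) • x := by
  have h := aux_cfc_aff hA hs (g := fun _ => 0) continuousOn_const 1 (-c) x
  have e : (fun t : ℝ => (0 : ℝ) + (1 * t + -c)) = fun t => t - c := by ext t; ring
  rw [e] at h
  rw [h, cfc_const 0 A hA]
  simp [sub_eq_add_neg]

lemma aux_cfc_norm_le {a b : ℝ} {A : E →L[ℂ] E}
    (hs : spectrum ℝ A ⊆ Set.Icc a b)
    {g h : ℝ → ℝ} (hg : ContinuousOn g (Set.Icc a b)) (hh : ContinuousOn h (Set.Icc a b))
    {M : ℝ} (hM : 0 ≤ M) (hgh : ∀ t ∈ Set.Icc a b, |g t| ≤ M * |h t|) (x : E) :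
    ‖cfc g A x‖ ≤ M * ‖cfc h A x‖ := by
  refine le_of_sq_le_sq ?_ (by positivity)
  have hMh : ContinuousOn (fun t => M * h t) (Set.Icc a b) := continuousOn_const.mul hh
  have h1 : M * ‖cfc h A x‖ = ‖cfc (fun t => M * h t) A x‖ := by
    rw [cfc_const_mul M h A (hh.mono hs)]
    simp [norm_smul, abs_of_nonneg hM]
  rw [h1, aux_cfc_norm_sq hs hg, aux_cfc_norm_sq hs hMh]
  refine aux_cfc_re_mono hs (hg.mul hg) (hMh.mul hMh) (fun t ht => ?_) x
  have := hgh t ht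
  change g t * g t ≤ (M * h t) * (M * h t)
  rw [← abs_mul_abs_self (g t), ← abs_mul_abs_self (M * h t), abs_mul M, abs_of_nonneg hM]
  exact mul_self_le_mul_self (abs_nonneg _) this

lemma aux_cfc_norm_le_one {a b : ℝ} {A : E →L[ℂ] E} (hA : IsSelfAdjoint A)
    (hs : spectrum ℝ A ⊆ Set.Icc a b)
    {g : ℝ → ℝ} (hg : ContinuousOn g (Set.Icc a b))
    {M : ℝ} (hM : 0 ≤ M) (hgh : ∀ t ∈ Set.Icc a b, |g t| ≤ M) (x : E) :
    ‖cfc g A x‖ ≤ M * ‖x‖ := by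
  have := aux_cfc_norm_le hs hg (h := fun _ => 1) continuousOn_const hM (by simpa using hgh) x
  rw [cfc_const 1 A hA] at this
  simpa using this

lemma aux_cfc_sum {A : E →L[ℂ] E} (hA : IsSelfAdjoint A) {N : ℕ}
    {ρ : ℕ → ℝ → ℝ} (hρ : ∀ i, Continuous (ρ i))
    (hsum : ∀ t, ∑ i ∈ Finset.range N, ρ i t = 1) (x : E) :
    ∑ i ∈ Finset.range N, cfc (ρ i) A x = x := by
  have h := cfc_sum ρ A (Finset.range N) (fun i _ => (hρ i).continuousOn)
  have e : (∑ i ∈ Finset.range N, ρ i) = fun _ => 1 := by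
    ext t; simpa using hsum t
  rw [e, cfc_const 1 A hA] at h
  have := congrArg (fun T : E →L[ℂ] E => T x) h
  simpa using this.symm

lemma aux_cfc_sum_sq {a b : ℝ} {A : E →L[ℂ] E} (hA : IsSelfAdjoint A)
    (hs : spectrum ℝ A ⊆ Set.Icc a b) {N : ℕ}
    {ρ : ℕ → ℝ → ℝ} (hρ : ∀ i, Continuous (ρ i)) (hρ0 : ∀ i t, 0 ≤ ρ i t)
    (hsum : ∀ t, ∑ i ∈ Finset.range N, ρ i t = 1) (x : E) :
    ∑ i ∈ Finset.range N, ‖cfc (ρ i) A x‖ ^ 2 ≤ ‖x‖ ^ 2 := by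
  have h1 : ∀ i ∈ Finset.range N, ‖cfc (ρ i) A x‖ ^ 2 ≤ (⟪cfc (ρ i) A x, x⟫_ℂ).re := by
    intro i hi
    rw [aux_cfc_norm_sq hs (hρ i).continuousOn]
    refine aux_cfc_re_mono hs ((hρ i).mul (hρ i)).continuousOn (hρ i).continuousOn
      (fun t _ => ?_) x
    have h2 : ρ i t ≤ 1 := by
      rw [← hsum t]
      exact Finset.single_le_sum (f := fun i => ρ i t) (fun j _ => hρ0 j t) hi
    change ρ i t * ρ i t ≤ ρ i t
    nlinarith [hρ0 i t]
  refine (Finset.sum_le_sum h1).trans ?_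
  rw [← Complex.re_sum, ← sum_inner, aux_cfc_sum hA hρ hsum]
  exact (norm_sq_eq_re_inner (𝕜 := ℂ) x).ge

variable {F : Type*} [NormedAddCommGroup F] [InnerProductSpace ℂ F] [CompleteSpace F]

lemma aux_piece {a b : ℝ} {f : ℝ → ℝ} (hfc : ContinuousOn f (Set.Icc a b))
    {H : E →L[ℂ] E} (hH : IsSelfAdjoint H) (hHs : spectrum ℝ H ⊆ Set.Icc a b)
    {A : F →L[ℂ] F} (hA : IsSelfAdjoint A) (hAs : spectrum ℝ A ⊆ Set.Icc a b)
    {ι : F →L[ℂ] E} (hι : ∀ x, ‖ι x‖ = ‖x‖)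
    (hHA : ∀ x, ⟪H (ι x), ι x⟫_ℂ = ⟪A x, x⟫_ℂ) {δ : ℝ}
    (hδ : ∀ x, (⟪cfc f H (ι x), ι x⟫_ℂ).re ≤ (⟪cfc f A x, x⟫_ℂ).re + δ * ‖x‖ ^ 2)
    {φ ρ : ℝ → ℝ} (hφ : Continuous φ) (hρ : Continuous ρ) {s c e γ : ℝ}
    (h1 : ∀ t ∈ Set.Icc a b, γ * (φ t * φ t) ≤ f t - f s - c * (t - s) + e)
    (h2 : ∀ t ∈ Set.Icc a b, ρ t ≠ 0 → f t - f s - c * (t - s) ≤ e) (x : F) :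
    γ * ‖cfc φ H (ι (cfc ρ A x))‖ ^ 2 ≤ (2 * e + δ) * ‖cfc ρ A x‖ ^ 2 := by
  set z := cfc ρ A x with hz
  set q := c * s - f s with hq
  have hgc : ContinuousOn (fun t => f t + (-c * t + q)) (Set.Icc a b) :=
    hfc.add (by fun_prop)
  have e1 : γ * ‖cfc φ H (ι z)‖ ^ 2 ≤
      (⟪cfc (fun t => f t + (-c * t + (q + e))) H (ι z), ι z⟫_ℂ).re := by
    have h3 := aux_cfc_re_mono hHs (g := fun t => γ * (φ t * φ t))
      (h := fun t => f t + (-c * t + (q + e)))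
      (by fun_prop) (hfc.add (by fun_prop))
      (fun t ht => by have := h1 t ht; rw [hq]; linarith) (ι z)
    refine le_trans (le_of_eq ?_) h3
    rw [aux_cfc_norm_sq hHs hφ.continuousOn, cfc_const_mul γ (fun t => φ t * φ t) H (by fun_prop)]
    simp
  rw [aux_cfc_aff_re hH hHs hfc, hHA, hι] at e1
  have e2 : (⟪cfc (fun t => f t + (-c * t + q)) A z, z⟫_ℂ).re ≤ e * ‖z‖ ^ 2 := by
    have h3 := aux_cfc_re_mono hAs (g := fun t => ρ t * ((f t + (-c * t + q)) * ρ t))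
      (h := fun t => e * (ρ t * ρ t))
      (hρ.continuousOn.mul (hgc.mul hρ.continuousOn)) (by fun_prop) (fun t ht => by
        by_cases h0 : ρ t = 0
        · simp [h0]
        · have := h2 t ht h0
          have h4 : f t + (-c * t + q) ≤ e := by rw [hq]; linarith
          nlinarith [mul_self_nonneg (ρ t)]) x
    rw [aux_cfc_mul (h := fun t => (f t + (-c * t + q)) * ρ t) hAs hρ.continuousOn
      (hgc.mul hρ.continuousOn),
      aux_cfc_mul hAs hgc hρ.continuousOn, aux_cfc_symm, ← hz] at h3
    rw [hz, aux_cfc_norm_sq hAs hρ.continuousOn, ← hz]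
    refine h3.trans (le_of_eq ?_)
    rw [cfc_const_mul e (fun t => ρ t * ρ t) A (by fun_prop)]
    simp
  rw [aux_cfc_aff_re hA hAs hfc] at e2
  have e3 := hδ z
  nlinarith

lemma aux_far {a b : ℝ} {f : ℝ → ℝ} (hfc : ContinuousOn f (Set.Icc a b))
    {H : E →L[ℂ] E} (hH : IsSelfAdjoint H) (hHs : spectrum ℝ H ⊆ Set.Icc a b)
    {A : F →L[ℂ] F} (hA : IsSelfAdjoint A) (hAs : spectrum ℝ A ⊆ Set.Icc a b)
    {ι : F →L[ℂ] E} (hι : ∀ x, ‖ι x‖ = ‖x‖)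
    (hHA : ∀ x, ⟪H (ι x), ι x⟫_ℂ = ⟪A x, x⟫_ℂ) {δ : ℝ} (hδ0 : 0 ≤ δ)
    (hδ : ∀ x, (⟪cfc f H (ι x), ι x⟫_ℂ).re ≤ (⟪cfc f A x, x⟫_ℂ).re + δ * ‖x‖ ^ 2)
    {φ ψ : ℝ → ℝ} (hφ : Continuous φ) (hψ : Continuous ψ) (hψ1 : ∀ t, |ψ t| ≤ 1)
    {N : ℕ} {ρ : ℕ → ℝ → ℝ} (hρ : ∀ i, Continuous (ρ i)) (hρ0 : ∀ i t, 0 ≤ ρ i t)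
    (hsum : ∀ t, ∑ i ∈ Finset.range N, ρ i t = 1)
    {s c e : ℕ → ℝ} {γ η θ : ℝ} (hγ : 0 < γ) (he0 : ∀ i < N, 0 ≤ e i)
    (he : ∑ i ∈ Finset.range N, e i ≤ η) (hθ0 : 0 ≤ θ) (hθ : 2 * η + N * δ ≤ γ * θ ^ 2)
    (h1 : ∀ i < N, (∀ t ∈ Set.Icc a b, ρ i t * ψ t = 0) ∨
      ∀ t ∈ Set.Icc a b, γ * (φ t * φ t) ≤ f t - f (s i) - c i * (t - s i) + e i)
    (h2 : ∀ i < N, ∀ t ∈ Set.Icc a b, ρ i t ≠ 0 → f t - f (s i) - c i * (t - s i) ≤ e i)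
    (x : F) :
    ‖cfc φ H (ι (cfc ψ A x))‖ ≤ θ * ‖x‖ := by
  set y := cfc ψ A x with hy
  have hyx : ‖y‖ ≤ ‖x‖ := by
    simpa using aux_cfc_norm_le_one hA hAs hψ.continuousOn zero_le_one (fun t _ => hψ1 t) x
  have hdec := aux_cfc_sum hA hρ hsum y
  have hsq := aux_cfc_sum_sq hA hAs hρ hρ0 hsum y
  have hp : ∀ i ∈ Finset.range N, ‖cfc φ H (ι (cfc (ρ i) A y))‖ ≤
      Real.sqrt ((2 * e i + δ) / γ) * ‖cfc (ρ i) A y‖ := by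
    intro i hi
    have hi := Finset.mem_range.1 hi
    have hei := he0 i hi
    rcases h1 i hi with h | h
    · have : cfc (ρ i) A y = 0 := by
        rw [hy, ← aux_cfc_mul hAs (hρ i).continuousOn hψ.continuousOn]
        have : cfc (fun t => ρ i t * ψ t) A = 0 := by
          rw [cfc_congr (g := fun _ => 0) (fun t ht => h t (hAs ht)), cfc_const 0 A hA]
          simp
        rw [this]; simp
      rw [this]; simp
    · have hpc := aux_piece hfc hH hHs hA hAs hι hHA hδ hφ (hρ i) h (h2 i hi) y
      refine le_of_sq_le_sq ?_ (by positivity)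
      rw [mul_pow, Real.sq_sqrt (by positivity), div_mul_eq_mul_div, le_div_iff₀ hγ]
      linarith
  have h3 : ‖cfc φ H (ι y)‖ ≤
      ∑ i ∈ Finset.range N, Real.sqrt ((2 * e i + δ) / γ) * ‖cfc (ρ i) A y‖ := by
    conv_lhs => rw [← hdec]
    rw [map_sum, map_sum]
    exact (norm_sum_le _ _).trans (Finset.sum_le_sum hp)
  have h4 := Finset.sum_mul_sq_le_sq_mul_sq (Finset.range N)
    (fun i => Real.sqrt ((2 * e i + δ) / γ)) (fun i => ‖cfc (ρ i) A y‖)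
  have h5 : ∑ i ∈ Finset.range N, Real.sqrt ((2 * e i + δ) / γ) ^ 2 ≤ θ ^ 2 := by
    have : ∀ i ∈ Finset.range N, Real.sqrt ((2 * e i + δ) / γ) ^ 2 = (2 * e i + δ) / γ := by
      intro i hi
      have hei := he0 i (Finset.mem_range.1 hi)
      exact Real.sq_sqrt (by positivity)
    rw [Finset.sum_congr rfl this, ← Finset.sum_div, div_le_iff₀ hγ, Finset.sum_add_distrib,
      ← Finset.mul_sum]
    simp
    linarith
  refine h3.trans (le_of_sq_le_sq ?_ (by positivity))
  refine h4.trans ?_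
  rw [mul_pow]
  have : ‖y‖ ^ 2 ≤ ‖x‖ ^ 2 := by gcongr
  exact mul_le_mul h5 (hsq.trans this) (Finset.sum_nonneg fun i _ => by positivity) (by positivity)

end op

lemma aux_count (K : ℕ) (g : ℕ → ℝ) (hg : ∀ i, 0 ≤ g i) :
    ∑ i ∈ Finset.range K, ∑ j ∈ Finset.range K, (if i ≤ j + 3 ∧ j ≤ i + 3 then g i else 0) ≤
      7 * ∑ i ∈ Finset.range K, g i := by
  rw [Finset.mul_sum]
  refine Finset.sum_le_sum fun i _ => ?_
  rw [← Finset.sum_filter, Finset.sum_const, nsmul_eq_mul]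
  refine mul_le_mul_of_nonneg_right ?_ (hg i)
  have hsub : (Finset.range K).filter (fun j => i ≤ j + 3 ∧ j ≤ i + 3) ⊆
      Finset.Icc (i - 3) (i + 3) := by
    intro j hj
    simp only [Finset.mem_filter, Finset.mem_Icc] at *
    omega
  have h := Finset.card_le_card hsub
  rw [Nat.card_Icc] at h
  have : ((Finset.range K).filter (fun j => i ≤ j + 3 ∧ j ≤ i + 3)).card ≤ 7 := by omega
  exact_mod_cast this

lemma aux_near (K : ℕ) (p q : ℕ → ℝ) {P Q : ℝ}
    (hP : ∑ j ∈ Finset.range K, p j ^ 2 ≤ P) (hQ : ∑ i ∈ Finset.range K, q i ^ 2 ≤ Q) :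
    ∑ i ∈ Finset.range K, ∑ j ∈ Finset.range K,
      (if i ≤ j + 3 ∧ j ≤ i + 3 then p j * q i else 0) ≤ 7 / 2 * (P + Q) := by
  have h1 := aux_count K (fun i => p i ^ 2) (fun i => sq_nonneg _)
  have h2 := aux_count K (fun i => q i ^ 2) (fun i => sq_nonneg _)
  rw [Finset.sum_comm] at h1
  have h3 : ∑ i ∈ Finset.range K, ∑ j ∈ Finset.range K,
      (if i ≤ j + 3 ∧ j ≤ i + 3 then p j * q i else 0) ≤
      ∑ i ∈ Finset.range K, ∑ j ∈ Finset.range K,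
      (1 / 2 * (if j ≤ i + 3 ∧ i ≤ j + 3 then p j ^ 2 else 0) +
        1 / 2 * (if i ≤ j + 3 ∧ j ≤ i + 3 then q i ^ 2 else 0)) := by
    refine Finset.sum_le_sum fun i _ => Finset.sum_le_sum fun j _ => ?_
    by_cases h : i ≤ j + 3 ∧ j ≤ i + 3
    · rw [if_pos h, if_pos h, if_pos ⟨h.2, h.1⟩]
      nlinarith [sq_nonneg (p j - q i)]
    · rw [if_neg h, if_neg h, if_neg (fun h' => h ⟨h'.2, h'.1⟩)]
      simp
  simp only [Finset.sum_add_distrib, ← Finset.mul_sum] at h3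
  linarith

section op2
variable {E : Type*} [NormedAddCommGroup E] [InnerProductSpace ℂ E] [CompleteSpace E]
variable {F : Type*} [NormedAddCommGroup F] [InnerProductSpace ℂ F] [CompleteSpace F]

lemma aux_opnorm (T : F →L[ℂ] E) {C : ℝ} (hC : 0 ≤ C)
    (h : ∀ x y, ‖⟪T x, y⟫_ℂ‖ ≤ C / 2 * (‖x‖ ^ 2 + ‖y‖ ^ 2)) : ‖T‖ ≤ C := by
  refine T.opNorm_le_bound hC fun x => ?_
  by_cases hx : x = 0
  · simp [hx]
  by_cases hT : T x = 0
  · rw [hT]; simp; positivity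
  have hx' : 0 < ‖x‖ := norm_pos_iff.2 hx
  have hT' : 0 < ‖T x‖ := norm_pos_iff.2 hT
  have h1 := h x (((‖x‖ / ‖T x‖ : ℝ) : ℂ) • T x)
  rw [inner_smul_right, norm_mul, inner_self_eq_norm_sq_to_K, norm_smul, Complex.norm_real,
    Real.norm_of_nonneg (by positivity)] at h1
  have e1 : ‖((‖T x‖ : ℂ)) ^ 2‖ = ‖T x‖ ^ 2 := by simp
  have e2 : ‖x‖ / ‖T x‖ * ‖T x‖ = ‖x‖ := by field_simp
  have e3 : ‖x‖ / ‖T x‖ * ‖T x‖ ^ 2 = ‖x‖ * ‖T x‖ := by field_simp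
  rw [e2] at h1
  erw [e1] at h1
  rw [e3] at h1
  have : ‖x‖ * ‖T x‖ ≤ ‖x‖ * (C * ‖x‖) := by linarith
  exact le_of_mul_le_mul_left this hx'

lemma aux_main {a b : ℝ} (hab : a < b)
    {H : E →L[ℂ] E} (hH : IsSelfAdjoint H) (hHs : spectrum ℝ H ⊆ Set.Icc a b)
    {A : F →L[ℂ] F} (hA : IsSelfAdjoint A) (hAs : spectrum ℝ A ⊆ Set.Icc a b)
    {ι : F →L[ℂ] E} (hι : ∀ x, ‖ι x‖ = ‖x‖)
    {K : ℕ} (hK : 0 < K) {ρ : ℕ → ℝ → ℝ} (hρ : ∀ i, Continuous (ρ i)) (hρ0 : ∀ i t, 0 ≤ ρ i t)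
    (hsum : ∀ t, ∑ i ∈ Finset.range K, ρ i t = 1)
    (hsupp : ∀ i < K, ∀ t ∈ Set.Icc a b, ρ i t ≠ 0 →
      |t - (a + i * ((b - a) / K))| ≤ (b - a) / K)
    {θ : ℝ} (hθ : 0 ≤ θ)
    (hfar : ∀ i < K, ∀ j < K, ¬ (i ≤ j + 3 ∧ j ≤ i + 3) →
      ∀ x, ‖cfc (ρ i) H (ι (cfc (ρ j) A x))‖ ≤ θ * ‖x‖) :
    ‖H ∘L ι - ι ∘L A‖ ≤ 35 * ((b - a) / K) + 2 * K ^ 2 * (b - a) * θ := by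
  have hKr : (0 : ℝ) < K := by exact_mod_cast hK
  set κ := (b - a) / K with hκ
  have hB : 0 < b - a := by linarith
  have hκ0 : 0 < κ := by positivity
  have hKκ : K * κ = b - a := by rw [hκ]; field_simp
  have hmem : ∀ i < K, a + i * κ ∈ Set.Icc a b := by
    intro i hi
    have h1 : (i : ℝ) ≤ K := by exact_mod_cast hi.le
    have h2 : (i : ℝ) * κ ≤ K * κ := by gcongr
    constructor
    · have : 0 ≤ (i : ℝ) * κ := by positivity
      linarith
    · linarith
  have hlc : ∀ c : ℝ, ContinuousOn (fun t : ℝ => t - c) (Set.Icc a b) := fun c => by fun_prop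
  have hlb : ∀ c ∈ Set.Icc a b, ∀ t ∈ Set.Icc a b, |t - c| ≤ b - a := by
    intro c hc t ht
    rw [abs_le]
    constructor <;> linarith [hc.1, hc.2, ht.1, ht.2]
  refine aux_opnorm _ (by positivity) fun x y => ?_
  -- the individual terms
  have hterm : ∀ i ∈ Finset.range K, ∀ j ∈ Finset.range K,
      ‖⟪(H ∘L ι - ι ∘L A) (cfc (ρ j) A x), cfc (ρ i) H y⟫_ℂ‖ ≤
        5 * κ * (if i ≤ j + 3 ∧ j ≤ i + 3 then ‖cfc (ρ j) A x‖ * ‖cfc (ρ i) H y‖ else 0) +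
        2 * (b - a) * θ * (‖x‖ * ‖y‖) := by
    intro i hi j hj
    have hi := Finset.mem_range.1 hi
    have hj := Finset.mem_range.1 hj
    set c := a + j * κ with hc
    have hcm : c ∈ Set.Icc a b := hmem j hj
    set u := cfc (ρ j) A x with hu
    set v := cfc (ρ i) H y with hv
    have hsym : ∀ p q : E, ⟪H p, q⟫_ℂ = ⟪p, H q⟫_ℂ := by
      rw [ContinuousLinearMap.isSelfAdjoint_iff_isSymmetric] at hH
      exact fun p q => hH p q
    have e1 : ⟪(H ∘L ι - ι ∘L A) u, v⟫_ℂ =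
        ⟪ι u, cfc (fun t => t - c) H v⟫_ℂ - ⟪ι (cfc (fun t => t - c) A u), v⟫_ℂ := by
      rw [aux_cfc_lin hH hHs, aux_cfc_lin hA hAs]
      simp only [sub_apply, ContinuousLinearMap.comp_apply, map_sub, map_smul, inner_sub_left,
        inner_sub_right, inner_smul_left, inner_smul_right, hsym, Complex.conj_ofReal]
      ring
    rw [e1]
    refine (norm_sub_le _ _).trans ?_
    have hρc := fun i => (hρ i).continuousOn (s := Set.Icc a b)
    by_cases hn : i ≤ j + 3 ∧ j ≤ i + 3
    · rw [if_pos hn]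
      have hij : |(i : ℝ) - j| ≤ 3 := by
        have h1 : (i : ℝ) ≤ j + 3 := by exact_mod_cast hn.1
        have h2 : (j : ℝ) ≤ i + 3 := by exact_mod_cast hn.2
        rw [abs_le]; constructor <;> linarith
      have n1 : ‖cfc (fun t => t - c) H v‖ ≤ 4 * κ * ‖v‖ := by
        rw [hv, ← aux_cfc_mul hHs (hlc c) (hρc i)]
        refine aux_cfc_norm_le hHs ((hlc c).mul (hρc i)) (hρc i) (by positivity)
          (fun t ht => ?_) y
        change |(t - c) * ρ i t| ≤ _
        rw [abs_mul]
        by_cases h0 : ρ i t = 0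
        · simp [h0]
        · gcongr
          have h3 := hsupp i hi t ht h0
          have h4 : t - c = (t - (a + i * κ)) + (i - j) * κ := by rw [hc]; ring
          rw [h4]
          refine (abs_add_le _ _).trans ?_
          rw [abs_mul, abs_of_pos hκ0]
          nlinarith
      have n2 : ‖cfc (fun t => t - c) A u‖ ≤ κ * ‖u‖ := by
        rw [hu, ← aux_cfc_mul hAs (hlc c) (hρc j)]
        refine aux_cfc_norm_le hAs ((hlc c).mul (hρc j)) (hρc j) (by positivity)
          (fun t ht => ?_) x
        change |(t - c) * ρ j t| ≤ _
        rw [abs_mul]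
        by_cases h0 : ρ j t = 0
        · simp [h0]
        · gcongr
          exact hsupp j hj t ht h0
      have m1 : ‖⟪ι u, cfc (fun t => t - c) H v⟫_ℂ‖ ≤ ‖u‖ * (4 * κ * ‖v‖) := by
        refine (norm_inner_le_norm _ _).trans ?_
        rw [hι]; gcongr
      have m2 : ‖⟪ι (cfc (fun t => t - c) A u), v⟫_ℂ‖ ≤ (κ * ‖u‖) * ‖v‖ := by
        refine (norm_inner_le_norm _ _).trans ?_
        rw [hι]; gcongr
      have : 0 ≤ 2 * (b - a) * θ * (‖x‖ * ‖y‖) := by positivity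
      linarith
    · rw [if_neg hn]
      have c1 : cfc (fun t => t - c) H v = cfc (ρ i) H (cfc (fun t => t - c) H y) := by
        rw [hv, ← aux_cfc_mul hHs (hlc c) (hρc i), ← aux_cfc_mul hHs (hρc i) (hlc c)]
        simp only [mul_comm]
      have c2 : cfc (fun t => t - c) A u = cfc (ρ j) A (cfc (fun t => t - c) A x) := by
        rw [hu, ← aux_cfc_mul hAs (hlc c) (hρc j), ← aux_cfc_mul hAs (hρc j) (hlc c)]
        simp only [mul_comm]
      have n1 := aux_cfc_norm_le_one hH hHs (hlc c) hB.le (hlb c hcm) y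
      have n2 := aux_cfc_norm_le_one hA hAs (hlc c) hB.le (hlb c hcm) x
      have m1 : ‖⟪ι u, cfc (fun t => t - c) H v⟫_ℂ‖ ≤ (θ * ‖x‖) * ((b - a) * ‖y‖) := by
        rw [c1, ← aux_cfc_symm]
        refine (norm_inner_le_norm _ _).trans ?_
        exact mul_le_mul (hfar i hi j hj hn x) n1 (norm_nonneg _) (by positivity)
      have m2 : ‖⟪ι (cfc (fun t => t - c) A u), v⟫_ℂ‖ ≤ (θ * ((b - a) * ‖x‖)) * ‖y‖ := by
        rw [c2, hv, ← aux_cfc_symm]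
        refine (norm_inner_le_norm _ _).trans ?_
        refine mul_le_mul_of_nonneg_right ((hfar i hi j hj hn _).trans ?_) (norm_nonneg _)
        gcongr
      linarith
  have hdec : ⟪(H ∘L ι - ι ∘L A) x, y⟫_ℂ = ∑ i ∈ Finset.range K, ∑ j ∈ Finset.range K,
      ⟪(H ∘L ι - ι ∘L A) (cfc (ρ j) A x), cfc (ρ i) H y⟫_ℂ := by
    conv_lhs => rw [← aux_cfc_sum hA hρ hsum x, ← aux_cfc_sum hH hρ hsum y]
    rw [map_sum, inner_sum]
    simp only [sum_inner]
  rw [hdec]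
  have h1 := (norm_sum_le_of_le (Finset.range K) fun i hi =>
    norm_sum_le_of_le (Finset.range K) (hterm i hi))
  refine h1.trans ?_
  simp only [Finset.sum_add_distrib, ← Finset.mul_sum, Finset.sum_const, Finset.card_range,
    nsmul_eq_mul]
  have h2 := aux_near K (fun j => ‖cfc (ρ j) A x‖) (fun i => ‖cfc (ρ i) H y‖)
    (aux_cfc_sum_sq hA hAs hρ hρ0 hsum x) (aux_cfc_sum_sq hH hHs hρ hρ0 hsum y)
  have h3 : ‖x‖ * ‖y‖ ≤ (‖x‖ ^ 2 + ‖y‖ ^ 2) / 2 := by nlinarith [sq_nonneg (‖x‖ - ‖y‖)]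
  have h4 : (K : ℝ) * (K * (2 * (b - a) * θ * (‖x‖ * ‖y‖))) ≤
      (K : ℝ) * (K * (2 * (b - a) * θ * ((‖x‖ ^ 2 + ‖y‖ ^ 2) / 2))) := by gcongr
  have h5 := mul_le_mul_of_nonneg_left h2 (show 0 ≤ 5 * κ by positivity)
  linarith

lemma aux_compr_spec {a b : ℝ} {H : E →L[ℂ] E} (hH : IsSelfAdjoint H)
    (hHs : spectrum ℝ H ⊆ Set.Icc a b) {ι : F →L[ℂ] E} (hι : ∀ x, adjoint ι (ι x) = x) :
    IsSelfAdjoint ((adjoint ι) ∘L H ∘L ι) ∧ spectrum ℝ ((adjoint ι) ∘L H ∘L ι) ⊆ Set.Icc a b := by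
  have hsa : IsSelfAdjoint ((adjoint ι) ∘L H ∘L ι) := hH.adjoint_conj ι
  refine ⟨hsa, ?_⟩
  have key : ∀ r : ℝ, (adjoint ι) ∘L (algebraMap ℝ (E →L[ℂ] E) r) ∘L ι =
      algebraMap ℝ (F →L[ℂ] F) r := by
    intro r
    ext x
    simp [Algebra.algebraMap_eq_smul_one, hι]
  have h1 : algebraMap ℝ _ a ≤ (adjoint ι) ∘L H ∘L ι := by
    have h : algebraMap ℝ _ a ≤ H :=
      (algebraMap_le_iff_le_spectrum hH).2 fun t ht => (hHs ht).1
    rw [ContinuousLinearMap.le_def] at h ⊢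
    have h' := h.adjoint_conj ι
    rw [ContinuousLinearMap.sub_comp, ContinuousLinearMap.comp_sub, key] at h'
    exact h'
  have h2 : (adjoint ι) ∘L H ∘L ι ≤ algebraMap ℝ _ b := by
    have h : H ≤ algebraMap ℝ _ b :=
      (le_algebraMap_iff_spectrum_le hH).2 fun t ht => (hHs ht).2
    rw [ContinuousLinearMap.le_def] at h ⊢
    have h' := h.adjoint_conj ι
    rw [ContinuousLinearMap.sub_comp, ContinuousLinearMap.comp_sub, key] at h'
    exact h'
  intro t ht
  exact ⟨(algebraMap_le_iff_le_spectrum hsa).1 h1 t ht,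
    (le_algebraMap_iff_spectrum_le hsa).1 h2 t ht⟩

end op2

/-- **Corollary 2.9.** If `f` is strictly convex and continuous on `[a,b]` and `ε > 0`,
then there is `δ > 0` such that for every Hilbert space `𝓗`, every closed subspace `M`
(presented as the range of an isometric embedding `ι : 𝓜 →L[ℂ] 𝓗`, whose associated
orthogonal projection onto `M` is `P = ι ι*`), and every self-adjoint `H` with
`σ(H) ⊆ [a,b]`:  `‖f(pr(H)) − pr(f(H))‖ < δ` implies `‖PH − HP‖ < ε`, where
`pr(T) = ι* T ι` is compression to `M`. -/
theorem stmt_10 (a b : ℝ) (hab : a ≤ b)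
    (f : ℝ → ℝ) (hf : StrictConvexOn ℝ (Set.Icc a b) f)
    (hfc : ContinuousOn f (Set.Icc a b))
    (ε : ℝ) (hε : 0 < ε) :
    ∃ δ : ℝ, 0 < δ ∧
      ∀ (𝓗 : Type u) (𝓜 : Type v)
        [NormedAddCommGroup 𝓗] [InnerProductSpace ℂ 𝓗] [CompleteSpace 𝓗]
        [NormedAddCommGroup 𝓜] [InnerProductSpace ℂ 𝓜] [CompleteSpace 𝓜]
        (ι : 𝓜 →L[ℂ] 𝓗), (∀ x y : 𝓜, ⟪ι x, ι y⟫_ℂ = ⟪x, y⟫_ℂ) →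
        ∀ H : 𝓗 →L[ℂ] 𝓗, IsSelfAdjoint H → spectrum ℝ H ⊆ Set.Icc a b →
        ‖cfc f ((adjoint ι) ∘L H ∘L ι) - (adjoint ι) ∘L (cfc f H) ∘L ι‖ < δ →
        ‖(ι ∘L adjoint ι) ∘L H - H ∘L (ι ∘L adjoint ι)‖ < ε := by
  rcases eq_or_lt_of_le hab with hab' | hab'
  · subst hab'
    refine ⟨1, one_pos, ?_⟩
    intro 𝓗 𝓜 _ _ _ _ _ _ ι hι H hH hHs _
    have : H = algebraMap ℝ _ a := by
      rw [← cfc_id ℝ H hH, cfc_congr (g := fun _ => a) (fun t ht => by simpa using hHs ht),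
        cfc_const a H hH]
    rw [this]
    have h0 : (ι ∘L adjoint ι) ∘L (algebraMap ℝ (𝓗 →L[ℂ] 𝓗) a) -
        (algebraMap ℝ (𝓗 →L[ℂ] 𝓗) a) ∘L (ι ∘L adjoint ι) = 0 := by
      ext x
      simp [Algebra.algebraMap_eq_smul_one]
    rw [h0]
    simpa using hε
  have hB : 0 < b - a := by linarith
  obtain ⟨K₀, hK₀⟩ := exists_nat_gt (35 * (b - a) / (ε / 8))
  obtain ⟨K, hKK⟩ : ∃ K, K = K₀ + 1 := ⟨_, rfl⟩
  have hK : 0 < K := by omega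
  have hKr : (0 : ℝ) < K := by exact_mod_cast hK
  have hKε : 35 * ((b - a) / K) ≤ ε / 8 := by
    rw [div_lt_iff₀ (by positivity)] at hK₀
    rw [← mul_div_assoc, div_le_iff₀ hKr, hKK]
    push_cast
    nlinarith
  set κ := (b - a) / K with hκ
  have hκ0 : 0 < κ := by positivity
  obtain ⟨γ, hγ, hgap⟩ := aux_gap hf hfc hκ0
  obtain ⟨h, hh, hh0, hhsum, hhsupp⟩ := aux_partition hab' K hK
  have hhle : ∀ i < K, ∀ t, h i t ≤ 1 := by
    intro i hi t
    rw [← hhsum t]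
    exact Finset.single_le_sum (f := fun i => h i t) (fun j _ => hh0 j t) (Finset.mem_range.2 hi)
  set θ := ε / (16 * K ^ 2 * (b - a)) with hθ
  have hθ0 : 0 < θ := by positivity
  set η := min γ (γ * θ ^ 2 / 3) with hη
  have hη0 : 0 < η := lt_min hγ (by positivity)
  have hηγ : η ≤ γ := min_le_left _ _
  have hηθ : η ≤ γ * θ ^ 2 / 3 := min_le_right _ _
  obtain ⟨N, hNK, hN, c, e, hesum, hline⟩ := aux_lines hab' hf.convexOn hfc hη0 K
  obtain ⟨ρ, hρ, hρ0, hρsum, hρsupp⟩ := aux_partition hab' N hN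
  have hNr : (0 : ℝ) < N := by exact_mod_cast hN
  set w := (b - a) / N with hw
  have hwκ : w ≤ κ := by
    rw [hw, hκ]
    gcongr
  have hw0 : 0 < w := by positivity
  have hNw : N * w = b - a := by rw [hw]; field_simp
  have he0 : ∀ i < N, 0 ≤ e i := fun i hi => (hline i hi).1
  have hele : ∀ i < N, e i ≤ η := fun i hi =>
    (Finset.single_le_sum (f := e) (fun j hj => he0 j (Finset.mem_range.1 hj))
      (Finset.mem_range.2 hi)).trans hesum
  have hsm : ∀ i < N, a + i * w ∈ Set.Icc a b := by
    intro i hi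
    have h1 : (i : ℝ) ≤ N := by exact_mod_cast hi.le
    have h2 : (i : ℝ) * w ≤ N * w := by gcongr
    constructor
    · have : 0 ≤ (i : ℝ) * w := by positivity
      linarith
    · linarith
  refine ⟨η / N, by positivity, ?_⟩
  intro 𝓗 𝓜 _ _ _ _ _ _ ι hι H hH hHs hlt
  have hιι : ∀ x, adjoint ι (ι x) = x := by
    intro x
    refine ext_inner_right ℂ fun y => ?_
    rw [ContinuousLinearMap.adjoint_inner_left, hι]
  have hιn : ∀ x, ‖ι x‖ = ‖x‖ := by
    intro x
    rw [@norm_eq_sqrt_re_inner ℂ, hι, ← @norm_eq_sqrt_re_inner ℂ]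
  obtain ⟨hA, hAs⟩ := aux_compr_spec hH hHs hιι
  set A := (adjoint ι) ∘L H ∘L ι with hAdef
  have hHA : ∀ x, ⟪H (ι x), ι x⟫_ℂ = ⟪A x, x⟫_ℂ := by
    intro x
    rw [hAdef]
    simp [ContinuousLinearMap.adjoint_inner_left]
  have hδ : ∀ x, (⟪cfc f H (ι x), ι x⟫_ℂ).re ≤ (⟪cfc f A x, x⟫_ℂ).re + η / N * ‖x‖ ^ 2 := by
    intro x
    have h1 : ⟪cfc f H (ι x), ι x⟫_ℂ = ⟪cfc f A x, x⟫_ℂ -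
        ⟪(cfc f A - (adjoint ι) ∘L (cfc f H) ∘L ι) x, x⟫_ℂ := by
      simp [inner_sub_left, ContinuousLinearMap.adjoint_inner_left]
    have h2 : ‖⟪(cfc f A - (adjoint ι) ∘L (cfc f H) ∘L ι) x, x⟫_ℂ‖ ≤ η / N * ‖x‖ ^ 2 := by
      refine (norm_inner_le_norm _ _).trans ?_
      rw [pow_two, ← mul_assoc]
      refine mul_le_mul_of_nonneg_right ?_ (norm_nonneg _)
      exact (ContinuousLinearMap.le_opNorm _ _).trans
        (mul_le_mul_of_nonneg_right hlt.le (norm_nonneg _))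
    have h3 := (abs_le.1 ((Complex.abs_re_le_norm _).trans h2)).1
    rw [h1, Complex.sub_re]
    linarith
  have hT : ‖H ∘L ι - ι ∘L A‖ ≤ 35 * κ + 2 * K ^ 2 * (b - a) * θ := by
    refine aux_main hab' hH hHs hA hAs hιn hK hh hh0 hhsum hhsupp hθ0.le ?_
    intro i hi j hj hij x
    refine aux_far hfc hH hHs hA hAs hιn hHA (δ := η / N) (by positivity) hδ (hh i) (hh j)
      (fun t => by rw [abs_of_nonneg (hh0 j t)]; exact hhle j hj t) hρ hρ0 hρsum
      (s := fun k => a + k * w) (c := c) (e := e) hγ he0 hesum hθ0.le ?_ ?_ ?_ x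
    · have : N * (η / N) = η := by field_simp
      rw [this]; linarith
    · intro k hk
      by_cases hz : ∀ t ∈ Set.Icc a b, ρ k t * h j t = 0
      · exact Or.inl hz
      right
      push Not at hz
      obtain ⟨t₀, ht₀, hne⟩ := hz
      have hs1 := hρsupp k hk t₀ ht₀ (left_ne_zero_of_mul hne)
      have hs2 := hhsupp j hj t₀ ht₀ (right_ne_zero_of_mul hne)
      intro t ht
      beta_reduce
      set s := a + (k : ℝ) * w with hs
      have hs_mem : s ∈ Set.Icc a b := hsm k hk
      have hlow := ((hline k hk).2 t ht).1
      by_cases h0 : h i t = 0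
      · rw [h0]; linarith
      have hs3 := hhsupp i hi t ht h0
      have hdist : κ ≤ |t - s| := by
        rw [abs_le] at hs1 hs2 hs3
        rw [le_abs]
        by_cases hc : i ≤ j + 3
        · have : i + 4 ≤ j := by omega
          have h4 : (i : ℝ) + 4 ≤ j := by exact_mod_cast this
          have h5 : ((i : ℝ) + 4) * κ ≤ j * κ := by gcongr
          right; linarith [hs1.1, hs1.2, hs2.1, hs2.2, hs3.1, hs3.2]
        · have : j + 4 ≤ i := by omega
          have h4 : (j : ℝ) + 4 ≤ i := by exact_mod_cast this
          have h5 : ((j : ℝ) + 4) * κ ≤ i * κ := by gcongr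
          left; linarith [hs1.1, hs1.2, hs2.1, hs2.2, hs3.1, hs3.2]
      have hg := hgap s hs_mem t ht hdist
      have hmid : (s + t) / 2 ∈ Set.Icc a b := by
        constructor <;> linarith [hs_mem.1, hs_mem.2, ht.1, ht.2]
      have hlowm := ((hline k hk).2 _ hmid).1
      have hek := hele k hk
      have hhi : h i t * h i t ≤ 1 := by nlinarith [hh0 i t, hhle i hi t]
      have : γ * (h i t * h i t) ≤ γ := by nlinarith
      linarith
    · intro k hk t ht hne
      exact ((hline k hk).2 t ht).2 (hρsupp k hk t ht hne)
  have hT' : ‖H ∘L ι - ι ∘L A‖ ≤ ε / 4 := by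
    have : 2 * K ^ 2 * (b - a) * θ = ε / 8 := by
      rw [hθ]; field_simp; norm_num
    linarith
  have hιle : ‖ι‖ ≤ 1 := ι.opNorm_le_bound zero_le_one fun x => by rw [hιn, one_mul]
  have hιle' : ‖adjoint ι‖ ≤ 1 := by
    rw [LinearIsometryEquiv.norm_map]; exact hιle
  set T := H ∘L ι - ι ∘L A with hTdef
  have hTadj : adjoint T = (adjoint ι) ∘L H - A ∘L adjoint ι := by
    rw [hTdef, map_sub, ContinuousLinearMap.adjoint_comp, ContinuousLinearMap.adjoint_comp]
    have h1 : adjoint H = H := hH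
    have h2 : adjoint A = A := hA
    rw [h1, h2]
  have hcomm : (ι ∘L adjoint ι) ∘L H - H ∘L (ι ∘L adjoint ι) =
      ι ∘L adjoint T - T ∘L adjoint ι := by
    rw [hTadj, hTdef]
    ext x
    simp
  rw [hcomm]
  have n1 : ‖ι ∘L adjoint T‖ ≤ ε / 4 := by
    refine (ContinuousLinearMap.opNorm_comp_le _ _).trans ?_
    rw [LinearIsometryEquiv.norm_map]
    calc ‖ι‖ * ‖T‖ ≤ 1 * (ε / 4) := mul_le_mul hιle hT' (norm_nonneg _) zero_le_one
      _ = ε / 4 := one_mul _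
  have n2 : ‖T ∘L adjoint ι‖ ≤ ε / 4 := by
    refine (ContinuousLinearMap.opNorm_comp_le _ _).trans ?_
    calc ‖T‖ * ‖adjoint ι‖ ≤ (ε / 4) * 1 := mul_le_mul hT' hιle' (norm_nonneg _) (by positivity)
      _ = ε / 4 := mul_one _
  have := norm_sub_le (ι ∘L adjoint T) (T ∘L adjoint ι)
  linarith
end

section
/- Let I ⊆ ℝ be an interval, let f : I → ℝ be a strictly convex continuous function, let 𝓗 be a complex Hilbert space, and let (Hᵢ)_{i∈ι} be a net of self-adjoint bounded operators on 𝓗 with σ(Hᵢ) ⊆ I for all i, such that (Hᵢ) converges in the weak operator topology to a self-adjoint bounded operator H with σ(H) ⊆ I and (f(Hᵢ)) converges in the weak operator topology to f(H). If φ : I → ℝ is a continuous function such that x ↦ φ(x)/max(1, |x|, f(x)) is bounded on I, then (φ(Hᵢ)) converges in the weak operator topology to φ(H). -/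
set_option synthInstance.maxHeartbeats 400000
set_option maxHeartbeats 800000

open scoped InnerProductSpace
open Filter Topology

lemma aux_support {I : Set ℝ} {f : ℝ → ℝ} (hf : StrictConvexOn ℝ I f)
    {a b c : ℝ} (ha : a ∈ I) (hb : b ∈ I) (hac : a < c) (hcb : c < b) :
    ∃ s : ℝ, ∀ x ∈ I, f c + s * (x - c) ≤ f x := by
  have hsub : Set.Icc a b ⊆ I := hf.1.ordConnected.out ha hb
  have hc : c ∈ interior I :=
    mem_interior_iff_mem_nhds.2 (Filter.mem_of_superset (Icc_mem_nhds hac hcb) hsub)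
  have hcI : c ∈ I := interior_subset hc
  refine ⟨derivWithin f (Set.Ioi c) c, fun x hx => ?_⟩
  rcases lt_trichotomy x c with h | h | h
  · have h1 := hf.convexOn.slope_le_leftDeriv_of_mem_interior hx hc h
    have h2 := hf.convexOn.leftDeriv_le_rightDeriv_of_mem_interior hc
    have h3 := h1.trans h2
    rw [slope_def_field, div_le_iff₀ (by linarith)] at h3
    linarith
  · subst h; simp
  · have h1 := hf.convexOn.rightDeriv_le_slope_of_mem_interior hc hx h
    rw [slope_def_field, le_div_iff₀ (by linarith)] at h1
    linarith

/-- strict positivity of the gap -/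
lemma aux_strict {I : Set ℝ} {f : ℝ → ℝ} (hf : StrictConvexOn ℝ I f) {c s : ℝ} (hc : c ∈ I)
    (hs : ∀ x ∈ I, f c + s * (x - c) ≤ f x) {y : ℝ} (hy : y ∈ I) (hyc : y ≠ c) :
    0 < f y - f c - s * (y - c) := by
  have h1 := hf.2 hc hy hyc.symm (show (0:ℝ) < 1/2 by norm_num) (show (0:ℝ) < 1/2 by norm_num) (by norm_num)
  have hm : (1/2 : ℝ) • c + (1/2 : ℝ) • y ∈ I :=
    hf.1 hc hy (by norm_num) (by norm_num) (by norm_num)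
  have h2 := hs _ hm
  simp only [smul_eq_mul] at h1 h2
  nlinarith

/-- growth function is dominated by the gap beyond `y` -/
lemma aux_growth {I : Set ℝ} {f : ℝ → ℝ} (hf : StrictConvexOn ℝ I f) {c s : ℝ} (hc : c ∈ I)
    (hs : ∀ x ∈ I, f c + s * (x - c) ≤ f x) {y : ℝ} (hy : y ∈ I) (hyc : y ≠ c) :
    ∃ K : ℝ, 0 ≤ K ∧ ∀ r : ℝ, 1 ≤ r → c + r * (y - c) ∈ I →
      max 1 (max |c + r * (y - c)| (f (c + r * (y - c)))) ≤
        K * (f (c + r * (y - c)) - f c - s * ((c + r * (y - c)) - c)) := by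
  have hpos := aux_strict hf hc hs hy hyc
  set e := f y - f c - s * (y - c) with he
  set M := 1 + |c| + |y - c| + |f c| + |s * (y - c)| with hM
  have hM0 : 0 ≤ M := by positivity
  refine ⟨M / e + 1, by positivity, fun r hr hx => ?_⟩
  set x := c + r * (y - c) with hxd
  have hr0 : 0 < r := by linarith
  have hconv := hf.convexOn.2 hc hx
    (show 0 ≤ 1 - 1/r by rw [sub_nonneg, div_le_one hr0]; exact hr)
    (show 0 ≤ 1/r by positivity) (by ring)
  have hyeq : (1 - 1/r) • c + (1/r) • x = y := by
    simp only [smul_eq_mul, hxd]; field_simp; ring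
  rw [hyeq] at hconv
  simp only [smul_eq_mul] at hconv
  have hg : r * e ≤ f x - f c - s * (x - c) := by
    have h5 : r * f y ≤ (r - 1) * f c + f x := by
      have := mul_le_mul_of_nonneg_left hconv hr0.le
      have h6 : r * ((1 - 1 / r) * f c + 1 / r * f x) = (r - 1) * f c + f x := by
        field_simp
      linarith
    have h7 : x - c = r * (y - c) := by rw [hxd]; ring
    rw [h7, he]; nlinarith
  set g := f x - f c - s * (x - c) with hgd
  have hrg : r * M ≤ (M / e) * g := by
    have : (M / e) * (r * e) ≤ (M / e) * g := mul_le_mul_of_nonneg_left hg (by positivity)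
    calc r * M = (M / e) * (r * e) := by field_simp
      _ ≤ _ := this
  have hg0 : 0 ≤ g := le_trans (by positivity) hg
  have hMr : M ≤ r * M := by nlinarith
  have b1 := abs_nonneg c
  have b2 := abs_nonneg (y - c)
  have b3 := abs_nonneg (f c)
  have b4 := abs_nonneg (s * (y - c))
  have key : r * M ≤ (M / e + 1) * g := by linarith
  refine max_le (by linarith) (max_le ?_ ?_)
  · have : |x| ≤ |c| + r * |y - c| := by
      calc |x| ≤ |c| + |r * (y - c)| := abs_add_le _ _
        _ = _ := by rw [abs_mul, abs_of_pos hr0]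
    have : |c| + r * |y - c| ≤ r * M := by rw [hM]; nlinarith
    linarith
  · have h8 : f x = g + f c + r * (s * (y - c)) := by rw [hgd, hxd]; ring
    have h9 : r * (s * (y - c)) ≤ r * |s * (y - c)| :=
      mul_le_mul_of_nonneg_left (le_abs_self _) hr0.le
    have h10 := le_abs_self (f c)
    have : |f c| + r * |s * (y-c)| ≤ r * M := by rw [hM]; nlinarith
    nlinarith

/-- gap monotone in base point -/
lemma aux_mono {I : Set ℝ} {f : ℝ → ℝ} {c s c' s' : ℝ} (hc : c ∈ I) (hc' : c' ∈ I)
    (hs : ∀ x ∈ I, f c + s * (x - c) ≤ f x) (hs' : ∀ x ∈ I, f c' + s' * (x - c') ≤ f x)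
    {x : ℝ} (h : (c < c' ∧ c' ≤ x) ∨ (x ≤ c' ∧ c' < c)) :
    f x - f c' - s' * (x - c') ≤ f x - f c - s * (x - c) := by
  have h1 := hs _ hc'
  have h2 := hs' _ hc
  rcases h with ⟨h3, h4⟩ | ⟨h3, h4⟩
  · have : s ≤ s' := by
      by_contra hh
      push Not at hh
      nlinarith
    nlinarith
  · have : s' ≤ s := by
      by_contra hh
      push Not at hh
      nlinarith
    nlinarith

lemma aux_dom {I : Set ℝ} {f : ℝ → ℝ} (hf : StrictConvexOn ℝ I f) {α β : ℝ}
    (hα : α ∈ I) (hβ : β ∈ I) (hαβ : α < β) {w : ℝ → ℝ} {C ρ : ℝ} (hC : 0 ≤ C) (hρ : 0 < ρ)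
    (hw : ∀ x ∈ I, w x ≤ C * max 1 (max |x| (f x)))
    (hw0 : ∀ x ∈ I, α - ρ ≤ x → x ≤ β + ρ → w x ≤ 0) :
    ∃ K : ℝ, 0 ≤ K ∧ ∀ c ∈ Set.Ioo α β, ∀ s : ℝ, (∀ x ∈ I, f c + s * (x - c) ≤ f x) →
      ∀ x ∈ I, w x ≤ K * (f x - f c - s * (x - c)) := by
  have hsub : Set.Icc α β ⊆ I := hf.1.ordConnected.out hα hβ
  have hR : ∃ K : ℝ, 0 ≤ K ∧ ∀ c ∈ Set.Ioo α β, ∀ s : ℝ, (∀ x ∈ I, f c + s * (x - c) ≤ f x) →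
      ∀ x ∈ I, β + ρ ≤ x → max 1 (max |x| (f x)) ≤ K * (f x - f c - s * (x - c)) := by
    by_cases h : ∃ x0 ∈ I, β + ρ ≤ x0
    · obtain ⟨x0, hx0, hx0'⟩ := h
      have hy : β + ρ ∈ I := hf.1.ordConnected.out hβ hx0 ⟨by linarith, hx0'⟩
      obtain ⟨s0, hs0⟩ := aux_support hf hα hy hαβ (show β < β + ρ by linarith)
      obtain ⟨K, hK, hKx⟩ := aux_growth hf hβ hs0 hy (by linarith)
      refine ⟨K, hK, fun c hc s hs x hx hxβ => ?_⟩
      have hxe : β + ((x - β) / ρ) * (β + ρ - β) = x := by field_simp; ring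
      have h1 := hKx ((x - β) / ρ) (by rw [le_div_iff₀ hρ]; linarith) (by rwa [hxe])
      rw [hxe] at h1
      refine h1.trans (mul_le_mul_of_nonneg_left ?_ hK)
      exact aux_mono (hsub ⟨hc.1.le, hc.2.le⟩) hβ hs hs0 (Or.inl ⟨hc.2, by linarith⟩)
    · push Not at h
      exact ⟨0, le_rfl, fun c hc s hs x hx hxβ => absurd (h x hx) (not_lt.2 hxβ)⟩
  have hL : ∃ K : ℝ, 0 ≤ K ∧ ∀ c ∈ Set.Ioo α β, ∀ s : ℝ, (∀ x ∈ I, f c + s * (x - c) ≤ f x) →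
      ∀ x ∈ I, x ≤ α - ρ → max 1 (max |x| (f x)) ≤ K * (f x - f c - s * (x - c)) := by
    by_cases h : ∃ x0 ∈ I, x0 ≤ α - ρ
    · obtain ⟨x0, hx0, hx0'⟩ := h
      have hy : α - ρ ∈ I := hf.1.ordConnected.out hx0 hα ⟨hx0', by linarith⟩
      obtain ⟨s0, hs0⟩ := aux_support hf hy hβ (show α - ρ < α by linarith) hαβ
      obtain ⟨K, hK, hKx⟩ := aux_growth hf hα hs0 hy (by linarith)
      refine ⟨K, hK, fun c hc s hs x hx hxβ => ?_⟩
      have hxe : α + ((α - x) / ρ) * (α - ρ - α) = x := by field_simp; ring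
      have h1 := hKx ((α - x) / ρ) (by rw [le_div_iff₀ hρ]; linarith) (by rwa [hxe])
      rw [hxe] at h1
      refine h1.trans (mul_le_mul_of_nonneg_left ?_ hK)
      exact aux_mono (hsub ⟨hc.1.le, hc.2.le⟩) hα hs hs0 (Or.inr ⟨by linarith, hc.1⟩)
    · push Not at h
      exact ⟨0, le_rfl, fun c hc s hs x hx hxβ => absurd (h x hx) (not_lt.2 hxβ)⟩
  obtain ⟨KR, hKR, hR⟩ := hR
  obtain ⟨KL, hKL, hL⟩ := hL
  refine ⟨C * (KR + KL), by positivity, fun c hc s hs x hx => ?_⟩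
  have hg : 0 ≤ f x - f c - s * (x - c) := by have := hs x hx; linarith
  have e1 : 0 ≤ C * KL * (f x - f c - s * (x - c)) := by positivity
  have e2 : 0 ≤ C * KR * (f x - f c - s * (x - c)) := by positivity
  rcases le_total x (α - ρ) with h1 | h1
  · have := (hw x hx).trans (mul_le_mul_of_nonneg_left (hL c hc s hs x hx h1) hC)
    nlinarith
  · rcases le_total x (β + ρ) with h2 | h2
    · have := hw0 x hx h1 h2
      nlinarith
    · have := (hw x hx).trans (mul_le_mul_of_nonneg_left (hR c hc s hs x hx h2) hC)
      nlinarith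

/-- bound of the gap on a symmetric interval by the second difference -/
lemma aux_gap_s16 {I : Set ℝ} {f : ℝ → ℝ} (hf : ConvexOn ℝ I f) {c d s x : ℝ}
    (h1 : c - d ∈ I) (h2 : c + d ∈ I) (hs : ∀ x ∈ I, f c + s * (x - c) ≤ f x)
    (hx : x ∈ Set.Icc (c - d) (c + d)) :
    f x - f c - s * (x - c) ≤ f (c - d) + f (c + d) - 2 * f c := by
  have e1 := hs _ h1
  have e2 := hs _ h2
  rcases (show 0 ≤ d by have := hx.1.trans hx.2; linarith).eq_or_lt with hd | hd
  · have : x = c := by rw [← hd] at hx; simpa using hx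
    subst this
    linarith
  have hconv := hf.2 h1 h2
    (show 0 ≤ (c + d - x) / (2 * d) from div_nonneg (by linarith [hx.2]) (by linarith))
    (show 0 ≤ (x - (c - d)) / (2 * d) from div_nonneg (by linarith [hx.1]) (by linarith))
    (by field_simp; ring)
  have hxe : ((c + d - x) / (2 * d)) • (c - d) + ((x - (c - d)) / (2 * d)) • (c + d) = x := by
    simp only [smul_eq_mul]; field_simp; ring
  rw [hxe] at hconv
  simp only [smul_eq_mul] at hconv
  obtain ⟨u, hu⟩ : ∃ u, u = (c + d - x) / (2 * d) := ⟨_, rfl⟩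
  have hv : (x - (c - d)) / (2 * d) = 1 - u := by rw [hu]; field_simp; ring
  have hu0 : 0 ≤ u := hu ▸ div_nonneg (by linarith [hx.2]) (by linarith)
  have hu1 : 0 ≤ 1 - u := hv ▸ div_nonneg (by linarith [hx.1]) (by linarith)
  have hxu : x - c = d * (1 - 2 * u) := by rw [hu]; field_simp; ring
  rw [hv, ← hu] at hconv
  rw [hxu]
  nlinarith [mul_nonneg hu0 (show 0 ≤ f (c + d) - f c - s * d by linarith),
    mul_nonneg hu1 (show 0 ≤ f (c - d) - f c + s * d by linarith)]

/-- partition of unity -/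
lemma aux_part {α δ : ℝ} (hδ : 0 < δ) (n : ℕ) :
    ∃ P : ℕ → ℝ → ℝ, (∀ k, Continuous (P k)) ∧ (∀ k x, 0 ≤ P k x) ∧
      (∀ x, ∑ k ∈ Finset.range (n + 1), P k x = 1) ∧
      ∀ k ≤ n, ∀ x ∈ Set.Icc α (α + (n + 2 : ℕ) * δ), P k x ≠ 0 →
        x ∈ Set.Icc (α + (k : ℕ) * δ) (α + (k + 2 : ℕ) * δ) := by
  let c : ℕ → ℝ → ℝ := fun k x => max 0 (min 1 ((x - (α + k * δ)) / δ))
  let D : ℕ → ℝ → ℝ := fun k x => if k = 0 then 1 else if n + 1 ≤ k then 0 else c k x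
  have hc0 : ∀ k x, 0 ≤ c k x := fun k x => le_max_left _ _
  have hc1 : ∀ k x, c k x ≤ 1 := fun k x => max_le zero_le_one (min_le_left _ _)
  have hcc : ∀ k x, c (k + 1) x ≤ c k x := by
    intro k x
    apply max_le_max le_rfl
    apply min_le_min le_rfl
    apply div_le_div_of_nonneg_right _ hδ.le
    push_cast
    nlinarith
  refine ⟨fun k x => D k x - D (k + 1) x, ?_, ?_, ?_, ?_⟩
  · have hD : ∀ k, Continuous (D k) := by
      intro k
      by_cases h : k = 0
      · simp only [D, h, if_true]; fun_prop
      · by_cases h' : n + 1 ≤ k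
        · simp only [D, h, h', if_true, if_false]; fun_prop
        · simp only [D, h, h', if_false, c]; fun_prop
    exact fun k => (hD k).sub (hD _)
  · intro k x
    have := hc0 k x
    have := hc1 (k + 1) x
    have := hcc k x
    simp only [D]
    split_ifs <;> first | contradiction | omega | linarith
  · intro x
    rw [Finset.sum_range_sub' (fun k => D k x)]
    simp [D]
  · intro k hk x hx hne
    constructor
    · by_contra hlt
      push Not at hlt
      apply hne
      have hk0 : k ≠ 0 := by
        rintro rfl
        have := hx.1
        simp at hlt
        linarith
      have h0 : c k x = 0 := max_eq_left ((min_le_right _ _).trans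
        (div_nonpos_of_nonpos_of_nonneg (by linarith) hδ.le))
      have h1 : c (k + 1) x = 0 := le_antisymm (h0 ▸ hcc k x) (hc0 _ _)
      simp only [D, h0, h1]
      split_ifs <;> first | contradiction | omega | simp
    · by_contra hlt
      push Not at hlt
      apply hne
      have hkn : k < n := by
        rcases hk.lt_or_eq with h | h
        · exact h
        · subst h
          exact absurd hx.2 (not_le.2 hlt)
      have h1 : c (k + 1) x = 1 := by
        have : (1 : ℝ) ≤ (x - (α + ((k + 1 : ℕ) : ℝ) * δ)) / δ := by
          rw [le_div_iff₀ hδ]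
          push_cast at hlt ⊢
          linarith
        simp only [c]
        rw [min_eq_left this]
        simp
      have h0 : c k x = 1 := le_antisymm (hc1 _ _) (h1 ▸ hcc k x)
      simp only [D, h0, h1]
      split_ifs <;> first | contradiction | omega | simp

section ops
variable {𝓗 : Type*} [NormedAddCommGroup 𝓗] [InnerProductSpace ℂ 𝓗] [CompleteSpace 𝓗]

lemma op_symm (S : 𝓗 →L[ℂ] 𝓗) (a : ℝ → ℝ) (x y : 𝓗) :
    ⟪cfc a S x, y⟫_ℂ = ⟪x, cfc a S y⟫_ℂ := by
  have h : IsSelfAdjoint (cfc a S) := cfc_predicate a S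
  exact h.isSymmetric x y

lemma op_mul {S : 𝓗 →L[ℂ] 𝓗} {a b : ℝ → ℝ}
    (ha : ContinuousOn a (spectrum ℝ S)) (hb : ContinuousOn b (spectrum ℝ S)) (x : 𝓗) :
    cfc (fun t => a t * b t) S x = cfc a S (cfc b S x) := by
  rw [cfc_mul a b S ha hb]; rfl

lemma op_add {S : 𝓗 →L[ℂ] 𝓗} {a b : ℝ → ℝ}
    (ha : ContinuousOn a (spectrum ℝ S)) (hb : ContinuousOn b (spectrum ℝ S)) (x : 𝓗) :
    cfc (fun t => a t + b t) S x = cfc a S x + cfc b S x := by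
  rw [cfc_add S a b ha hb]; rfl

lemma op_sub {S : 𝓗 →L[ℂ] 𝓗} {a b : ℝ → ℝ}
    (ha : ContinuousOn a (spectrum ℝ S)) (hb : ContinuousOn b (spectrum ℝ S)) (x : 𝓗) :
    cfc (fun t => a t - b t) S x = cfc a S x - cfc b S x := by
  rw [cfc_sub a b S ha hb]; rfl

lemma op_const {S : 𝓗 →L[ℂ] 𝓗} (hS : IsSelfAdjoint S) (c : ℝ) (x : 𝓗) :
    cfc (fun _ => c) S x = (c : ℂ) • x := by
  rw [cfc_const c S hS, Algebra.algebraMap_eq_smul_one]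
  simp

lemma op_cmul {S : 𝓗 →L[ℂ] 𝓗} (c : ℝ) {a : ℝ → ℝ}
    (ha : ContinuousOn a (spectrum ℝ S)) (x : 𝓗) :
    cfc (fun t => c * a t) S x = (c : ℂ) • cfc a S x := by
  rw [cfc_const_mul c a S ha]
  simp

lemma op_mono {S : 𝓗 →L[ℂ] 𝓗} {a b : ℝ → ℝ}
    (ha : ContinuousOn a (spectrum ℝ S)) (hb : ContinuousOn b (spectrum ℝ S))
    (hab : ∀ t ∈ spectrum ℝ S, a t ≤ b t) (x : 𝓗) :
    (⟪cfc a S x, x⟫_ℂ).re ≤ (⟪cfc b S x, x⟫_ℂ).re := by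
  have h : cfc a S ≤ cfc b S := cfc_mono hab ha hb
  rw [ContinuousLinearMap.le_def] at h
  have h2 := h.re_inner_nonneg_left x
  simp only [sub_apply, inner_sub_left, map_sub] at h2
  simpa using h2

lemma op_normsq {S : 𝓗 →L[ℂ] 𝓗} {a : ℝ → ℝ} (ha : ContinuousOn a (spectrum ℝ S)) (x : 𝓗) :
    ‖cfc a S x‖ ^ 2 = (⟪cfc (fun t => a t * a t) S x, x⟫_ℂ).re := by
  rw [op_mul ha ha, op_symm]
  exact (inner_self_eq_norm_sq (𝕜 := ℂ) (cfc a S x)).symm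

lemma op_bound {S : 𝓗 →L[ℂ] 𝓗} {a : ℝ → ℝ} {c : ℝ} (hc : 0 ≤ c)
    (hac : ∀ t ∈ spectrum ℝ S, |a t| ≤ c) (x : 𝓗) : ‖cfc a S x‖ ≤ c * ‖x‖ := by
  have h := norm_cfc_le (f := a) (a := S) hc (fun t ht => by simpa using hac t ht)
  exact (ContinuousLinearMap.le_opNorm _ _).trans (mul_le_mul_of_nonneg_right h (norm_nonneg _))

lemma op_sqrt {S : 𝓗 →L[ℂ] 𝓗} {w : ℝ → ℝ} (hw : ContinuousOn w (spectrum ℝ S))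
    (hw0 : ∀ t ∈ spectrum ℝ S, 0 ≤ w t) (x : 𝓗) :
    cfc w S x = cfc (fun t => √(w t)) S (cfc (fun t => √(w t)) S x) := by
  rw [← op_mul hw.sqrt hw.sqrt]
  congr 1
  exact cfc_congr fun t ht => (Real.mul_self_sqrt (hw0 t ht)).symm

lemma op_sqrt_normsq {S : 𝓗 →L[ℂ] 𝓗} {w : ℝ → ℝ} (hw : ContinuousOn w (spectrum ℝ S))
    (hw0 : ∀ t ∈ spectrum ℝ S, 0 ≤ w t) (x : 𝓗) :
    ‖cfc (fun t => √(w t)) S x‖ ^ 2 = (⟪cfc w S x, x⟫_ℂ).re := by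
  rw [op_sqrt hw hw0, op_symm]
  exact (inner_self_eq_norm_sq (𝕜 := ℂ) _).symm

lemma op_sum {S : 𝓗 →L[ℂ] 𝓗} {P : ℕ → ℝ → ℝ} (s : Finset ℕ)
    (hP : ∀ k, ContinuousOn (P k) (spectrum ℝ S)) (x : 𝓗) :
    cfc (fun t => ∑ k ∈ s, P k t) S x = ∑ k ∈ s, cfc (P k) S x := by
  have h := cfc_sum P S s (fun k _ => hP k)
  have h2 : (∑ k ∈ s, P k) = fun t => ∑ k ∈ s, P k t := by ext t; simp
  rw [h2] at h
  rw [h]; simp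

/-- the pieces of a vector under a partition of unity -/
lemma op_part {S : 𝓗 →L[ℂ] 𝓗} {P : ℕ → ℝ → ℝ} {p : ℝ → ℝ} {m : ℕ}
    (hP : ∀ k, Continuous (P k)) (hP0 : ∀ k x, 0 ≤ P k x)
    (hP1 : ∀ x, ∑ k ∈ Finset.range m, P k x = 1) (hp : ContinuousOn p (spectrum ℝ S)) (v : 𝓗) :
    (∑ k ∈ Finset.range m, cfc (fun t => P k t * p t) S v = cfc p S v) ∧
    (∑ k ∈ Finset.range m, ‖cfc (fun t => P k t * p t) S v‖ ^ 2 ≤ ‖cfc p S v‖ ^ 2) := by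
  have hc : ∀ k, ContinuousOn (fun t => P k t * p t) (spectrum ℝ S) :=
    fun k => (hP k).continuousOn.mul hp
  constructor
  · rw [← op_sum _ hc]
    congr 2
    ext t
    rw [← Finset.sum_mul, hP1, one_mul]
  · simp_rw [op_normsq (hc _), op_normsq hp]
    rw [← Complex.re_sum, ← sum_inner, ← op_sum (P := fun k t => P k t * p t * (P k t * p t)) _ (fun k => (hc k).mul (hc k))]
    refine op_mono (continuousOn_finsetSum _ fun k _ => (hc k).mul (hc k)) (hp.mul hp)
      (fun t _ => ?_) v
    calc ∑ k ∈ Finset.range m, P k t * p t * (P k t * p t)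
        ≤ ∑ k ∈ Finset.range m, P k t * (p t * p t) := by
          refine Finset.sum_le_sum fun k hk => ?_
          have h1 : P k t ≤ 1 := by
            rw [← hP1 t]
            exact Finset.single_le_sum (f := fun k => P k t) (fun j _ => hP0 j t) hk
          have h2 := mul_self_nonneg (p t)
          have h3 := hP0 k t
          nlinarith [mul_nonneg (mul_nonneg h3 h2) (sub_nonneg.2 h1)]
      _ = p t * p t := by rw [← Finset.sum_mul, hP1, one_mul]

lemma op_gap {S : 𝓗 →L[ℂ] 𝓗} (hS : IsSelfAdjoint S) {f : ℝ → ℝ}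
    (hf : ContinuousOn f (spectrum ℝ S)) (c s : ℝ) (x y : 𝓗) :
    ⟪cfc (fun t => f t - f c - s * (t - c)) S x, y⟫_ℂ =
      ⟪cfc f S x, y⟫_ℂ - ((f c - s * c : ℝ) : ℂ) * ⟪x, y⟫_ℂ - (s : ℂ) * ⟪S x, y⟫_ℂ := by
  have h1 : (fun t => f t - f c - s * (t - c)) =
      fun t => (f t - (fun _ => (f c - s * c)) t) - (fun t => s * t) t := by
    ext t; simp only; ring
  rw [h1, op_sub (a := fun t => f t - (fun _ => (f c - s * c)) t) (hf.sub continuousOn_const)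
    (by fun_prop), op_sub hf continuousOn_const,
    op_const hS, op_cmul s (continuousOn_id' _), cfc_id' ℝ S hS, inner_sub_left, inner_sub_left,
    inner_smul_left, inner_smul_left, Complex.conj_ofReal, Complex.conj_ofReal]

lemma op_gap_tendsto {ι : Type*} {l : Filter ι} {I : Set ℝ} {f : ℝ → ℝ}
    (hfc : ContinuousOn f I)
    {H : ι → 𝓗 →L[ℂ] 𝓗} (hsa : ∀ i, IsSelfAdjoint (H i)) (hspec : ∀ i, spectrum ℝ (H i) ⊆ I)
    {T : 𝓗 →L[ℂ] 𝓗} (hTsa : IsSelfAdjoint T) (hTspec : spectrum ℝ T ⊆ I)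
    (hWOT : ∀ v w : 𝓗, Tendsto (fun i => ⟪(H i) v, w⟫_ℂ) l (𝓝 ⟪T v, w⟫_ℂ))
    (hfWOT : ∀ v w : 𝓗,
      Tendsto (fun i => ⟪(cfc f (H i)) v, w⟫_ℂ) l (𝓝 ⟪(cfc f T) v, w⟫_ℂ))
    (c s : ℝ) (x : 𝓗) :
    Tendsto (fun i => (⟪cfc (fun t => f t - f c - s * (t - c)) (H i) x, x⟫_ℂ).re) l
      (𝓝 (⟪cfc (fun t => f t - f c - s * (t - c)) T x, x⟫_ℂ).re) := by
  refine (Complex.continuous_re.tendsto _).comp ?_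
  rw [op_gap hTsa (hfc.mono hTspec)]
  simp_rw [fun i => op_gap (hsa i) (hfc.mono (hspec i)) c s x x]
  exact ((hfWOT x x).sub tendsto_const_nhds).sub ((hWOT x x).const_mul _)

lemma op_core {ι : Type*} {l : Filter ι} {I : Set ℝ} {f : ℝ → ℝ}
    (hf : StrictConvexOn ℝ I f) (hfc : ContinuousOn f I)
    {H : ι → 𝓗 →L[ℂ] 𝓗} (hsa : ∀ i, IsSelfAdjoint (H i)) (hspec : ∀ i, spectrum ℝ (H i) ⊆ I)
    {T : 𝓗 →L[ℂ] 𝓗} (hTsa : IsSelfAdjoint T) (hTspec : spectrum ℝ T ⊆ I)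
    (hWOT : ∀ v w : 𝓗, Tendsto (fun i => ⟪(H i) v, w⟫_ℂ) l (𝓝 ⟪T v, w⟫_ℂ))
    (hfWOT : ∀ v w : 𝓗,
      Tendsto (fun i => ⟪(cfc f (H i)) v, w⟫_ℂ) l (𝓝 ⟪(cfc f T) v, w⟫_ℂ))
    {α β : ℝ} (hα : α ∈ I) (hβ : β ∈ I) (hαβ : α < β) {w : ℝ → ℝ} (hwc : ContinuousOn w I)
    (hw0 : ∀ x ∈ I, 0 ≤ w x) {K : ℝ} (hK0 : 0 ≤ K)
    (hK : ∀ c ∈ Set.Ioo α β, ∀ s : ℝ, (∀ x ∈ I, f c + s * (x - c) ≤ f x) →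
      ∀ x ∈ I, w x ≤ K * (f x - f c - s * (x - c)))
    {p : ℝ → ℝ} (hp : ContinuousOn p (spectrum ℝ T))
    (hps : ∀ x ∈ spectrum ℝ T, x ∉ Set.Icc α β → p x = 0) (v : 𝓗) :
    Tendsto (fun i => ‖cfc (fun t => √(w t)) (H i) (cfc p T v)‖) l (𝓝 0) := by
  have hsub : Set.Icc α β ⊆ I := hf.1.ordConnected.out hα hβ
  have hfT := hfc.mono hTspec
  -- choice of mesh
  have hmesh : Tendsto (fun n : ℕ => √(K * ((f β - f (β - (β - α) / (n + 2 : ℕ))) -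
      (f (α + (β - α) / (n + 2 : ℕ)) - f α))) * ‖cfc p T v‖) atTop (𝓝 0) := by
    have hδ : Tendsto (fun n : ℕ => (β - α) / ((n + 2 : ℕ) : ℝ)) atTop (𝓝 0) :=
      (tendsto_const_div_atTop_nhds_zero_nat (β - α)).comp (tendsto_add_atTop_nat 2)
    have hδ0 : ∀ n : ℕ, 0 ≤ (β - α) / ((n + 2 : ℕ) : ℝ) := fun n =>
      div_nonneg (by linarith) (by positivity)
    have hδ1 : ∀ n : ℕ, (β - α) / ((n + 2 : ℕ) : ℝ) ≤ β - α := fun n =>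
      div_le_self (by linarith) (by push_cast; linarith [Nat.cast_nonneg (α := ℝ) n])
    have h1 : Tendsto (fun n : ℕ => f (β - (β - α) / ((n + 2 : ℕ) : ℝ))) atTop (𝓝 (f β)) := by
      refine ((hfc.mono hsub) β ⟨hαβ.le, le_rfl⟩).tendsto.comp
        (tendsto_nhdsWithin_iff.2 ⟨?_, Eventually.of_forall fun n => ?_⟩)
      · simpa using hδ.const_sub β
      · exact ⟨by linarith [hδ1 n], by linarith [hδ0 n]⟩
    have h2 : Tendsto (fun n : ℕ => f (α + (β - α) / ((n + 2 : ℕ) : ℝ))) atTop (𝓝 (f α)) := by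
      refine ((hfc.mono hsub) α ⟨le_rfl, hαβ.le⟩).tendsto.comp
        (tendsto_nhdsWithin_iff.2 ⟨?_, Eventually.of_forall fun n => ?_⟩)
      · simpa using hδ.const_add α
      · exact ⟨by linarith [hδ0 n], by linarith [hδ1 n]⟩
    have h3 := (((h1.const_sub (f β)).sub (h2.sub_const (f α))).const_mul K).sqrt.mul_const
      ‖cfc p T v‖
    simpa using h3
  rw [tendsto_order]
  refine ⟨fun a ha => Eventually.of_forall fun i => ha.trans_le (norm_nonneg _),
    fun ε hε => ?_⟩
  obtain ⟨n, hn⟩ := ((tendsto_order.1 hmesh).2 ε hε).exists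
  obtain ⟨δ, hδd⟩ : ∃ δ, δ = (β - α) / ((n + 2 : ℕ) : ℝ) := ⟨_, rfl⟩
  rw [← hδd] at hn
  have hn2 : (0 : ℝ) < ((n + 2 : ℕ) : ℝ) := by positivity
  have hδ : 0 < δ := hδd ▸ div_pos (by linarith) hn2
  have hβe : α + ((n + 2 : ℕ) : ℝ) * δ = β := by rw [hδd]; field_simp; ring
  obtain ⟨P, hPc, hP0, hP1, hPs⟩ := aux_part (α := α) hδ n
  obtain ⟨t, ht⟩ : ∃ t : ℕ → ℝ, t = fun k : ℕ => α + (k : ℝ) * δ := ⟨_, rfl⟩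
  have htI : ∀ k ≤ n + 2, t k ∈ Set.Icc α β := by
    intro k hk
    have hk' : (k : ℝ) ≤ ((n + 2 : ℕ) : ℝ) := by exact_mod_cast hk
    rw [ht]
    exact ⟨by simp only; nlinarith [mul_nonneg (Nat.cast_nonneg (α := ℝ) k) hδ.le],
      by simp only; nlinarith⟩
  have hts : ∀ k, t (k + 1) = t k + δ := by intro k; rw [ht]; push_cast; ring
  have ht0 : t 0 = α := by rw [ht]; simp
  have htn : t (n + 2) = β := by rw [ht]; exact hβe
  have htm : ∀ k ≤ n, t (k + 1) ∈ Set.Ioo α β := by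
    intro k hk
    have h1 := (htI k (by omega)).1
    have h2 := (htI (k + 2) (by omega)).2
    rw [hts (k + 1)] at h2
    exact ⟨by rw [hts]; linarith, by linarith⟩
  have hsup : ∀ k, ∃ s : ℝ, k ≤ n → ∀ x ∈ I, f (t (k + 1)) + s * (x - t (k + 1)) ≤ f x := by
    intro k
    by_cases hk : k ≤ n
    · obtain ⟨s, hs⟩ := aux_support hf hα hβ (htm k hk).1 (htm k hk).2
      exact ⟨s, fun _ => hs⟩
    · exact ⟨0, fun h => absurd h hk⟩
  choose s hs using hsup
  obtain ⟨g, hg⟩ : ∃ g : ℕ → ℝ → ℝ,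
    g = fun k x => f x - f (t (k + 1)) - s k * (x - t (k + 1)) := ⟨_, rfl⟩
  obtain ⟨u, hu⟩ : ∃ u : ℕ → 𝓗, u = fun k => cfc (fun x => P k x * p x) T v := ⟨_, rfl⟩
  obtain ⟨Δ, hΔ⟩ : ∃ Δ : ℕ → ℝ, Δ = fun k => f (t k) + f (t (k + 2)) - 2 * f (t (k + 1)) :=
    ⟨_, rfl⟩
  obtain ⟨hu1, hu2⟩ := op_part hPc hP0 hP1 hp v
  have hgc : ∀ k, ContinuousOn (g k) I := by
    intro k; rw [hg]; exact (hfc.sub continuousOn_const).sub (by fun_prop)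
  have hgΔ : ∀ k ≤ n, ∀ x ∈ Set.Icc (t k) (t (k + 2)), g k x ≤ Δ k := by
    intro k hk x hx
    have e1 : t k = t (k + 1) - δ := by rw [hts]; ring
    have e2 : t (k + 2) = t (k + 1) + δ := hts (k + 1)
    rw [e1, e2] at hx
    have := aux_gap_s16 hf.convexOn (e1 ▸ hsub (htI k (by omega)))
      (e2 ▸ hsub (htI (k + 2) (by omega))) (hs k hk) hx
    rw [hg, hΔ]
    simp only
    rw [e1, e2]
    exact this
  have hg0 : ∀ k ≤ n, ∀ x ∈ I, 0 ≤ g k x := by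
    intro k hk x hx
    have := hs k hk x hx
    rw [hg]; simp only; linarith
  have hΔ0 : ∀ k ≤ n, 0 ≤ Δ k := by
    intro k hk
    have h1 : t (k + 1) ∈ Set.Icc (t k) (t (k + 2)) := by
      rw [hts (k + 1), hts k]; constructor <;> linarith
    exact (hg0 k hk _ (hsub (htI (k + 1) (by omega)))).trans (hgΔ k hk _ h1)
  -- limit estimate
  have hlim : ∀ k ≤ n, (⟪cfc (g k) T (u k), u k⟫_ℂ).re ≤ Δ k * ‖u k‖ ^ 2 := by
    intro k hk
    have hc : ContinuousOn (fun x => P k x * p x) (spectrum ℝ T) := (hPc k).continuousOn.mul hp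
    have hgT := (hgc k).mono hTspec
    have hc2 : ContinuousOn (fun x => (P k x * p x) * (P k x * p x)) (spectrum ℝ T) := hc.mul hc
    have hc3 : ContinuousOn (fun x => g k x * (P k x * p x)) (spectrum ℝ T) := hgT.mul hc
    have hc4 : ContinuousOn (fun x => (P k x * p x) * (g k x * (P k x * p x))) (spectrum ℝ T) :=
      hc.mul hc3
    have hc5 : ContinuousOn (fun x => Δ k * ((P k x * p x) * (P k x * p x))) (spectrum ℝ T) :=
      continuousOn_const.mul hc2
    have e1 : ⟪cfc (g k) T (u k), u k⟫_ℂ =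
        ⟪cfc (fun x => (P k x * p x) * (g k x * (P k x * p x))) T v, v⟫_ℂ := by
      rw [op_mul hc hc3, op_mul hgT hc, op_symm T (fun x => P k x * p x), hu]
    have e2 : Δ k * ‖u k‖ ^ 2 =
        (⟪cfc (fun x => Δ k * ((P k x * p x) * (P k x * p x))) T v, v⟫_ℂ).re := by
      rw [op_cmul _ hc2, inner_smul_left, Complex.conj_ofReal, Complex.re_ofReal_mul,
        ← op_normsq hc, hu]
    rw [e1, e2]
    refine op_mono hc4 hc5 (fun x hx => ?_) v
    by_cases hz : P k x * p x = 0
    · rw [hz]; simp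
    · have hxI : x ∈ Set.Icc α β := by
        by_contra hcon
        exact hz (by rw [hps x hx hcon, mul_zero])
      have hPx : P k x ≠ 0 := left_ne_zero_of_mul hz
      have hxk := hPs k hk x (by rw [hβe]; exact hxI) hPx
      have := hgΔ k hk x (by rw [ht]; exact hxk)
      nlinarith [mul_self_nonneg (P k x * p x)]
  -- the majorant
  have hF : Tendsto (fun i => ∑ k ∈ Finset.range (n + 1),
      √(K * (⟪cfc (g k) (H i) (u k), u k⟫_ℂ).re)) l
      (𝓝 (∑ k ∈ Finset.range (n + 1), √(K * (⟪cfc (g k) T (u k), u k⟫_ℂ).re))) := by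
    refine tendsto_finsetSum _ fun k _ => ?_
    have := op_gap_tendsto hfc hsa hspec hTsa hTspec hWOT hfWOT (t (k + 1)) (s k) (u k)
    rw [hg]
    exact (this.const_mul K).sqrt
  have hbound : ∑ k ∈ Finset.range (n + 1), √(K * (⟪cfc (g k) T (u k), u k⟫_ℂ).re) < ε := by
    refine lt_of_le_of_lt ?_ hn
    calc ∑ k ∈ Finset.range (n + 1), √(K * (⟪cfc (g k) T (u k), u k⟫_ℂ).re)
        ≤ ∑ k ∈ Finset.range (n + 1), √(K * Δ k) * ‖u k‖ := by
          refine Finset.sum_le_sum fun k hk => ?_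
          have hk' : k ≤ n := Nat.lt_succ_iff.1 (Finset.mem_range.1 hk)
          rw [← Real.sqrt_sq (norm_nonneg (u k)), ← Real.sqrt_mul (mul_nonneg hK0 (hΔ0 k hk'))]
          apply Real.sqrt_le_sqrt
          rw [mul_assoc]
          exact mul_le_mul_of_nonneg_left (hlim k hk') hK0
      _ ≤ √(∑ k ∈ Finset.range (n + 1), √(K * Δ k) ^ 2) *
            √(∑ k ∈ Finset.range (n + 1), ‖u k‖ ^ 2) := Real.sum_mul_le_sqrt_mul_sqrt _ _ _
      _ ≤ _ := by
          refine mul_le_mul ?_ ?_ (Real.sqrt_nonneg _) (Real.sqrt_nonneg _)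
          · apply Real.sqrt_le_sqrt
            have e1 : ∑ k ∈ Finset.range (n + 1), √(K * Δ k) ^ 2 =
                K * ∑ k ∈ Finset.range (n + 1), Δ k := by
              rw [Finset.mul_sum]
              refine Finset.sum_congr rfl fun k hk => ?_
              exact Real.sq_sqrt (mul_nonneg hK0
                (hΔ0 k (Nat.lt_succ_iff.1 (Finset.mem_range.1 hk))))
            have e2 : ∑ k ∈ Finset.range (n + 1), Δ k =
                (f (t (n + 2)) - f (t (n + 1))) - (f (t 1) - f (t 0)) := by
              have := Finset.sum_range_sub (fun k => f (t (k + 1)) - f (t k)) (n + 1)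
              simp only [zero_add] at this
              rw [← this, hΔ]
              refine Finset.sum_congr rfl fun k hk => ?_
              simp only
              rw [show k + 1 + 1 = k + 2 from rfl]
              ring
            rw [e1, e2, htn, show t (n + 1) = β - δ by
              have := hts (n + 1); rw [show n + 1 + 1 = n + 2 from rfl, htn] at this; linarith,
              show t 1 = α + δ by rw [hts 0, ht0], ht0]
          · rw [← Real.sqrt_sq (norm_nonneg (cfc p T v))]
            apply Real.sqrt_le_sqrt
            rw [hu]
            exact hu2
  filter_upwards [(tendsto_order.1 hF).2 ε hbound] with i hi
  refine lt_of_le_of_lt ?_ hi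
  rw [← hu1, map_sum]
  refine (norm_sum_le _ _).trans (Finset.sum_le_sum fun k hk => ?_)
  have hk' : k ≤ n := Nat.lt_succ_iff.1 (Finset.mem_range.1 hk)
  apply Real.le_sqrt_of_sq_le
  have hwH := hwc.mono (hspec i)
  have hgH := (hgc k).mono (hspec i)
  rw [op_sqrt_normsq hwH (fun x hx => hw0 x (hspec i hx)), ← Complex.re_ofReal_mul]
  have e3 := op_mono hwH (continuousOn_const.mul hgH) (fun x hx => ?_) (u k) (a := w)
    (b := fun x => K * g k x)
  · rw [op_cmul K hgH, inner_smul_left, Complex.conj_ofReal] at e3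
    rw [hu] at e3 ⊢
    exact e3
  · have := hK _ (htm k hk') (s k) (hs k hk') x (hspec i hx)
    rw [hg]; exact this


lemma op_sep0 {ι : Type*} {l : Filter ι} {I : Set ℝ} {f : ℝ → ℝ}
    (hf : StrictConvexOn ℝ I f) (hfc : ContinuousOn f I)
    {H : ι → 𝓗 →L[ℂ] 𝓗} (hsa : ∀ i, IsSelfAdjoint (H i)) (hspec : ∀ i, spectrum ℝ (H i) ⊆ I)
    {T : 𝓗 →L[ℂ] 𝓗} (hTsa : IsSelfAdjoint T) (hTspec : spectrum ℝ T ⊆ I)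
    (hWOT : ∀ v w : 𝓗, Tendsto (fun i => ⟪(H i) v, w⟫_ℂ) l (𝓝 ⟪T v, w⟫_ℂ))
    (hfWOT : ∀ v w : 𝓗,
      Tendsto (fun i => ⟪(cfc f (H i)) v, w⟫_ℂ) l (𝓝 ⟪(cfc f T) v, w⟫_ℂ))
    {α β : ℝ} (hα : α ∈ I) (hβ : β ∈ I) (hαβ : α < β) {w : ℝ → ℝ} (hwc : ContinuousOn w I)
    (hw0 : ∀ x ∈ I, 0 ≤ w x) {C ρ : ℝ} (hC : 0 ≤ C) (hρ : 0 < ρ)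
    (hw : ∀ x ∈ I, w x ≤ C * max 1 (max |x| (f x)))
    (hwz : ∀ x ∈ I, α - ρ ≤ x → x ≤ β + ρ → w x ≤ 0)
    {p : ℝ → ℝ} (hp : ContinuousOn p (spectrum ℝ T))
    (hps : ∀ x ∈ spectrum ℝ T, x ∉ Set.Icc α β → p x = 0) (v y : 𝓗) :
    Tendsto (fun i => ⟪cfc w (H i) (cfc p T v), y⟫_ℂ) l (𝓝 0) := by
  obtain ⟨K, hK0, hK⟩ := aux_dom hf hα hβ hαβ hC hρ hw hwz
  have h1 := op_core hf hfc hsa hspec hTsa hTspec hWOT hfWOT hα hβ hαβ hwc hw0 hK0 hK hp hps v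
  have hm : (α + β) / 2 ∈ Set.Ioo α β := ⟨by linarith, by linarith⟩
  obtain ⟨s, hs⟩ := aux_support hf hα hβ hm.1 hm.2
  have h2 := ((op_gap_tendsto hfc hsa hspec hTsa hTspec hWOT hfWOT ((α + β) / 2) s y).const_mul
    K).sqrt
  have h3 := h1.mul h2
  rw [zero_mul] at h3
  refine squeeze_zero_norm (fun i => ?_) h3
  have hwH := hwc.mono (hspec i)
  have hw0H : ∀ x ∈ spectrum ℝ (H i), 0 ≤ w x := fun x hx => hw0 x (hspec i hx)
  rw [op_sqrt hwH hw0H, op_symm]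
  refine (norm_inner_le_norm _ _).trans (mul_le_mul_of_nonneg_left ?_ (norm_nonneg _))
  apply Real.le_sqrt_of_sq_le
  have hgc : ContinuousOn (fun t => f t - f ((α + β) / 2) - s * (t - (α + β) / 2)) I :=
    (hfc.sub continuousOn_const).sub (by fun_prop)
  have hgH := hgc.mono (hspec i)
  rw [op_sqrt_normsq hwH hw0H]
  have e3 := op_mono (a := w)
    (b := fun x => K * (f x - f ((α + β) / 2) - s * (x - (α + β) / 2))) hwH
    (continuousOn_const.mul hgH) (fun x hx => hK _ hm s hs x (hspec i hx)) y
  rw [op_cmul K hgH, inner_smul_left, Complex.conj_ofReal, Complex.re_ofReal_mul] at e3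
  exact e3

lemma op_sep {ι : Type*} {l : Filter ι} {I : Set ℝ} {f : ℝ → ℝ}
    (hf : StrictConvexOn ℝ I f) (hfc : ContinuousOn f I)
    {H : ι → 𝓗 →L[ℂ] 𝓗} (hsa : ∀ i, IsSelfAdjoint (H i)) (hspec : ∀ i, spectrum ℝ (H i) ⊆ I)
    {T : 𝓗 →L[ℂ] 𝓗} (hTsa : IsSelfAdjoint T) (hTspec : spectrum ℝ T ⊆ I)
    (hWOT : ∀ v w : 𝓗, Tendsto (fun i => ⟪(H i) v, w⟫_ℂ) l (𝓝 ⟪T v, w⟫_ℂ))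
    (hfWOT : ∀ v w : 𝓗,
      Tendsto (fun i => ⟪(cfc f (H i)) v, w⟫_ℂ) l (𝓝 ⟪(cfc f T) v, w⟫_ℂ))
    {α β : ℝ} (hα : α ∈ I) (hβ : β ∈ I) (hαβ : α < β) {w : ℝ → ℝ} (hwc : ContinuousOn w I)
    {C ρ : ℝ} (hC : 0 ≤ C) (hρ : 0 < ρ)
    (hw : ∀ x ∈ I, |w x| ≤ C * max 1 (max |x| (f x)))
    (hwz : ∀ x ∈ I, α - ρ ≤ x → x ≤ β + ρ → w x = 0)
    {p : ℝ → ℝ} (hp : ContinuousOn p (spectrum ℝ T))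
    (hps : ∀ x ∈ spectrum ℝ T, x ∉ Set.Icc α β → p x = 0) (v y : 𝓗) :
    Tendsto (fun i => ⟪cfc w (H i) (cfc p T v), y⟫_ℂ) l (𝓝 0) := by
  have hc1 : ContinuousOn (fun x => max (w x) 0) I := hwc.sup continuousOn_const
  have hc2 : ContinuousOn (fun x => max (-w x) 0) I := hwc.neg.sup continuousOn_const
  have h1 := op_sep0 hf hfc hsa hspec hTsa hTspec hWOT hfWOT hα hβ hαβ hc1
    (fun x _ => le_max_right _ _) hC hρ
    (fun x hx => (max_le (le_abs_self _) (abs_nonneg _)).trans (hw x hx))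
    (fun x hx h1 h2 => by simp [hwz x hx h1 h2]) hp hps v y
  have h2 := op_sep0 hf hfc hsa hspec hTsa hTspec hWOT hfWOT hα hβ hαβ hc2
    (fun x _ => le_max_right _ _) hC hρ
    (fun x hx => (max_le (neg_le_abs _) (abs_nonneg _)).trans (hw x hx))
    (fun x hx h1 h2 => by simp [hwz x hx h1 h2]) hp hps v y
  have h3 := h1.sub h2
  rw [sub_zero] at h3
  refine h3.congr fun i => ?_
  rw [← inner_sub_left, ← op_sub (hc1.mono (hspec i)) (hc2.mono (hspec i))]
  congr 3
  ext x
  rcases le_total 0 (w x) with h | h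
  · rw [max_eq_left h, max_eq_right (by linarith)]; ring
  · rw [max_eq_right h, max_eq_left (by linarith)]; ring

lemma aux_clamp (e a : ℝ) (he : 0 ≤ e) :
    |max (-e) (min a e)| ≤ e ∧ |a - max (-e) (min a e)| ≤ |a| ∧
      (|a| ≤ e → a - max (-e) (min a e) = 0) := by
  refine ⟨?_, ?_, ?_⟩
  · exact abs_le.2 ⟨le_max_left _ _, max_le (by linarith) (min_le_right _ _)⟩
  · rcases le_total a e with h | h
    · rw [min_eq_left h]
      rcases le_total (-e) a with h' | h'
      · rw [max_eq_right h']; simp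
      · rw [max_eq_left h', abs_of_nonpos (by linarith), abs_of_nonpos (by linarith)]; linarith
    · rw [min_eq_right h, max_eq_right (by linarith), abs_of_nonneg (by linarith),
        abs_of_nonneg (by linarith)]; linarith
  · intro h
    have := abs_le.1 h
    rw [min_eq_left this.2, max_eq_right this.1, sub_self]

lemma op_lip {ι : Type*} {l : Filter ι} {I : Set ℝ} {f : ℝ → ℝ}
    (hf : StrictConvexOn ℝ I f) (hfc : ContinuousOn f I)
    {H : ι → 𝓗 →L[ℂ] 𝓗} (hsa : ∀ i, IsSelfAdjoint (H i)) (hspec : ∀ i, spectrum ℝ (H i) ⊆ I)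
    {T : 𝓗 →L[ℂ] 𝓗} (hTsa : IsSelfAdjoint T) (hTspec : spectrum ℝ T ⊆ I)
    (hWOT : ∀ v w : 𝓗, Tendsto (fun i => ⟪(H i) v, w⟫_ℂ) l (𝓝 ⟪T v, w⟫_ℂ))
    (hfWOT : ∀ v w : 𝓗,
      Tendsto (fun i => ⟪(cfc f (H i)) v, w⟫_ℂ) l (𝓝 ⟪(cfc f T) v, w⟫_ℂ))
    {A B : ℝ} (hA : A ∈ I) (hB : B ∈ I) (hAB : A < B) (hTAB : spectrum ℝ T ⊆ Set.Icc A B)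
    {ψ : ℝ → ℝ} {L : ℝ} (hL : 0 ≤ L) (hψc : Continuous ψ)
    (hψ : ∀ x y, |ψ x - ψ y| ≤ L * |x - y|) (v y : 𝓗) :
    Tendsto (fun i => ⟪cfc ψ (H i) v, y⟫_ℂ) l (𝓝 ⟪cfc ψ T v, y⟫_ℂ) := by
  have hsub : Set.Icc A B ⊆ I := hf.1.ordConnected.out hA hB
  -- choice of mesh
  have hmesh : Tendsto (fun n : ℕ => 3 * L * (B - A) * ‖v‖ * ‖y‖ * (√((n : ℝ) + 1))⁻¹)
      atTop (𝓝 0) := by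
    have h1 : Tendsto (fun n : ℕ => √((n : ℝ) + 1)) atTop atTop :=
      Real.tendsto_sqrt_atTop.comp (tendsto_atTop_add_const_right _ _ tendsto_natCast_atTop_atTop)
    simpa using h1.inv_tendsto_atTop.const_mul (3 * L * (B - A) * ‖v‖ * ‖y‖)
  rw [Metric.tendsto_nhds]
  intro ε hε
  obtain ⟨n, hn⟩ := ((tendsto_order.1 hmesh).2 (ε / 2) (half_pos hε)).exists
  obtain ⟨δ, hδd⟩ : ∃ δ, δ = (B - A) / ((n + 2 : ℕ) : ℝ) := ⟨_, rfl⟩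
  have hn2 : (0 : ℝ) < ((n + 2 : ℕ) : ℝ) := by positivity
  have hδ : 0 < δ := hδd ▸ div_pos (by linarith) hn2
  have hβe : A + ((n + 2 : ℕ) : ℝ) * δ = B := by rw [hδd]; field_simp; ring
  obtain ⟨P, hPc, hP0, hP1, hPs⟩ := aux_part (α := A) hδ n
  obtain ⟨t, ht⟩ : ∃ t : ℕ → ℝ, t = fun k : ℕ => A + (k : ℝ) * δ := ⟨_, rfl⟩
  have htI : ∀ k ≤ n + 2, t k ∈ Set.Icc A B := by
    intro k hk
    have hk' : (k : ℝ) ≤ ((n + 2 : ℕ) : ℝ) := by exact_mod_cast hk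
    rw [ht]
    exact ⟨by simp only; nlinarith [mul_nonneg (Nat.cast_nonneg (α := ℝ) k) hδ.le],
      by simp only; nlinarith⟩
  have hts : ∀ k, t (k + 1) = t k + δ := by intro k; rw [ht]; push_cast; ring
  obtain ⟨u, hu⟩ : ∃ u : ℕ → 𝓗, u = fun k => cfc (fun x => P k x * 1) T v := ⟨_, rfl⟩
  obtain ⟨hu1, hu2⟩ := op_part hPc hP0 hP1 (p := fun _ => (1 : ℝ)) (S := T)
    continuousOn_const v
  rw [op_const hTsa, Complex.ofReal_one, one_smul] at hu1 hu2
  obtain ⟨r, hr⟩ : ∃ r : ℕ → ℝ → ℝ, r = fun k x => max (-(2 * L * δ))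
    (min (ψ x - ψ (t (k + 1))) (2 * L * δ)) := ⟨_, rfl⟩
  obtain ⟨w, hw⟩ : ∃ w : ℕ → ℝ → ℝ, w = fun k x => (ψ x - ψ (t (k + 1))) - r k x := ⟨_, rfl⟩
  have h2L : 0 ≤ 2 * L * δ := by positivity
  have hrc : ∀ k, Continuous (r k) := by intro k; rw [hr]; fun_prop
  have hwc : ∀ k, Continuous (w k) := by
    intro k; rw [hw]; exact (hψc.sub continuous_const).sub (hrc k)
  have hw0 : ∀ k ≤ n, Tendsto (fun i => ⟪cfc (w k) (H i) (u k), y⟫_ℂ) l (𝓝 0) := by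
    intro k hk
    rw [hu]
    refine op_sep hf hfc hsa hspec hTsa hTspec hWOT hfWOT (hsub (htI k (by omega)))
      (hsub (htI (k + 2) (by omega))) (by rw [hts (k + 1), hts k]; linarith)
      (hwc k).continuousOn (C := L * (1 + |t (k + 1)|)) (ρ := δ) (by positivity) hδ ?_ ?_
      (by fun_prop) ?_ v y
    · intro x hx
      have h1 : |w k x| ≤ |ψ x - ψ (t (k + 1))| := by
        rw [hw, hr]; exact (aux_clamp _ _ h2L).2.1
      have h2 := hψ x (t (k + 1))
      have h3 : |x - t (k + 1)| ≤ |x| + |t (k + 1)| := abs_sub _ _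
      have h4 : 1 ≤ max 1 (max |x| (f x)) := le_max_left _ _
      have h5 : |x| ≤ max 1 (max |x| (f x)) := (le_max_left _ _).trans (le_max_right _ _)
      have h6 := abs_nonneg (t (k + 1))
      have h7 : |x - t (k + 1)| ≤ (1 + |t (k + 1)|) * max 1 (max |x| (f x)) := by nlinarith
      rw [mul_assoc]
      exact (h1.trans h2).trans (mul_le_mul_of_nonneg_left h7 hL)
    · intro x hx hx1 hx2
      rw [hts (k + 1)] at hx2
      have hx3 := hts k
      have h1 : |x - t (k + 1)| ≤ 2 * δ := abs_le.2 ⟨by linarith, by linarith⟩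
      rw [hw, hr]
      refine (aux_clamp _ _ h2L).2.2 ((hψ _ _).trans ?_)
      nlinarith
    · intro x hx hxn
      by_contra hne
      apply hxn
      rw [ht]
      exact hPs k hk x (by rw [hβe]; exact hTAB hx) (left_ne_zero_of_mul hne)
  have hwsum : Tendsto (fun i => ∑ k ∈ Finset.range (n + 1), ⟪cfc (w k) (H i) (u k), y⟫_ℂ) l
      (𝓝 0) := by
    have := tendsto_finsetSum (Finset.range (n + 1)) fun k hk =>
      hw0 k (Nat.lt_succ_iff.1 (Finset.mem_range.1 hk))
    simpa using this
  have hsumu : ∑ k ∈ Finset.range (n + 1), ‖u k‖ ≤ √((n : ℝ) + 1) * ‖v‖ := by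
    have h1 := Real.sum_mul_le_sqrt_mul_sqrt (Finset.range (n + 1)) (fun _ => 1) (fun k => ‖u k‖)
    simp only [one_mul, one_pow, Finset.sum_const, Finset.card_range, nsmul_eq_mul,
      mul_one] at h1
    refine h1.trans ?_
    push_cast
    refine mul_le_mul_of_nonneg_left ?_ (Real.sqrt_nonneg _)
    rw [← Real.sqrt_sq (norm_nonneg v)]
    apply Real.sqrt_le_sqrt
    rw [hu]
    exact hu2
  have hT : ∀ k ≤ n, ‖cfc (fun x => ψ x - ψ (t (k + 1))) T (u k)‖ ≤ L * δ * ‖u k‖ := by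
    intro k hk
    have hLδ : 0 ≤ L * δ := by positivity
    refine (sq_le_sq₀ (norm_nonneg _) (by positivity)).1 ?_
    have hc : ContinuousOn (fun x => P k x * 1) (spectrum ℝ T) := by fun_prop
    have hd : ContinuousOn (fun x => ψ x - ψ (t (k + 1))) (spectrum ℝ T) := by fun_prop
    have hcd : ContinuousOn (fun x => (ψ x - ψ (t (k + 1))) * (P k x * 1)) (spectrum ℝ T) :=
      hd.mul hc
    have hcc : ContinuousOn (fun x => (L * δ) * (P k x * 1)) (spectrum ℝ T) :=
      continuousOn_const.mul hc
    have e1 : L * δ * ‖u k‖ = ‖cfc (fun x => (L * δ) * (P k x * 1)) T v‖ := by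
      rw [op_cmul _ hc, norm_smul, Complex.norm_real, Real.norm_of_nonneg hLδ, hu]
    have e2 : cfc (fun x => ψ x - ψ (t (k + 1))) T (u k) =
        cfc (fun x => (ψ x - ψ (t (k + 1))) * (P k x * 1)) T v := by
      rw [op_mul hd hc, hu]
    rw [e1, e2, op_normsq hcd, op_normsq hcc]
    refine op_mono (hcd.mul hcd) (hcc.mul hcc) (fun x hx => ?_) v
    by_cases hz : P k x = 0
    · simp [hz]
    · have hxk := hPs k hk x (by rw [hβe]; exact hTAB hx) hz
      have hx1 : t k ≤ x := by rw [ht]; exact hxk.1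
      have hx2 : x ≤ t (k + 2) := by rw [ht]; exact hxk.2
      rw [hts (k + 1)] at hx2
      have hx3 := hts k
      have h1 : |x - t (k + 1)| ≤ δ := abs_le.2 ⟨by linarith, by linarith⟩
      have h2 : |ψ x - ψ (t (k + 1))| ≤ L * δ :=
        (hψ _ _).trans (mul_le_mul_of_nonneg_left h1 hL)
      have h3 := sq_le_sq' (abs_le.1 h2).1 (abs_le.1 h2).2
      simp only [Pi.mul_apply, mul_one]
      nlinarith [mul_self_nonneg (P k x)]
  filter_upwards [(Metric.tendsto_nhds.1 hwsum) (ε / 2) (half_pos hε)] with i hi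
  rw [dist_zero_right] at hi
  have hdec : ⟪cfc ψ (H i) v, y⟫_ℂ - ⟪cfc ψ T v, y⟫_ℂ =
      ∑ k ∈ Finset.range (n + 1), ⟪cfc (w k) (H i) (u k), y⟫_ℂ +
      ∑ k ∈ Finset.range (n + 1), (⟪cfc (r k) (H i) (u k), y⟫_ℂ -
        ⟪cfc (fun x => ψ x - ψ (t (k + 1))) T (u k), y⟫_ℂ) := by
    have hv : v = ∑ k ∈ Finset.range (n + 1), u k := by rw [hu]; exact hu1.symm
    conv_lhs => rw [hv]
    rw [map_sum, map_sum, sum_inner, sum_inner, ← Finset.sum_sub_distrib,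
      ← Finset.sum_add_distrib]
    refine Finset.sum_congr rfl fun k _ => ?_
    have e1 : cfc ψ (H i) (u k) = cfc (w k) (H i) (u k) + cfc (r k) (H i) (u k) +
        ((ψ (t (k + 1)) : ℝ) : ℂ) • u k := by
      rw [← op_const (hsa i), ← op_add (hwc k).continuousOn (hrc k).continuousOn,
        ← op_add (a := fun x => w k x + r k x) ((hwc k).add (hrc k)).continuousOn continuousOn_const]
      congr 2
      ext x
      rw [hw]; simp
    have e2 : cfc (fun x => ψ x - ψ (t (k + 1))) T (u k) =
        cfc ψ T (u k) - ((ψ (t (k + 1)) : ℝ) : ℂ) • u k := by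
      rw [op_sub hψc.continuousOn continuousOn_const, op_const hTsa]
    rw [e1, e2, inner_add_left, inner_add_left, inner_sub_left]
    ring
  have hsecond : ‖∑ k ∈ Finset.range (n + 1), (⟪cfc (r k) (H i) (u k), y⟫_ℂ -
        ⟪cfc (fun x => ψ x - ψ (t (k + 1))) T (u k), y⟫_ℂ)‖ < ε / 2 := by
    refine lt_of_le_of_lt ?_ hn
    calc _ ≤ ∑ k ∈ Finset.range (n + 1), 3 * L * δ * ‖y‖ * ‖u k‖ := by
          refine (norm_sum_le _ _).trans (Finset.sum_le_sum fun k hk => ?_)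
          have hk' : k ≤ n := Nat.lt_succ_iff.1 (Finset.mem_range.1 hk)
          have h1 : ‖cfc (r k) (H i) (u k)‖ ≤ 2 * L * δ * ‖u k‖ :=
            op_bound h2L (fun x _ => by rw [hr]; exact (aux_clamp _ _ h2L).1) _
          have h2 := hT k hk'
          refine (norm_sub_le _ _).trans ?_
          have h3 := (norm_inner_le_norm (𝕜 := ℂ) (cfc (r k) (H i) (u k)) y).trans
            (mul_le_mul_of_nonneg_right h1 (norm_nonneg y))
          have h4 := (norm_inner_le_norm (𝕜 := ℂ)
            (cfc (fun x => ψ x - ψ (t (k + 1))) T (u k)) y).trans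
            (mul_le_mul_of_nonneg_right h2 (norm_nonneg y))
          linarith
      _ = 3 * L * δ * ‖y‖ * ∑ k ∈ Finset.range (n + 1), ‖u k‖ := by rw [Finset.mul_sum]
      _ ≤ 3 * L * δ * ‖y‖ * (√((n : ℝ) + 1) * ‖v‖) :=
          mul_le_mul_of_nonneg_left hsumu (by positivity)
      _ ≤ _ := by
          have hs0 : 0 < √((n : ℝ) + 1) := Real.sqrt_pos.2 (by positivity)
          have hss : √((n : ℝ) + 1) * √((n : ℝ) + 1) = (n : ℝ) + 1 :=
            Real.mul_self_sqrt (by positivity)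
          have hδs : δ * √((n : ℝ) + 1) ≤ (B - A) * (√((n : ℝ) + 1))⁻¹ := by
            rw [← div_eq_mul_inv, le_div_iff₀ hs0, mul_assoc, hss, ← sub_nonneg]
            have : B - A = (n + 2) * δ := by rw [← hβe]; push_cast; ring
            rw [this]; nlinarith
          have := mul_le_mul_of_nonneg_left hδs (show 0 ≤ 3 * L * ‖y‖ * ‖v‖ by positivity)
          linarith
  rw [dist_eq_norm, hdec]
  refine (norm_add_le _ _).trans_lt ?_
  linarith
end ops


lemma aux_approx {I : Set ℝ} {φ : ℝ → ℝ} (hφ : ContinuousOn φ I) {A B : ℝ} (hA : A ∈ I)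
    (hB : B ∈ I) (hAB : A < B) (hsub : Set.Icc A B ⊆ I) {ε : ℝ} (hε : 0 < ε) :
    ∃ (ψ : ℝ → ℝ) (L ρ : ℝ), 0 ≤ L ∧ Continuous ψ ∧ (∀ x y, |ψ x - ψ y| ≤ L * |x - y|) ∧
      0 < ρ ∧ (∀ x ∈ Set.Icc A B, |φ x - ψ x| ≤ ε) ∧
      ∀ x ∈ I, A - ρ ≤ x → x ≤ B + ρ → |φ x - ψ x| ≤ 2 * ε := by
  obtain ⟨P, hP⟩ := exists_polynomial_near_of_continuousOn A B φ (hφ.mono hsub) ε hε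
  have hcd : ContDiffOn ℝ 1 (fun x => P.eval x) (Set.Icc A B) := by
    have h := (Polynomial.contDiff_aeval (𝕜 := ℝ) P 1).contDiffOn (s := Set.Icc A B)
    simpa using h
  obtain ⟨K, hK⟩ := hcd.exists_lipschitzOnWith one_ne_zero (convex_Icc A B) isCompact_Icc
  set c : ℝ → ℝ := fun x => max A (min x B) with hc
  have hcm : ∀ x, c x ∈ Set.Icc A B := fun x => ⟨le_max_left _ _, max_le hAB.le (min_le_right _ _)⟩
  have hcid : ∀ x ∈ Set.Icc A B, c x = x := by
    intro x hx
    simp only [hc]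
    rw [min_eq_left hx.2, max_eq_right hx.1]
  have hcl : ∀ x y, |c x - c y| ≤ |x - y| := by
    intro x y
    simp only [hc]
    refine (abs_max_sub_max_le_max A (min x B) A (min y B)).trans ?_
    rw [sub_self, abs_zero, max_eq_right (abs_nonneg _)]
    refine (abs_min_sub_min_le_max x B y B).trans ?_
    rw [sub_self, abs_zero, max_eq_left (abs_nonneg _)]
  have hψc : Continuous (fun x => P.eval (c x)) := by
    refine P.continuous.comp ?_
    exact continuous_const.max (continuous_id.min continuous_const)
  have hnear : ∀ x ∈ Set.Icc A B, |φ x - P.eval (c x)| ≤ ε := by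
    intro x hx
    rw [hcid x hx, abs_sub_comm]
    exact (hP x hx).le
  have hcont : ContinuousOn (fun x => |φ x - P.eval (c x)|) I :=
    (hφ.sub hψc.continuousOn).abs
  have hend : ∀ z ∈ Set.Icc A B, ∃ ρ > 0, ∀ x ∈ I, |x - z| < ρ → |φ x - P.eval (c x)| < 2 * ε := by
    intro z hz
    have h1 := (hcont z (hsub hz)).eventually_lt_const
      (show |φ z - P.eval (c z)| < 2 * ε by linarith [hnear z hz])
    obtain ⟨ρ, hρ, h⟩ := Metric.mem_nhdsWithin_iff.1 h1
    exact ⟨ρ, hρ, fun x hx hxz => h ⟨by simpa [Real.dist_eq] using hxz, hx⟩⟩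
  obtain ⟨ρ1, hρ1, h1⟩ := hend A ⟨le_rfl, hAB.le⟩
  obtain ⟨ρ2, hρ2, h2⟩ := hend B ⟨hAB.le, le_rfl⟩
  have hm : 0 < min ρ1 ρ2 := lt_min hρ1 hρ2
  refine ⟨fun x => P.eval (c x), K, min ρ1 ρ2 / 2, K.2, hψc, ?_, by positivity, hnear, ?_⟩
  · intro x y
    have := hK.dist_le_mul _ (hcm x) _ (hcm y)
    rw [Real.dist_eq, Real.dist_eq] at this
    exact this.trans (mul_le_mul_of_nonneg_left (hcl x y) K.2)
  · intro x hx ha hb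
    have m1 := min_le_left ρ1 ρ2
    have m2 := min_le_right ρ1 ρ2
    rcases lt_or_ge x A with h | h
    · exact (h1 x hx (by rw [abs_lt]; constructor <;> linarith)).le
    rcases lt_or_ge B x with h' | h'
    · exact (h2 x hx (by rw [abs_lt]; constructor <;> linarith)).le
    · linarith [hnear x ⟨h, h'⟩]

lemma aux_hull {I K : Set ℝ} (hK : IsCompact K) (hKI : K ⊆ I) (hI : I.Nontrivial) :
    ∃ A ∈ I, ∃ B ∈ I, A < B ∧ K ⊆ Set.Icc A B := by
  obtain ⟨a, ha, b, hb, hab⟩ := hI.exists_lt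
  have hK' : IsCompact (K ∪ {a, b}) := hK.union (Set.toFinite _).isCompact
  have hsub : K ∪ {a, b} ⊆ I := by
    rintro x (hx | rfl | rfl)
    exacts [hKI hx, ha, hb]
  have hne : (K ∪ {a, b}).Nonempty := ⟨a, by simp⟩
  obtain ⟨A, hA, hA'⟩ := hK'.exists_isLeast hne
  obtain ⟨B, hB, hB'⟩ := hK'.exists_isGreatest hne
  refine ⟨A, hsub hA, B, hsub hB, ?_, fun x hx => ⟨hA' (Or.inl hx), hB' (Or.inl hx)⟩⟩
  have e1 : A ≤ a := hA' (by simp)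
  have e2 : b ≤ B := hB' (by simp)
  linarith

/-- **Remark 2.6(iii), first part.** Under the hypotheses of Theorem 2.1, if
`φ : I → ℝ` is continuous and `φ(x)/max(1, |x|, f(x))` is bounded on `I`, then
`(φ(Hᵢ))` converges weakly to `φ(H)`. -/
theorem stmt_16 {𝓗 : Type*} [NormedAddCommGroup 𝓗] [InnerProductSpace ℂ 𝓗]
    [CompleteSpace 𝓗]
    {ι : Type*} (l : Filter ι) [l.NeBot]
    (I : Set ℝ) (hI : I.OrdConnected)
    (f : ℝ → ℝ) (hf : StrictConvexOn ℝ I f) (hfc : ContinuousOn f I)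
    (H : ι → 𝓗 →L[ℂ] 𝓗) (hsa : ∀ i, IsSelfAdjoint (H i))
    (hspec : ∀ i, spectrum ℝ (H i) ⊆ I)
    (T : 𝓗 →L[ℂ] 𝓗) (hTsa : IsSelfAdjoint T) (hTspec : spectrum ℝ T ⊆ I)
    (hWOT : ∀ v w : 𝓗, Tendsto (fun i => ⟪(H i) v, w⟫_ℂ) l (𝓝 ⟪T v, w⟫_ℂ))
    (hfWOT : ∀ v w : 𝓗,
      Tendsto (fun i => ⟪(cfc f (H i)) v, w⟫_ℂ) l (𝓝 ⟪(cfc f T) v, w⟫_ℂ))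
    (φ : ℝ → ℝ) (hφc : ContinuousOn φ I)
    (hφb : ∃ C : ℝ, ∀ x ∈ I, |φ x / max 1 (max |x| (f x))| ≤ C) :
    ∀ v w : 𝓗, Tendsto (fun i => ⟪(cfc φ (H i)) v, w⟫_ℂ) l (𝓝 ⟪(cfc φ T) v, w⟫_ℂ) := by
  intro v y
  rcases I.subsingleton_or_nontrivial with hs | hn
  · obtain ⟨c, hc⟩ : ∃ c, ∀ x ∈ I, φ x = c := by
      rcases I.eq_empty_or_nonempty with h | ⟨x0, h0⟩
      · exact ⟨0, by simp [h]⟩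
      · exact ⟨φ x0, fun x hx => by rw [hs hx h0]⟩
    have key : ∀ S : 𝓗 →L[ℂ] 𝓗, IsSelfAdjoint S → spectrum ℝ S ⊆ I →
        cfc φ S v = (c : ℂ) • v := by
      intro S hS hSI
      rw [← op_const hS]
      congr 1
      exact cfc_congr fun x hx => hc x (hSI hx)
    rw [key T hTsa hTspec]
    simp only [key _ (hsa _) (hspec _)]
    exact tendsto_const_nhds
  obtain ⟨A, hA, B, hB, hAB, hTAB⟩ := aux_hull (spectrum.isCompact T) hTspec hn
  have hsub : Set.Icc A B ⊆ I := hI.out hA hB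
  obtain ⟨C, hC⟩ := hφb
  rw [Metric.tendsto_nhds]
  intro δ hδ
  set N : ℝ := ‖v‖ * ‖y‖ with hN
  have hN0 : 0 ≤ N := by positivity
  set ε : ℝ := δ / (6 * (N + 1)) with hεd
  have hε : 0 < ε := by positivity
  have hεN : 3 * ε * N ≤ δ / 2 := by
    rw [hεd]
    have : 3 * (δ / (6 * (N + 1))) * N = δ / 2 * (N / (N + 1)) := by field_simp; ring
    rw [this]
    have h2 : N / (N + 1) ≤ 1 := by rw [div_le_one (by positivity)]; linarith
    nlinarith
  obtain ⟨ψ, L, ρ, hL, hψc, hψ, hρ, hn1, hn2⟩ := aux_approx hφc hA hB hAB hsub hε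
  set r : ℝ → ℝ := fun x => max (-(2 * ε)) (min (φ x - ψ x) (2 * ε)) with hr
  set w : ℝ → ℝ := fun x => (φ x - ψ x) - r x with hw
  have hac : ContinuousOn (fun x => φ x - ψ x) I := hφc.sub hψc.continuousOn
  have hrc : ContinuousOn r I :=
    ContinuousOn.sup continuousOn_const (ContinuousOn.inf hac continuousOn_const)
  have hwc : ContinuousOn w I := hac.sub hrc
  have hcl := fun x => aux_clamp (2 * ε) (φ x - ψ x) (by positivity)
  have hgrow : ∀ x ∈ I, |w x| ≤ (|C| + |ψ A| + L * (1 + |A|)) * max 1 (max |x| (f x)) := by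
    intro x hx
    set M := max 1 (max |x| (f x)) with hM
    have M1 : 1 ≤ M := le_max_left _ _
    have M2 : |x| ≤ M := (le_max_left _ _).trans (le_max_right _ _)
    have hφM : |φ x| ≤ |C| * M := by
      have h := (hC x hx).trans (le_abs_self C)
      rw [abs_div, abs_of_pos (by linarith : (0 : ℝ) < M), div_le_iff₀ (by linarith)] at h
      exact h
    have hψx : |ψ x| ≤ |ψ A| + L * (|x| + |A|) := by
      have h1 := hψ x A
      have h2 : |x - A| ≤ |x| + |A| := abs_sub _ _
      have h3 : |ψ x| - |ψ A| ≤ |ψ x - ψ A| := abs_sub_abs_le_abs_sub _ _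
      have := mul_le_mul_of_nonneg_left h2 hL
      linarith
    have h4 : |w x| ≤ |φ x - ψ x| := (hcl x).2.1
    have h5 : |φ x - ψ x| ≤ |φ x| + |ψ x| := abs_sub _ _
    have h6 : |ψ A| ≤ |ψ A| * M := le_mul_of_one_le_right (abs_nonneg _) M1
    have h7 : L * (|x| + |A|) ≤ L * ((1 + |A|) * M) := by
      refine mul_le_mul_of_nonneg_left ?_ hL
      nlinarith [abs_nonneg A]
    nlinarith
  have hwz : ∀ x ∈ I, A - ρ ≤ x → x ≤ B + ρ → w x = 0 := fun x hx h1 h2 =>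
    (hcl x).2.2 (hn2 x hx h1 h2)
  have hsep := op_sep hf hfc hsa hspec hTsa hTspec hWOT hfWOT hA hB hAB hwc
    (by positivity) hρ hgrow hwz (p := fun _ => 1) continuousOn_const
    (fun x hx hx' => absurd (hTAB hx) hx') v y
  have hlip := op_lip hf hfc hsa hspec hTsa hTspec hWOT hfWOT hA hB hAB hTAB hL hψc hψ v y
  have h1v : cfc (fun _ : ℝ => (1 : ℝ)) T v = v := by
    rw [op_const hTsa]; simp
  rw [h1v] at hsep
  have hsum := hlip.add hsep
  rw [add_zero, Metric.tendsto_nhds] at hsum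
  filter_upwards [hsum (δ / 2) (by positivity)] with i hi
  have d1 : cfc φ (H i) v = cfc ψ (H i) v + cfc w (H i) v + cfc r (H i) v := by
    have c1 := hφc.mono (hspec i)
    have c2 := hψc.continuousOn (s := spectrum ℝ (H i))
    have c3 := hac.mono (hspec i)
    have c4 := hrc.mono (hspec i)
    have e1 : cfc w (H i) v = cfc (fun x => φ x - ψ x) (H i) v - cfc r (H i) v :=
      op_sub c3 c4 v
    rw [e1, op_sub c1 c2 v]
    abel
  have d2 : cfc φ T v = cfc ψ T v + cfc (fun x => φ x - ψ x) T v := by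
    rw [op_sub (hφc.mono hTspec) hψc.continuousOn v]
    abel
  have b1 : ‖⟪cfc r (H i) v, y⟫_ℂ‖ ≤ 2 * ε * N := by
    have := op_bound (a := r) (S := H i) (c := 2 * ε) (by positivity) (fun t _ => (hcl t).1) v
    calc _ ≤ ‖cfc r (H i) v‖ * ‖y‖ := norm_inner_le_norm _ _
      _ ≤ (2 * ε * ‖v‖) * ‖y‖ := by gcongr
      _ = _ := by rw [hN]; ring
  have b2 : ‖⟪cfc (fun x => φ x - ψ x) T v, y⟫_ℂ‖ ≤ ε * N := by
    have := op_bound (a := fun x => φ x - ψ x) (S := T) (c := ε) hε.le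
      (fun t ht => hn1 t (hTAB ht)) v
    calc _ ≤ ‖cfc (fun x => φ x - ψ x) T v‖ * ‖y‖ := norm_inner_le_norm _ _
      _ ≤ (ε * ‖v‖) * ‖y‖ := by gcongr
      _ = _ := by rw [hN]; ring
  rw [dist_eq_norm] at hi ⊢
  rw [d1, d2, inner_add_left, inner_add_left, inner_add_left]
  generalize ⟪cfc ψ (H i) v, y⟫_ℂ = z1 at *
  generalize ⟪cfc w (H i) v, y⟫_ℂ = z2 at *
  generalize ⟪cfc r (H i) v, y⟫_ℂ = z3 at *
  generalize ⟪cfc ψ T v, y⟫_ℂ = z4 at *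
  generalize ⟪cfc (fun x => φ x - ψ x) T v, y⟫_ℂ = z5 at *
  have e : z1 + z2 + z3 - (z4 + z5) = (z1 + z2 - z4) + (z3 - z5) := by ring
  rw [e]
  have t1 := norm_add_le (z1 + z2 - z4) (z3 - z5)
  have t2 := norm_sub_le z3 z5
  linarith
end

section
/- Let I ⊆ ℝ be an interval, let f : I → ℝ be a strictly convex continuous function, let 𝓗 be a complex Hilbert space, and let (Hᵢ)_{i∈ι} be a net of self-adjoint bounded operators on 𝓗 with σ(Hᵢ) ⊆ I for all i, such that (Hᵢ) converges in the weak operator topology to a self-adjoint bounded operator H with σ(H) ⊆ I and (f(Hᵢ)) converges in the weak operator topology to f(H). Assume further that if I is unbounded on the right, then f(x) > 0 for all sufficiently large x and x² = O(f(x)) as x → +∞, and if I is unbounded on the left, then f(x) > 0 for all sufficiently small x and x² = O(f(x)) as x → −∞. Then (Hᵢ) converges in the strong operator topology to H. -/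
set_option synthInstance.maxHeartbeats 400000
set_option maxHeartbeats 800000

open scoped InnerProductSpace
open Filter Topology

theorem aux_normsq {𝓗 : Type*} [NormedAddCommGroup 𝓗] [InnerProductSpace ℂ 𝓗]
    [CompleteSpace 𝓗] (A : 𝓗 →L[ℂ] 𝓗) (_hA : IsSelfAdjoint A) (u : ℝ → ℝ)
    (hu : ContinuousOn u (spectrum ℝ A)) (w : 𝓗) :
    ‖cfc u A w‖ ^ 2 = (⟪cfc (fun x => u x * u x) A w, w⟫_ℂ).re := by
  have h1 : cfc (fun x => u x * u x) A = cfc u A * cfc u A := cfc_mul u u A hu hu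
  have h2 : IsSelfAdjoint (cfc u A) := cfc_predicate u A
  have h3 := h2.isSymmetric (cfc u A w) w
  rw [h1]
  have h4 : ⟪(cfc u A * cfc u A) w, w⟫_ℂ = ⟪cfc u A w, cfc u A w⟫_ℂ := h3
  rw [h4, inner_self_eq_norm_sq_to_K]
  norm_cast

theorem aux_mono_s17 {𝓗 : Type*} [NormedAddCommGroup 𝓗] [InnerProductSpace ℂ 𝓗]
    [CompleteSpace 𝓗] (A : 𝓗 →L[ℂ] 𝓗) (g h : ℝ → ℝ)
    (hg : ContinuousOn g (spectrum ℝ A)) (hh : ContinuousOn h (spectrum ℝ A))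
    (hgh : ∀ x ∈ spectrum ℝ A, g x ≤ h x) (w : 𝓗) :
    (⟪cfc g A w, w⟫_ℂ).re ≤ (⟪cfc h A w, w⟫_ℂ).re := by
  have h1 : cfc g A ≤ cfc h A := cfc_mono hgh hg hh
  rw [ContinuousLinearMap.le_def] at h1
  have h2 := h1.re_inner_nonneg_left w
  simp only [sub_apply, inner_sub_left, map_sub] at h2
  simpa using h2

theorem aux_affine {𝓗 : Type*} [NormedAddCommGroup 𝓗] [InnerProductSpace ℂ 𝓗]
    [CompleteSpace 𝓗] (A : 𝓗 →L[ℂ] 𝓗) (hA : IsSelfAdjoint A) (f : ℝ → ℝ)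
    (hf : ContinuousOn f (spectrum ℝ A)) (c0 c1 d : ℝ) (w : 𝓗) :
    (⟪cfc (fun x => f x - (c0 + c1 * x) + d) A w, w⟫_ℂ).re =
      (⟪cfc f A w, w⟫_ℂ).re - c1 * (⟪A w, w⟫_ℂ).re + (d - c0) * ‖w‖ ^ 2 := by
  have h1 : cfc (fun x => f x - (c0 + c1 * x) + d) A
      = cfc f A - c1 • A + (d - c0) • (1 : 𝓗 →L[ℂ] 𝓗) := by
    have : (fun x => f x - (c0 + c1 * x) + d) = fun x => (f x - c1 * x) + (d - c0) := by
      ext x; ring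
    rw [this, cfc_add (a := A) (fun x => f x - c1 * x) (fun _ => d - c0) (by fun_prop) (by fun_prop),
      cfc_sub (a := A) f (fun x => c1 * x) hf (by fun_prop), cfc_const_mul_id c1 A hA, cfc_const _ A hA,
      Algebra.algebraMap_eq_smul_one]
  rw [h1]
  have e1 : ⟪(c1 • A) w, w⟫_ℂ = (c1 : ℂ) * ⟪A w, w⟫_ℂ := by
    rw [smul_apply, inner_smul_left_eq_smul]; simp
  have e2 : ⟪((d - c0) • (1 : 𝓗 →L[ℂ] 𝓗)) w, w⟫_ℂ = ((d - c0 : ℝ) : ℂ) * ⟪w, w⟫_ℂ := by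
    rw [smul_apply, inner_smul_left_eq_smul]; simp
  rw [add_apply, sub_apply, inner_add_left,
    inner_sub_left, e1, e2, inner_self_eq_norm_sq_to_K]
  simp only [Complex.add_re, Complex.sub_re, Complex.re_ofReal_mul]
  norm_cast

theorem aux_sandwich {𝓗 : Type*} [NormedAddCommGroup 𝓗] [InnerProductSpace ℂ 𝓗]
    [CompleteSpace 𝓗] (A : 𝓗 →L[ℂ] 𝓗) (hA : IsSelfAdjoint A) (F ψ : ℝ → ℝ) (d : ℝ)
    (hF : ContinuousOn F (spectrum ℝ A)) (hψ : ContinuousOn ψ (spectrum ℝ A))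
    (hle : ∀ x ∈ spectrum ℝ A, F x * ψ x ^ 2 ≤ d * ψ x ^ 2) (v : 𝓗) :
    (⟪cfc F A (cfc ψ A v), cfc ψ A v⟫_ℂ).re ≤ d * ‖cfc ψ A v‖ ^ 2 := by
  have h2 : IsSelfAdjoint (cfc ψ A) := cfc_predicate ψ A
  have h3 := h2.isSymmetric (cfc F A (cfc ψ A v)) v
  have h4 : cfc (fun x => ψ x * (F x * ψ x)) A = cfc ψ A * (cfc F A * cfc ψ A) := by
    rw [cfc_mul (a := A) ψ (fun x => F x * ψ x) hψ (hF.mul hψ), cfc_mul (a := A) F ψ hF hψ]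
  have h5 : ⟪cfc F A (cfc ψ A v), cfc ψ A v⟫_ℂ = ⟪cfc (fun x => ψ x * (F x * ψ x)) A v, v⟫_ℂ := by
    rw [h4]; exact h3.symm
  rw [h5]
  have h6 := aux_mono_s17 A (fun x => ψ x * (F x * ψ x)) (fun x => d * (ψ x * ψ x))
    (hψ.mul (hF.mul hψ)) (by fun_prop) (fun x hx => by have := hle x hx; nlinarith) v
  rw [aux_normsq A hA ψ hψ v]
  refine h6.trans (le_of_eq ?_)
  rw [cfc_const_mul (a := A) d (fun x => ψ x * ψ x) (hψ.mul hψ),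
    smul_apply, inner_smul_left_eq_smul]
  simp

/-- Norm comparison. -/
theorem aux_normle {𝓗 : Type*} [NormedAddCommGroup 𝓗] [InnerProductSpace ℂ 𝓗]
    [CompleteSpace 𝓗] (A : 𝓗 →L[ℂ] 𝓗) (hA : IsSelfAdjoint A) (u : ℝ → ℝ) (g : ℝ → ℝ)
    (hu : ContinuousOn u (spectrum ℝ A)) (hg : ContinuousOn g (spectrum ℝ A))
    (hle : ∀ x ∈ spectrum ℝ A, u x ^ 2 ≤ g x) (w : 𝓗) :
    ‖cfc u A w‖ ^ 2 ≤ (⟪cfc g A w, w⟫_ℂ).re := by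
  rw [aux_normsq A hA u hu]
  exact aux_mono_s17 A (fun x => u x * u x) _ (hu.mul hu) hg (fun x hx => by have := hle x hx; nlinarith) w

theorem aux_normle' {𝓗 : Type*} [NormedAddCommGroup 𝓗] [InnerProductSpace ℂ 𝓗]
    [CompleteSpace 𝓗] (A : 𝓗 →L[ℂ] 𝓗) (hA : IsSelfAdjoint A) (u h : ℝ → ℝ) (K : ℝ) (hK : 0 ≤ K)
    (hu : ContinuousOn u (spectrum ℝ A)) (hg : ContinuousOn h (spectrum ℝ A))
    (hle : ∀ x ∈ spectrum ℝ A, |u x| ≤ K * |h x|) (w : 𝓗) :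
    ‖cfc u A w‖ ≤ K * ‖cfc h A w‖ := by
  have h1 := aux_normle A hA u (fun x => (K * h x) * (K * h x)) hu (by fun_prop) (fun x hx => by
    have := hle x hx
    have h2 : u x ^ 2 ≤ (K * |h x|) ^ 2 := by
      rw [← sq_abs (u x)]; gcongr
    rw [mul_pow, sq_abs] at h2
    nlinarith) w
  rw [← aux_normsq A hA (fun x => K * h x) (by fun_prop), cfc_const_mul (a := A) K h hg] at h1
  have h2 := abs_le_of_sq_le_sq' h1 (by positivity)
  have h3 := h2.2
  rwa [smul_apply, norm_smul, Real.norm_of_nonneg hK] at h3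

theorem chord_facts (f : ℝ → ℝ) (I : Set ℝ) (hf : ConvexOn ℝ I f) (b e : ℝ) (hb : b ∈ I)
    (he : e ∈ I) (hbe : b < e) :
    (∀ x ∈ Set.Icc b e, f x ≤ f b + (f e - f b) / (e - b) * (x - b)) ∧
    (∀ x ∈ I, e ≤ x → f b + (f e - f b) / (e - b) * (x - b) ≤ f x) ∧
    (∀ x ∈ I, x ≤ b → f b + (f e - f b) / (e - b) * (x - b) ≤ f x) := by
  have hconv := hf.1.ordConnected
  refine ⟨?_, ?_, ?_⟩
  · rintro x ⟨h1, h2⟩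
    rcases h1.eq_or_lt with rfl | h1
    · simp
    have h := hf.secant_mono hb (hconv.out hb he ⟨h1.le, h2⟩) he h1.ne' hbe.ne' h2
    rw [div_le_iff₀ (by linarith)] at h
    linarith
  · intro x hx h2
    have h := hf.secant_mono hb he hx hbe.ne' (hbe.trans_le h2).ne' h2
    rw [le_div_iff₀ (by linarith)] at h
    linarith
  · intro x hx h2
    rcases h2.eq_or_lt with rfl | h2
    · simp
    have h := hf.secant_mono hb hx he h2.ne hbe.ne' (h2.trans hbe).le
    rw [div_le_iff_of_neg (by linarith)] at h
    linarith

theorem slope_facts (f : ℝ → ℝ) (I : Set ℝ) (hf : ConvexOn ℝ I f) (b e p p' : ℝ) (hb : b ∈ I)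
    (he : e ∈ I) (hbe : b < e) (hp : p ∈ I) (hp' : p' ∈ I) (hep : e ≤ p) (hpp : p < p') (x : ℝ)
    (hx : p ≤ x) :
    f b + (f e - f b) / (e - b) * (x - b) ≤ f p + (f p' - f p) / (p' - p) * (x - p) := by
  have h1 := (chord_facts f I hf b e hb he hbe).2.1 p hp hep
  have h2 := hf.secant_mono hb he hp' hbe.ne' (by linarith) (by linarith : e ≤ p')
  have h3 := hf.secant_mono hp' hb hp (by linarith) (by linarith) (by linarith : b ≤ p)
  have h4 : (f e - f b) / (e - b) ≤ (f p' - f p) / (p' - p) := by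
    refine h2.trans ?_
    rw [← neg_sub (f b), ← neg_sub b, neg_div_neg_eq, ← neg_sub (f p), ← neg_sub p, neg_div_neg_eq]
    exact h3
  nlinarith [mul_le_mul_of_nonneg_right h4 (sub_nonneg.2 hx)]

theorem depth_mid (f : ℝ → ℝ) (I : Set ℝ) (hf : ConvexOn ℝ I f) (z b e η : ℝ) (hz : z ∈ I)
    (hb : b ∈ I) (he : e ∈ I) (hη : 0 < η) (h1 : b = z + η) (h2 : e = b + 2 * η) (x : ℝ)
    (hx : x ∈ Set.Icc b e) :
    f b + (f e - f b) / (e - b) * (x - b) - f x ≤ (f e - f b) - 2 * (f b - f z) := by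
  have hxI := hf.1.ordConnected.out hb he hx
  have hbz := (chord_facts f I hf z b hz hb (by linarith)).2.1 x hxI hx.1
  have hbz' := (chord_facts f I hf z b hz hb (by linarith)).2.1 e he (by linarith)
  have e1 : b - z = η := by linarith
  have e2 : e - b = 2 * η := by linarith
  have e3 : e - z = 3 * η := by linarith
  rw [e1] at hbz hbz'
  rw [e2]
  rw [e3] at hbz'
  obtain ⟨t, ht⟩ : ∃ t, x - b = t * η := ⟨(x - b) / η, by field_simp⟩
  have ht0 : 0 ≤ t := by
    have := hx.1
    by_contra h; push Not at h; nlinarith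
  have ht2 : t ≤ 2 := by
    have := hx.2
    by_contra h; push Not at h; nlinarith
  have e4 : x - z = (t + 1) * η := by linarith
  rw [ht]
  rw [e4] at hbz
  have k1 : (f b - f z) / η * ((t + 1) * η) = (f b - f z) * (t + 1) := by field_simp
  have k2 : (f b - f z) / η * (3 * η) = (f b - f z) * 3 := by field_simp
  have k3 : (f e - f b) / (2 * η) * (t * η) = (f e - f b) * t / 2 := by field_simp
  rw [k1] at hbz
  rw [k2] at hbz'
  rw [k3]
  nlinarith

theorem depth_end (f : ℝ → ℝ) (b e ε : ℝ) (hbe : b < e) (x : ℝ) (hx : x ∈ Set.Icc b e)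
    (h1 : |f b - f x| ≤ ε) (h2 : |f e - f x| ≤ ε) :
    f b + (f e - f b) / (e - b) * (x - b) - f x ≤ ε := by
  obtain ⟨t, ht⟩ : ∃ t, x - b = t * (e - b) := ⟨(x - b) / (e - b), by
    have : e - b ≠ 0 := by linarith
    field_simp⟩
  have ht0 : 0 ≤ t := by
    have := hx.1
    by_contra h; push Not at h; nlinarith
  have ht2 : t ≤ 1 := by
    have := hx.2
    by_contra h; push Not at h; nlinarith
  rw [ht]
  have k : (f e - f b) / (e - b) * (t * (e - b)) = (f e - f b) * t := by
    have : e - b ≠ 0 := by linarith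
    field_simp
  rw [k]
  have := (abs_le.1 h1).2
  have := (abs_le.1 h2).2
  nlinarith

theorem real_part (f : ℝ → ℝ) (I : Set ℝ) (hf : ConvexOn ℝ I f) (hfc : ContinuousOn f I)
    (α p p' : ℝ) (hα : α ∈ I) (hp' : p' ∈ I) (hαp : α < p) (hpp : p < p') (ε : ℝ) (hε : 0 < ε) :
    ∃ (N : ℕ) (φ : ℕ → ℝ → ℝ) (c0 c1 d : ℕ → ℝ),
      (∀ k, Continuous (φ k)) ∧ (∀ k x, 0 ≤ φ k x) ∧
      (∀ x ∈ Set.Icc α p, ∑ k ∈ Finset.range N, φ k x = 1) ∧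
      (∀ k < N, 0 ≤ d k) ∧ (∑ k ∈ Finset.range N, d k ≤ ε) ∧
      (∀ k < N, ∀ x ∈ Set.Icc α p, (f x - (c0 k + c1 k * x)) * φ k x ≤ 0) ∧
      (∀ k < N, ∀ x ∈ I,
        f (max x p') - (f p + (f p' - f p) / (p' - p) * (max x p' - p))
          ≤ f x - (c0 k + c1 k * x) + d k) := by
  have hoc := hf.1.ordConnected
  have hsub : Set.Icc α p ⊆ I := fun x hx => hoc.out hα hp' ⟨hx.1, hx.2.trans hpp.le⟩
  have hpI : p ∈ I := hsub ⟨hαp.le, le_rfl⟩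
  obtain ⟨δ, hδ, hδf⟩ := Metric.uniformContinuousOn_iff.1
    (isCompact_Icc.uniformContinuousOn_of_continuous (hfc.mono hsub)) (ε / 9) (by positivity)
  obtain ⟨M, hM⟩ := exists_nat_gt (2 * (p - α) / δ)
  -- number of intervals is M + 2
  have hM2 : (0 : ℝ) < (M : ℝ) + 2 := by positivity
  set η : ℝ := (p - α) / (M + 2) with hη
  have hη0 : 0 < η := div_pos (by linarith) hM2
  have hη2 : 2 * η < δ := by
    rw [div_lt_iff₀ hδ] at hM
    rw [hη, ← mul_div_assoc, div_lt_iff₀ hM2]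
    nlinarith
  have hηN : η * (M + 2) = p - α := by rw [hη]; field_simp
  set a : ℕ → ℝ := fun k => α + k * η with ha
  have haI : ∀ k, k ≤ M + 2 → a k ∈ Set.Icc α p := by
    intro k hk
    have hk' : (k : ℝ) ≤ M + 2 := by exact_mod_cast hk
    have hk0 : (0 : ℝ) ≤ k := by positivity
    constructor
    · simp only [ha]; nlinarith
    · simp only [ha]; nlinarith
  have hosc : ∀ x ∈ Set.Icc α p, ∀ y ∈ Set.Icc α p, |x - y| ≤ 2 * η → |f x - f y| ≤ ε / 9 := by
    intro x hx y hy hxy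
    have := hδf x hx y hy (by rw [Real.dist_eq]; linarith)
    rw [Real.dist_eq] at this
    exact this.le
  set χ : ℕ → ℝ → ℝ := fun k x => max 0 (min 1 ((x - α) / η - k + 1)) with hχ
  set b : ℕ → ℝ := fun k => a (k - 1) with hb
  set e : ℕ → ℝ := fun k => a (min (k + 1) (M + 2)) with he
  set u : ℕ → ℝ := fun k => f (a (k + 1)) - f (a k) with hu
  set d : ℕ → ℝ := fun k => if 2 ≤ k ∧ k < M + 2 then
    (u k + u (k - 1)) - 2 * u (k - 2) else ε / 9 with hd
  have hamono : ∀ i j : ℕ, i < j → a i < a j := by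
    intro i j hij
    have : (i : ℝ) < j := by exact_mod_cast hij
    simp only [ha]; nlinarith
  have hbe : ∀ k < M + 3, b k < e k := by
    intro k hk
    apply hamono
    omega
  have hbm : ∀ k < M + 3, b k ∈ Set.Icc α p := fun k hk => haI _ (by omega)
  have hem : ∀ k < M + 3, e k ∈ Set.Icc α p := fun k hk => haI _ (by omega)
  have hu9 : ∀ k, k < M + 2 → |u k| ≤ ε / 9 := by
    intro k hk
    apply hosc _ (haI _ (by omega)) _ (haI _ (by omega))
    simp only [ha]
    push_cast
    rw [abs_le]; constructor <;> nlinarith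
  have hdepth : ∀ k < M + 3, ∀ x ∈ Set.Icc (b k) (e k),
      f (b k) + (f (e k) - f (b k)) / (e k - b k) * (x - b k) - f x ≤ d k := by
    intro k hk x hx
    have hlen : e k - b k ≤ 2 * η := by
      have h1 : min (k + 1) (M + 2) ≤ (k - 1) + 2 := by omega
      have h2 : ((min (k + 1) (M + 2) : ℕ) : ℝ) ≤ ((k - 1 : ℕ) : ℝ) + 2 := by exact_mod_cast h1
      simp only [hb, he, ha]
      nlinarith
    by_cases hk2 : 2 ≤ k ∧ k < M + 2
    · obtain ⟨j, rfl⟩ : ∃ j, k = j + 2 := ⟨k - 2, by omega⟩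
      have e1 : b (j + 2) = a (j + 1) := rfl
      have e2 : e (j + 2) = a (j + 3) := by
        simp only [he]; congr 1; omega
      have e3 : d (j + 2) = (f (a (j + 3)) - f (a (j + 1))) - 2 * (f (a (j + 1)) - f (a j)) := by
        simp only [hd, if_pos hk2, hu]
        simp only [Nat.add_sub_cancel, show j + 2 - 1 = j + 1 by omega]
        ring
      rw [e1, e2] at hx ⊢
      rw [e3]
      refine depth_mid f I hf (a j) (a (j + 1)) (a (j + 3)) η (hsub (haI _ (by omega)))
        (hsub (haI _ (by omega))) (hsub (haI _ (by omega))) hη0 ?_ ?_ x hx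
      · simp only [ha]; push_cast; ring
      · simp only [ha]; push_cast; ring
    · have e3 : d k = ε / 9 := by simp only [hd, if_neg hk2]
      rw [e3]
      have hxm : x ∈ Set.Icc α p := ⟨(hbm k hk).1.trans hx.1, hx.2.trans (hem k hk).2⟩
      refine depth_end f (b k) (e k) _ (hbe k hk) x hx ?_ ?_
      · apply hosc _ (hbm k hk) _ hxm
        rw [abs_le]; constructor <;> linarith [hx.1, hx.2]
      · apply hosc _ (hem k hk) _ hxm
        rw [abs_le]; constructor <;> linarith [hx.1, hx.2]
  have hd0 : ∀ k < M + 3, 0 ≤ d k := by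
    intro k hk
    have := hdepth k hk (b k) ⟨le_rfl, (hbe k hk).le⟩
    simpa using this
  refine ⟨M + 3, fun k x => χ k x - χ (k + 1) x,
    fun k => f (b k) - (f (e k) - f (b k)) / (e k - b k) * b k,
    fun k => (f (e k) - f (b k)) / (e k - b k), d, ?_, ?_, ?_, hd0, ?_, ?_, ?_⟩
  · intro k
    simp only [hχ]
    fun_prop
  · intro k x
    simp only [hχ, sub_nonneg]
    push_cast
    gcongr
    linarith
  · intro x hx
    rw [Finset.sum_range_sub']
    have h1 : χ 0 x = 1 := by
      have : 0 ≤ (x - α) / η := div_nonneg (by linarith [hx.1]) hη0.le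
      simp only [hχ, Nat.cast_zero]
      rw [min_eq_left (by linarith), max_eq_right zero_le_one]
    have h2 : χ (M + 3) x = 0 := by
      have : (x - α) / η ≤ M + 2 := by
        rw [div_le_iff₀ hη0]; linarith [hx.2]
      simp only [hχ]
      push_cast
      rw [min_eq_right (by linarith), max_eq_left (by linarith)]
    rw [h1, h2]; ring
  · have htel : ∀ m : ℕ, ∑ j ∈ Finset.range m, ((u (j + 2) + u (j + 1)) - 2 * u j)
        = u (m + 1) + 2 * u m - 2 * u 0 - u 1 := by
      intro m
      induction m with
      | zero => simp
      | succ m ih => rw [Finset.sum_range_succ, ih]; ring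
    have h3 : ∑ k ∈ Finset.range (M + 3), d k =
        ∑ j ∈ Finset.range M, ((u (j + 2) + u (j + 1)) - 2 * u j) + 3 * (ε / 9) := by
      rw [Finset.sum_range_succ, Finset.sum_range_succ', Finset.sum_range_succ']
      have hd1 : d 0 = ε / 9 := by simp [hd]
      have hd2 : d 1 = ε / 9 := by simp [hd]
      have hd3 : d (M + 2) = ε / 9 := by simp [hd]
      have : ∀ j ∈ Finset.range M, d (j + 1 + 1) = (u (j + 2) + u (j + 1)) - 2 * u j := by
        intro j hj
        have hj := Finset.mem_range.1 hj
        simp only [hd]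
        rw [if_pos (by omega)]
        rfl
      rw [Finset.sum_congr rfl this, hd3]
      simp only [zero_add, hd1, hd2]
      ring
    rw [h3, htel]
    have h4 := abs_le.1 (hu9 (M + 1) (by omega))
    have h5 := abs_le.1 (hu9 M (by omega))
    have h6 := abs_le.1 (hu9 0 (by omega))
    have h7 := abs_le.1 (hu9 1 (by omega))
    linarith [h4.2, h5.2, h6.1, h7.1]
  · intro k hk x hx
    by_cases hxk : x ∈ Set.Icc (b k) (e k)
    · have h1 := (chord_facts f I hf (b k) (e k) (hsub (hbm k hk)) (hsub (hem k hk))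
        (hbe k hk)).1 x hxk
      have h2 : 0 ≤ χ k x - χ (k + 1) x := by
        simp only [hχ, sub_nonneg]
        push_cast
        gcongr
        linarith
      apply mul_nonpos_of_nonpos_of_nonneg _ h2
      linarith
    · have h2 : χ k x - χ (k + 1) x = 0 := by
        have hy : (x - α) = (x - α) / η * η := by field_simp
        rw [Set.mem_Icc, not_and_or, not_le, not_le] at hxk
        rcases hxk with hxk | hxk
        · simp only [hb, ha] at hxk
          rcases Nat.eq_zero_or_pos k with rfl | hk0
          · simp at hxk; linarith [hx.1]
          have h3 : ((k - 1 : ℕ) : ℝ) = k - 1 := by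
            rw [Nat.cast_sub hk0]; simp
          rw [h3] at hxk
          have h4 : (x - α) / η < k - 1 := by
            rw [div_lt_iff₀ hη0]; linarith
          simp only [hχ]
          push_cast
          rw [min_eq_right (by linarith), min_eq_right (by linarith), max_eq_left (by linarith),
            max_eq_left (by linarith)]
          ring
        · simp only [he, ha] at hxk
          rcases le_or_gt (k + 1) (M + 2) with hk0 | hk0
          · rw [min_eq_left hk0] at hxk
            push_cast at hxk
            have h4 : (k : ℝ) + 1 < (x - α) / η := by
              rw [lt_div_iff₀ hη0]; linarith
            simp only [hχ]
            push_cast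
            rw [min_eq_left (by linarith), min_eq_left (by linarith)]
            ring
          · rw [min_eq_right hk0.le] at hxk
            push_cast at hxk
            linarith [hx.2]
      simp only [h2, mul_zero, le_refl]
  · intro k hk x hx
    have hbI := hsub (hbm k hk)
    have heI := hsub (hem k hk)
    have hcf := chord_facts f I hf (b k) (e k) hbI heI (hbe k hk)
    have hdk := hd0 k hk
    rcases le_total p' x with hxp | hxp
    · rw [max_eq_left hxp]
      have := slope_facts f I hf (b k) (e k) p p' hbI heI (hbe k hk) hpI hp' (hem k hk).2 hpp x
        (hpp.le.trans hxp)
      linarith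
    · rw [max_eq_right hxp]
      have h0 : f p' - (f p + (f p' - f p) / (p' - p) * (p' - p)) = 0 := by
        rw [div_mul_cancel₀ _ (by linarith)]; ring
      rw [h0]
      rcases le_total x (b k) with h1 | h1
      · have := hcf.2.2 x hx h1
        linarith
      rcases le_total (e k) x with h2 | h2
      · have := hcf.2.1 x hx h2
        linarith
      have := hdepth k hk x ⟨h1, h2⟩
      linarith

theorem real_growth (f : ℝ → ℝ) (I : Set ℝ) (hf : StrictConvexOn ℝ I f)
    (p p' q : ℝ) (hp : p ∈ I) (hp' : p' ∈ I) (hq : q ∈ I) (hpp : p < p') (hpq : p' < q)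
    (hright : ¬ BddAbove I →
      (∃ C : ℝ, 0 < C ∧ ∃ R : ℝ, ∀ x ∈ I, R < x → x ^ 2 ≤ C * f x)) :
    ∃ K : ℝ, 0 ≤ K ∧ ∀ x ∈ I, (max (x - q) 0) ^ 2 ≤ K *
      (f (max x p') - (f p + (f p' - f p) / (p' - p) * (max x p' - p))) := by
  set s := (f p' - f p) / (p' - p) with hs
  have hcf := chord_facts f I hf.convexOn p p' hp hp' hpp
  have hm0 : 0 < f q - (f p + s * (q - p)) := by
    have h := hf.secant_strict_mono hp hp' hq hpp.ne' (hpp.trans hpq).ne' hpq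
    rw [lt_div_iff₀ (by linarith)] at h
    linarith
  set m := f q - (f p + s * (q - p)) with hm
  have hmx : ∀ x ∈ I, q ≤ x → m ≤ f x - (f p + s * (x - p)) := by
    intro x hx hqx
    have h := (chord_facts f I hf.convexOn p' q hp' hq hpq).2.1 x hx hqx
    have h2 : s < (f q - f p') / (q - p') := by
      rw [lt_div_iff₀ (by linarith)]
      have h0 : s * (p' - p) = f p' - f p := by rw [hs, div_mul_cancel₀ _ (by linarith)]
      nlinarith
    have h3 : (f q - f p') / (q - p') * (q - p') = f q - f p' := by
      rw [div_mul_cancel₀ _ (by linarith)]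
    nlinarith [mul_nonneg (sub_nonneg.2 h2.le) (sub_nonneg.2 hqx)]
  -- it suffices to bound for q ≤ x by K1 * (f - L) + D
  suffices h : ∃ K1 D : ℝ, 0 ≤ K1 ∧ 0 ≤ D ∧ ∀ x ∈ I, q ≤ x →
      (x - q) ^ 2 ≤ K1 * (f x - (f p + s * (x - p))) + D by
    obtain ⟨K1, D, hK1, hD, hb⟩ := h
    refine ⟨K1 + D / m, by positivity, ?_⟩
    intro x hx
    rcases le_total q x with hqx | hqx
    · rw [max_eq_left (by linarith), max_eq_left (by linarith)]
      have h1 := hb x hx hqx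
      have h2 := hmx x hx hqx
      have h3 : D ≤ D / m * (f x - (f p + s * (x - p))) := by
        calc D = D / m * m := by field_simp
          _ ≤ _ := by gcongr
      linarith
    · rw [max_eq_right (by linarith)]
      have : 0 ≤ f (max x p') - (f p + s * (max x p' - p)) := by
        rcases le_total p' x with h | h
        · rw [max_eq_left h]; linarith [hcf.2.1 x hx h]
        · rw [max_eq_right h]; linarith [hcf.2.1 p' hp' le_rfl]
      have h2 : 0 ≤ K1 + D / m := by positivity
      simpa using mul_nonneg h2 this
  by_cases hB : BddAbove I
  · obtain ⟨B, hB⟩ := hB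
    refine ⟨0, (B - q) ^ 2, le_rfl, sq_nonneg _, ?_⟩
    intro x hx hqx
    have := hB hx
    nlinarith
  · obtain ⟨C, hC, R, hR⟩ := hright hB
    refine ⟨2 * C, (R - q) ^ 2 + ((q - C * s) ^ 2 + 2 * C * |f p - s * p| + q ^ 2), by positivity,
      by positivity, ?_⟩
    intro x hx hqx
    rcases le_or_gt x R with hxR | hxR
    · have h2 := hmx x hx hqx
      have h3 : 0 ≤ 2 * C * (f x - (f p + s * (x - p))) := by
        have : 0 ≤ f x - (f p + s * (x - p)) := by linarith
        positivity
      have h4 : (x - q) ^ 2 ≤ (R - q) ^ 2 := by nlinarith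
      have h5 : 0 ≤ ((q - C * s) ^ 2 + 2 * C * |f p - s * p| + q ^ 2) := by positivity
      linarith
    · have h1 := hR x hx hxR
      have h2 : C * (f p - s * p) ≤ C * |f p - s * p| :=
        mul_le_mul_of_nonneg_left (le_abs_self _) hC.le
      nlinarith [sq_nonneg (R - q), sq_nonneg (x + q - C * s)]

theorem one_sided_gap {𝓗 : Type*} [NormedAddCommGroup 𝓗] [InnerProductSpace ℂ 𝓗]
    [CompleteSpace 𝓗]
    {ι : Type*} (l : Filter ι)
    (I : Set ℝ) (hI : I.OrdConnected)
    (f : ℝ → ℝ) (hf : StrictConvexOn ℝ I f) (hfc : ContinuousOn f I)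
    (H : ι → 𝓗 →L[ℂ] 𝓗) (hsa : ∀ i, IsSelfAdjoint (H i))
    (hspec : ∀ i, spectrum ℝ (H i) ⊆ I)
    (T : 𝓗 →L[ℂ] 𝓗) (hTsa : IsSelfAdjoint T) (hTspec : spectrum ℝ T ⊆ I)
    (hWOT : ∀ v w : 𝓗, Tendsto (fun i => ⟪(H i) v, w⟫_ℂ) l (𝓝 ⟪T v, w⟫_ℂ))
    (hfWOT : ∀ v w : 𝓗,
      Tendsto (fun i => ⟪(cfc f (H i)) v, w⟫_ℂ) l (𝓝 ⟪(cfc f T) v, w⟫_ℂ))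
    (hright : ¬ BddAbove I →
      (∃ C : ℝ, 0 < C ∧ ∃ R : ℝ, ∀ x ∈ I, R < x → x ^ 2 ≤ C * f x))
    (p q : ℝ) (hpq : p < q) (n : ℝ → ℝ) (hn : Continuous n) (hn0 : ∀ x, p ≤ x → n x = 0)
    (v : 𝓗) :
    Tendsto (fun i => cfc (fun x => max (x - q) 0) (H i) (cfc n T v)) l (𝓝 0) := by
  -- trivial case: nothing of I above q
  by_cases hy : ∃ y ∈ I, q ≤ y
  swap
  · push Not at hy
    have : ∀ i, cfc (fun x => max (x - q) 0) (H i) = 0 := by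
      intro i
      rw [cfc_congr (g := fun _ => (0 : ℝ)) (fun x hx => by
        have := hy x (hspec i hx)
        exact max_eq_right (by linarith)), cfc_const_zero]
    simp only [this, zero_apply, map_zero]
    exact tendsto_const_nhds
  obtain ⟨y, hyI, hqy⟩ := hy
  by_cases hne : (spectrum ℝ T ∩ Set.Iio p).Nonempty
  swap
  · have : cfc n T = 0 := by
      rw [cfc_congr (g := fun _ => (0 : ℝ)) (fun x hx => hn0 x (by
        by_contra h
        push Not at h
        exact hne ⟨x, hx, h⟩)), cfc_const_zero]
    simp only [this, zero_apply, map_zero]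
    exact tendsto_const_nhds
  obtain ⟨x0, hx0, hx0p⟩ := hne
  have hcomp : IsCompact (spectrum ℝ T) := ContinuousFunctionalCalculus.isCompact_spectrum T
  obtain ⟨α, hαs, hαmin⟩ := hcomp.exists_isLeast ⟨x0, hx0⟩
  have hαp : α < p := (hαmin hx0).trans_lt hx0p
  have hαI := hTspec hαs
  have hpI : p ∈ I := hI.out hαI hyI ⟨hαp.le, hpq.le.trans hqy⟩
  have hqI : q ∈ I := hI.out hαI hyI ⟨(hαp.trans hpq).le, hqy⟩
  set p' := (p + q) / 2 with hp'
  have hpp' : p < p' := by rw [hp']; linarith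
  have hp'q : p' < q := by rw [hp']; linarith
  have hp'I : p' ∈ I := hI.out hpI hqI ⟨hpp'.le, hp'q.le⟩
  set g : ℝ → ℝ := fun x =>
    f (max x p') - (f p + (f p' - f p) / (p' - p) * (max x p' - p)) with hg
  have hmaxI : ∀ x ∈ I, max x p' ∈ I := fun x hx => by
    rcases max_choice x p' with h | h <;> rw [h] <;> assumption
  have hgc : ContinuousOn g I := by
    refine ContinuousOn.sub (hfc.comp (by fun_prop) hmaxI) (by fun_prop)
  obtain ⟨K, hK0, hK⟩ := real_growth f I hf p p' q hpI hp'I hqI hpp' hp'q hright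
  set r : ℝ → ℝ := fun x => max (x - q) 0 with hr
  have hrc : Continuous r := by fun_prop
  set w := cfc n T v with hw
  -- main estimate
  have main : ∀ ε : ℝ, 0 < ε → ∀ᶠ i in l,
      ‖cfc r (H i) w‖ < √K * (√ε * ‖w‖) + ε := by
    intro ε hε
    obtain ⟨N, φ, c0, c1, d, hφc, hφ0, hφ1, hd0, hdsum, hφf, hgf⟩ :=
      real_part f I hf.convexOn hfc α p p' hαI hp'I hαp hpp' ε hε
    set ψ : ℕ → ℝ → ℝ := fun k x => φ k x * n x with hψ
    have hψc : ∀ k, Continuous (ψ k) := fun k => (hφc k).mul hn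
    set vk : ℕ → 𝓗 := fun k => cfc (ψ k) T v with hvk
    set F : ℕ → ℝ → ℝ := fun k x => f x - (c0 k + c1 k * x) + d k with hF
    have hFc : ∀ k, ContinuousOn (F k) I := fun k => by
      refine ContinuousOn.add (hfc.sub (by fun_prop)) (by fun_prop)
    have hsumv : w = ∑ k ∈ Finset.range N, vk k := by
      have h1 : cfc n T = ∑ k ∈ Finset.range N, cfc (ψ k) T := by
        rw [← cfc_sum (a := T) ψ (Finset.range N) (fun k _ => (hψc k).continuousOn)]
        refine cfc_congr fun x hx => ?_
        simp only [Finset.sum_apply, hψ, ← Finset.sum_mul]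
        rcases le_total p x with h | h
        · rw [hn0 x h, mul_zero]
        · rw [hφ1 x ⟨hαmin hx, h⟩, one_mul]
      rw [hw, h1]
      simp [hvk]
    have hsumsq : ∑ k ∈ Finset.range N, ‖vk k‖ ^ 2 ≤ ‖w‖ ^ 2 := by
      have h1 : ∑ k ∈ Finset.range N, ‖vk k‖ ^ 2 =
          (⟪cfc (∑ k ∈ Finset.range N, fun x => ψ k x * ψ k x) T v, v⟫_ℂ).re := by
        rw [cfc_sum (a := T) (fun k x => ψ k x * ψ k x) (Finset.range N)
          (fun k _ => ((hψc k).mul (hψc k)).continuousOn)]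
        rw [sum_apply, sum_inner, Complex.re_sum]
        exact Finset.sum_congr rfl fun k _ => aux_normsq T hTsa (ψ k) (hψc k).continuousOn v
      rw [h1, hw, aux_normsq T hTsa n hn.continuousOn v]
      refine aux_mono_s17 T _ _ ?_ (hn.mul hn).continuousOn ?_ v
      · apply Continuous.continuousOn
        have : (∑ k ∈ Finset.range N, fun x => ψ k x * ψ k x) =
            fun x => ∑ k ∈ Finset.range N, ψ k x * ψ k x := by ext x; simp
        rw [this]
        exact continuous_finsetSum _ fun k _ => (hψc k).mul (hψc k)
      · intro x hx
        simp only [Finset.sum_apply, hψ]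
        rcases le_total p x with h | h
        · simp [hn0 x h]
        · have hs := hφ1 x ⟨hαmin hx, h⟩
          calc ∑ k ∈ Finset.range N, φ k x * n x * (φ k x * n x)
              ≤ ∑ k ∈ Finset.range N, φ k x * (n x * n x) := by
                refine Finset.sum_le_sum fun k hk => ?_
                have h1 : φ k x ≤ 1 := by
                  rw [← hs]
                  exact Finset.single_le_sum (f := fun k => φ k x) (fun j _ => hφ0 j x) hk
                have h2 := hφ0 k x
                have h3 := mul_self_nonneg (n x)
                have h4 : φ k x * φ k x ≤ φ k x := by nlinarith
                calc _ = φ k x * φ k x * (n x * n x) := by ring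
                  _ ≤ _ := by gcongr
            _ = n x * n x := by rw [← Finset.sum_mul, hs, one_mul]
    -- quadratic forms
    have hQlim : ∀ k, Tendsto (fun i => (⟪cfc (F k) (H i) (vk k), vk k⟫_ℂ).re) l
        (𝓝 (⟪cfc (F k) T (vk k), vk k⟫_ℂ).re) := by
      intro k
      have e1 : ∀ i, (⟪cfc (F k) (H i) (vk k), vk k⟫_ℂ).re = _ := fun i =>
        aux_affine (H i) (hsa i) f (hfc.mono (hspec i)) (c0 k) (c1 k) (d k) (vk k)
      have e2 : (⟪cfc (F k) T (vk k), vk k⟫_ℂ).re = _ :=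
        aux_affine T hTsa f (hfc.mono hTspec) (c0 k) (c1 k) (d k) (vk k)
      simp only [e1, e2]
      have t1 := (Complex.continuous_re.tendsto _).comp (hfWOT (vk k) (vk k))
      have t2 := (Complex.continuous_re.tendsto _).comp (hWOT (vk k) (vk k))
      exact (t1.sub (t2.const_mul (c1 k))).add_const _
    have hQle : ∀ k < N, (⟪cfc (F k) T (vk k), vk k⟫_ℂ).re ≤ d k * ‖vk k‖ ^ 2 := by
      intro k hk
      refine aux_sandwich T hTsa (F k) (ψ k) (d k) ((hFc k).mono hTspec) (hψc k).continuousOn ?_ v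
      intro x hx
      rcases le_total p x with h | h
      · simp [hψ, hn0 x h]
      · have h1 := hφf k hk x ⟨hαmin hx, h⟩
        have h2 := mul_nonneg (hφ0 k x) (sq_nonneg (n x))
        have h3 := mul_nonneg_of_nonpos_of_nonpos h1 (neg_nonpos.2 h2)
        simp only [hF, hψ]
        nlinarith
    have hrQ : ∀ k < N, ∀ i, ‖cfc r (H i) (vk k)‖ ≤
        √K * √(⟪cfc (F k) (H i) (vk k), vk k⟫_ℂ).re := by
      intro k hk i
      rw [← Real.sqrt_mul hK0]
      apply Real.le_sqrt_of_sq_le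
      have h1 := aux_normle (H i) (hsa i) r (fun x => K * F k x) hrc.continuousOn
        (((hFc k).mono (hspec i)).const_mul K |>.congr (fun x _ => rfl)) (fun x hx => by
          refine (hK x (hspec i hx)).trans ?_
          exact mul_le_mul_of_nonneg_left (hgf k hk x (hspec i hx)) hK0) (vk k)
      rw [cfc_const_mul (a := H i) K (F k) ((hFc k).mono (hspec i)), smul_apply,
        inner_smul_left_eq_smul] at h1
      simpa using h1
    have hle : ∀ i, ‖cfc r (H i) w‖ ≤
        √K * ∑ k ∈ Finset.range N, √(⟪cfc (F k) (H i) (vk k), vk k⟫_ℂ).re := by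
      intro i
      rw [hsumv, map_sum, Finset.mul_sum]
      exact (norm_sum_le _ _).trans
        (Finset.sum_le_sum fun k hk => hrQ k (Finset.mem_range.1 hk) i)
    have hlim : Tendsto (fun i => √K * ∑ k ∈ Finset.range N,
        √(⟪cfc (F k) (H i) (vk k), vk k⟫_ℂ).re) l
        (𝓝 (√K * ∑ k ∈ Finset.range N, √(⟪cfc (F k) T (vk k), vk k⟫_ℂ).re)) := by
      refine (tendsto_finsetSum _ fun k _ => ?_).const_mul _
      exact (Real.continuous_sqrt.tendsto _).comp (hQlim k)
    have hbound : ∑ k ∈ Finset.range N, √(⟪cfc (F k) T (vk k), vk k⟫_ℂ).re ≤ √ε * ‖w‖ := by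
      calc ∑ k ∈ Finset.range N, √(⟪cfc (F k) T (vk k), vk k⟫_ℂ).re
          ≤ ∑ k ∈ Finset.range N, √(d k) * ‖vk k‖ := by
            refine Finset.sum_le_sum fun k hk => ?_
            have hk := Finset.mem_range.1 hk
            refine (Real.sqrt_le_sqrt (hQle k hk)).trans (le_of_eq ?_)
            rw [Real.sqrt_mul (hd0 k hk), Real.sqrt_sq (norm_nonneg _)]
        _ ≤ √(∑ k ∈ Finset.range N, √(d k) ^ 2) * √(∑ k ∈ Finset.range N, ‖vk k‖ ^ 2) :=
            Real.sum_mul_le_sqrt_mul_sqrt _ _ _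
        _ ≤ √ε * √(‖w‖ ^ 2) := by
            gcongr
            refine le_trans (le_of_eq (Finset.sum_congr rfl fun k hk => ?_)) hdsum
            exact Real.sq_sqrt (hd0 k (Finset.mem_range.1 hk))
        _ = √ε * ‖w‖ := by rw [Real.sqrt_sq (norm_nonneg _)]
    have hlt : √K * ∑ k ∈ Finset.range N, √(⟪cfc (F k) T (vk k), vk k⟫_ℂ).re
        < √K * (√ε * ‖w‖) + ε := by
      have := mul_le_mul_of_nonneg_left hbound (Real.sqrt_nonneg K)
      linarith
    filter_upwards [hlim.eventually_lt_const hlt] with i hi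
    exact (hle i).trans_lt hi
  rw [tendsto_zero_iff_norm_tendsto_zero]
  refine (tendsto_order.2 ⟨fun c hc => Eventually.of_forall fun i => hc.trans_le (norm_nonneg _), ?_⟩)
  intro c hc
  have hcont : Tendsto (fun ε : ℝ => √K * (√ε * ‖w‖) + ε) (𝓝[>] 0) (𝓝 0) := by
    have : Continuous (fun ε : ℝ => √K * (√ε * ‖w‖) + ε) := by fun_prop
    have h := this.tendsto 0
    simp only [Real.sqrt_zero, zero_mul, mul_zero, add_zero] at h
    exact h.mono_left nhdsWithin_le_nhds
  obtain ⟨ε, hεc, hε⟩ := ((hcont.eventually_lt_const hc).and self_mem_nhdsWithin).exists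
  filter_upwards [main ε hε] with i hi
  exact hi.trans hεc

theorem one_sided {𝓗 : Type*} [NormedAddCommGroup 𝓗] [InnerProductSpace ℂ 𝓗]
    [CompleteSpace 𝓗]
    {ι : Type*} (l : Filter ι)
    (I : Set ℝ) (hI : I.OrdConnected)
    (f : ℝ → ℝ) (hf : StrictConvexOn ℝ I f) (hfc : ContinuousOn f I)
    (H : ι → 𝓗 →L[ℂ] 𝓗) (hsa : ∀ i, IsSelfAdjoint (H i))
    (hspec : ∀ i, spectrum ℝ (H i) ⊆ I)
    (T : 𝓗 →L[ℂ] 𝓗) (hTsa : IsSelfAdjoint T) (hTspec : spectrum ℝ T ⊆ I)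
    (hWOT : ∀ v w : 𝓗, Tendsto (fun i => ⟪(H i) v, w⟫_ℂ) l (𝓝 ⟪T v, w⟫_ℂ))
    (hfWOT : ∀ v w : 𝓗,
      Tendsto (fun i => ⟪(cfc f (H i)) v, w⟫_ℂ) l (𝓝 ⟪(cfc f T) v, w⟫_ℂ))
    (hright : ¬ BddAbove I →
      (∃ C : ℝ, 0 < C ∧ ∃ R : ℝ, ∀ x ∈ I, R < x → x ^ 2 ≤ C * f x))
    (p : ℝ) (c n : ℝ → ℝ) (hc : Continuous c) (hcp : ∀ x, |c x| ≤ max (x - p) 0)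
    (hn : Continuous n) (hn0 : ∀ x, p ≤ x → n x = 0) (v : 𝓗) :
    Tendsto (fun i => cfc c (H i) (cfc n T v)) l (𝓝 0) := by
  set w := cfc n T v with hw
  rw [tendsto_zero_iff_norm_tendsto_zero]
  refine (tendsto_order.2 ⟨fun a ha => Eventually.of_forall fun i => ha.trans_le (norm_nonneg _), ?_⟩)
  intro a ha
  obtain ⟨δ, hδ, hδa⟩ : ∃ δ : ℝ, 0 < δ ∧ δ * ‖w‖ < a := by
    refine ⟨a / (‖w‖ + 1), by positivity, ?_⟩
    rw [div_mul_eq_mul_div, div_lt_iff₀ (by positivity)]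
    nlinarith [norm_nonneg w]
  have h1 := one_sided_gap l I hI f hf hfc H hsa hspec T hTsa hTspec hWOT hfWOT hright p (p + δ)
    (by linarith) n hn hn0 v
  have h2 := (tendsto_zero_iff_norm_tendsto_zero.1 h1).eventually_lt_const
    (show 0 < a - δ * ‖w‖ by linarith)
  filter_upwards [h2] with i hi
  have h3 := aux_normle' (H i) (hsa i) c (fun x => max (x - (p + δ)) 0 + δ) 1 zero_le_one
    hc.continuousOn (by fun_prop) (fun x _ => by
      rw [one_mul, abs_of_nonneg (a := max (x - (p + δ)) 0 + δ) (by positivity)]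
      refine (hcp x).trans (max_le ?_ ?_)
      · linarith [le_max_left (x - (p + δ)) 0]
      · linarith [le_max_right (x - (p + δ)) 0]) w
  rw [cfc_add (a := H i) (fun x => max (x - (p + δ)) 0) (fun _ => δ) (by fun_prop) (by fun_prop),
    cfc_const _ _ (hsa i), Algebra.algebraMap_eq_smul_one, add_apply, smul_apply, one_mul] at h3
  have h4 : ‖δ • (1 : 𝓗 →L[ℂ] 𝓗) w‖ = δ * ‖w‖ := by
    rw [norm_smul, Real.norm_of_nonneg hδ.le]; rfl
  have h5 := norm_add_le (cfc (fun x => max (x - (p + δ)) 0) (H i) w) (δ • (1 : 𝓗 →L[ℂ] 𝓗) w)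
  linarith

theorem other_sided {𝓗 : Type*} [NormedAddCommGroup 𝓗] [InnerProductSpace ℂ 𝓗]
    [CompleteSpace 𝓗]
    {ι : Type*} (l : Filter ι)
    (I : Set ℝ) (hI : I.OrdConnected)
    (f : ℝ → ℝ) (hf : StrictConvexOn ℝ I f) (hfc : ContinuousOn f I)
    (H : ι → 𝓗 →L[ℂ] 𝓗) (hsa : ∀ i, IsSelfAdjoint (H i))
    (hspec : ∀ i, spectrum ℝ (H i) ⊆ I)
    (T : 𝓗 →L[ℂ] 𝓗) (hTsa : IsSelfAdjoint T) (hTspec : spectrum ℝ T ⊆ I)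
    (hWOT : ∀ v w : 𝓗, Tendsto (fun i => ⟪(H i) v, w⟫_ℂ) l (𝓝 ⟪T v, w⟫_ℂ))
    (hfWOT : ∀ v w : 𝓗,
      Tendsto (fun i => ⟪(cfc f (H i)) v, w⟫_ℂ) l (𝓝 ⟪(cfc f T) v, w⟫_ℂ))
    (hleft : ¬ BddBelow I →
      (∃ C : ℝ, 0 < C ∧ ∃ R : ℝ, ∀ x ∈ I, x < R → x ^ 2 ≤ C * f x))
    (p : ℝ) (c n : ℝ → ℝ) (hc : Continuous c) (hcp : ∀ x, |c x| ≤ max (p - x) 0)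
    (hn : Continuous n) (hn0 : ∀ x, x ≤ p → n x = 0) (v : 𝓗) :
    Tendsto (fun i => cfc c (H i) (cfc n T v)) l (𝓝 0) := by
  have hcfc : ∀ (A : 𝓗 →L[ℂ] 𝓗) (hA : IsSelfAdjoint A) (u : ℝ → ℝ)
      (hu : ContinuousOn u (spectrum ℝ A)), cfc (fun x => u (-x)) (-A) = cfc u A := by
    intro A hA u hu
    have himg : (fun x => - x) '' spectrum ℝ (-A) = spectrum ℝ A := by
      rw [← spectrum.neg_eq]; simp
    rw [cfc_comp_neg (a := -A) u (by rw [himg]; exact hu) hA.neg, neg_neg]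
  have hspecneg : ∀ A : 𝓗 →L[ℂ] 𝓗, spectrum ℝ A ⊆ I → spectrum ℝ (-A) ⊆ -I := by
    intro A hA x hx
    rw [← spectrum.neg_eq] at hx
    exact hA hx
  have hI' : (-I).OrdConnected := by
    constructor
    intro x hx y hy z hz
    exact hI.out hy hx ⟨by linarith [hz.2], by linarith [hz.1]⟩
  have key := one_sided l (-I) hI' (fun x => f (-x)) ?_ ?_ (fun i => - H i) (fun i => (hsa i).neg)
    (fun i => hspecneg _ (hspec i)) (-T) hTsa.neg (hspecneg _ hTspec) ?_ ?_ ?_ (-p)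
    (fun x => c (-x)) (fun x => n (-x)) (hc.comp continuous_neg) ?_ (hn.comp continuous_neg) ?_ v
  · refine key.congr fun i => ?_
    rw [hcfc T hTsa n hn.continuousOn, hcfc (H i) (hsa i) c hc.continuousOn]
  · refine ⟨hI'.convex, ?_⟩
    intro x hx y hy hxy a b ha hb hab
    have := hf.2 hx hy (fun h => hxy (neg_injective h)) ha hb hab
    simp only [smul_eq_mul] at this ⊢
    convert this using 2
    ring
  · exact hfc.comp continuous_neg.continuousOn (fun x hx => hx)
  · intro v w
    simpa [neg_apply, inner_neg_left] using (hWOT v w).neg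
  · intro v w
    rw [hcfc T hTsa f (hfc.mono hTspec)]
    refine (hfWOT v w).congr fun i => ?_
    rw [hcfc (H i) (hsa i) f (hfc.mono (hspec i))]
  · intro hb
    obtain ⟨C, hC, R, hR⟩ := hleft (fun h => hb (by simpa using h.neg))
    refine ⟨C, hC, -R, fun x hx hxR => ?_⟩
    have := hR (-x) hx (by linarith)
    rwa [neg_sq] at this
  · intro x
    have := hcp (-x)
    convert this using 2
    ring
  · intro x hx
    exact hn0 _ (by linarith)


/-- **Remark 2.6(iii), second part.** Under the hypotheses of Theorem 2.1, if in
addition `f(x) > 0` for `x` sufficiently large and `x² = O(f(x))` as `x → ∞` (when `I`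
is unbounded on the right), and symmetrically on the left, then `(Hᵢ)` converges
strongly to `H`. -/
theorem stmt_17 {𝓗 : Type*} [NormedAddCommGroup 𝓗] [InnerProductSpace ℂ 𝓗]
    [CompleteSpace 𝓗]
    {ι : Type*} (l : Filter ι) [l.NeBot]
    (I : Set ℝ) (hI : I.OrdConnected)
    (f : ℝ → ℝ) (hf : StrictConvexOn ℝ I f) (hfc : ContinuousOn f I)
    (H : ι → 𝓗 →L[ℂ] 𝓗) (hsa : ∀ i, IsSelfAdjoint (H i))
    (hspec : ∀ i, spectrum ℝ (H i) ⊆ I)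
    (T : 𝓗 →L[ℂ] 𝓗) (hTsa : IsSelfAdjoint T) (hTspec : spectrum ℝ T ⊆ I)
    (hWOT : ∀ v w : 𝓗, Tendsto (fun i => ⟪(H i) v, w⟫_ℂ) l (𝓝 ⟪T v, w⟫_ℂ))
    (hfWOT : ∀ v w : 𝓗,
      Tendsto (fun i => ⟪(cfc f (H i)) v, w⟫_ℂ) l (𝓝 ⟪(cfc f T) v, w⟫_ℂ))
    (hright : ¬ BddAbove I →
      (∃ R : ℝ, ∀ x ∈ I, R < x → 0 < f x) ∧
      (∃ C : ℝ, 0 < C ∧ ∃ R : ℝ, ∀ x ∈ I, R < x → x ^ 2 ≤ C * f x))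
    (hleft : ¬ BddBelow I →
      (∃ R : ℝ, ∀ x ∈ I, x < R → 0 < f x) ∧
      (∃ C : ℝ, 0 < C ∧ ∃ R : ℝ, ∀ x ∈ I, x < R → x ^ 2 ≤ C * f x)) :
    ∀ v : 𝓗, Tendsto (fun i => (H i) v) l (𝓝 (T v)) := by
  intro v
  have S1 := one_sided l I hI f hf hfc H hsa hspec T hTsa hTspec hWOT hfWOT
    (fun h => (hright h).2)
  have S2 := other_sided l I hI f hf hfc H hsa hspec T hTsa hTspec hWOT hfWOT
    (fun h => (hleft h).2)
  set β : ℝ := ‖T‖ + 1 with hβ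
  have hβ0 : 0 < β := by positivity
  have hTβ : ∀ x ∈ spectrum ℝ T, -(β - 1) ≤ x ∧ x ≤ β - 1 := by
    intro x hx
    have h0 : ‖x‖ ≤ ‖T‖ * ‖(1 : 𝓗 →L[ℂ] 𝓗)‖ := spectrum.norm_le_norm_mul_of_mem hx
    have h1 : ‖(1 : 𝓗 →L[ℂ] 𝓗)‖ ≤ 1 := ContinuousLinearMap.norm_id_le
    have h2 : |x| ≤ ‖T‖ := by
      rw [← Real.norm_eq_abs]
      nlinarith [norm_nonneg T]
    rw [abs_le] at h2
    constructor <;> linarith [h2.1, h2.2]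
  -- upper and lower tails
  have tail1 : Tendsto (fun i => cfc (fun x => max (x - β) 0) (H i) v) l (𝓝 0) := by
    have h := S1 β (fun x => max (x - β) 0) (fun x => max 0 (min 1 (β - x))) (by fun_prop)
      (fun x => (abs_of_nonneg (le_max_right _ _)).le) (by fun_prop)
      (fun x hx => max_eq_left (by rw [min_eq_right] <;> linarith)) v
    have e : cfc (fun x => max 0 (min 1 (β - x))) T = 1 := by
      rw [cfc_congr (g := fun _ => (1 : ℝ)) (fun x hx => by
        have := hTβ x hx
        simp only
        rw [min_eq_left (by linarith), max_eq_right zero_le_one]), cfc_const_one ℝ T hTsa]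
    rw [e] at h
    exact h
  have tail2 : Tendsto (fun i => cfc (fun x => max (-β - x) 0) (H i) v) l (𝓝 0) := by
    have h := S2 (-β) (fun x => max (-β - x) 0) (fun x => max 0 (min 1 (x + β))) (by fun_prop)
      (fun x => (abs_of_nonneg (le_max_right _ _)).le) (by fun_prop)
      (fun x hx => max_eq_left (by rw [min_eq_right] <;> linarith)) v
    have e : cfc (fun x => max 0 (min 1 (x + β))) T = 1 := by
      rw [cfc_congr (g := fun _ => (1 : ℝ)) (fun x hx => by
        have := hTβ x hx
        simp only
        rw [min_eq_left (by linarith), max_eq_right zero_le_one]), cfc_const_one ℝ T hTsa]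
    rw [e] at h
    exact h
  rw [tendsto_iff_norm_sub_tendsto_zero]
  refine (tendsto_order.2 ⟨fun a ha => Eventually.of_forall fun i => ha.trans_le (norm_nonneg _), ?_⟩)
  intro ε hε
  -- choose the partition
  obtain ⟨M, hM⟩ := exists_nat_gt (16 * β ^ 2 * ‖v‖ ^ 2 / (ε / 3) ^ 2)
  set N : ℕ := M + 1 with hN
  have hN0 : (0 : ℝ) < N := by rw [hN]; positivity
  have hMN : 16 * β ^ 2 * ‖v‖ ^ 2 / (ε / 3) ^ 2 < N := by rw [hN]; push_cast; linarith
  set η : ℝ := 2 * β / N with hη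
  have hη0 : 0 < η := by positivity
  have hηN : N * η = 2 * β := by rw [hη]; field_simp
  have hsmall : N * (2 * η * ‖v‖) ^ 2 < (ε / 3) ^ 2 := by
    rw [div_lt_iff₀ (by positivity)] at hMN
    have : N * (2 * η * ‖v‖) ^ 2 = 16 * β ^ 2 * ‖v‖ ^ 2 / N := by
      rw [hη]; field_simp; ring
    rw [this, div_lt_iff₀ hN0]
    linarith
  set a : ℕ → ℝ := fun k => -β + k * η with ha
  have ha1 : ∀ k, a (k + 1) = a k + η := fun k => by simp only [ha]; push_cast; ring
  have hamono : ∀ j k : ℕ, j ≤ k → a j ≤ a k := by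
    intro j k hjk
    have : (j : ℝ) ≤ k := by exact_mod_cast hjk
    simp only [ha]; nlinarith
  set ρ : ℕ → ℝ → ℝ := fun k x => max (x - a k) 0 with hρ
  set c : ℕ → ℝ → ℝ := fun k x => ρ k x - ρ (k + 1) x with hcdef
  set n : ℕ → ℝ → ℝ := fun k x => η - c k x with hndef
  have hcc : ∀ k, Continuous (c k) := fun k => by simp only [hcdef, hρ]; fun_prop
  have hnc : ∀ k, Continuous (n k) := fun k => by simp only [hndef]; exact continuous_const.sub (hcc k)
  have hc0 : ∀ k x, 0 ≤ c k x ∧ c k x ≤ η ∧ c k x ≤ max (x - a k) 0 ∧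
      (a (k + 1) ≤ x → c k x = η) ∧ (x ≤ a k → c k x = 0) ∧ n k x ≤ max (a (k + 1) - x) 0 := by
    intro k x
    simp only [hndef, hcdef, hρ, ha1]
    rcases le_total x (a k) with h | h
    · rw [max_eq_right (by linarith : x - a k ≤ 0), max_eq_right (by linarith : x - (a k + η) ≤ 0),
        max_eq_left (by linarith : 0 ≤ a k + η - x)]
      refine ⟨by linarith, by linarith, by linarith, fun _ => by linarith, fun _ => by linarith,
        by linarith⟩
    · rcases le_total x (a k + η) with h' | h'
      · rw [max_eq_left (by linarith : 0 ≤ x - a k), max_eq_right (by linarith : x - (a k + η) ≤ 0),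
          max_eq_left (by linarith : 0 ≤ a k + η - x)]
        refine ⟨by linarith, by linarith, by linarith, fun _ => by linarith, fun _ => by linarith,
          by linarith⟩
      · rw [max_eq_left (by linarith : 0 ≤ x - a k), max_eq_left (by linarith : 0 ≤ x - (a k + η)),
          max_eq_right (by linarith : a k + η - x ≤ 0)]
        refine ⟨by linarith, by linarith, by linarith, fun _ => by linarith, fun _ => by linarith,
          by linarith⟩
  set W : ℕ → ι → 𝓗 := fun k i => cfc (c k) (H i) v - cfc (c k) T v with hW
  -- decomposition
  have hdec : ∀ A : 𝓗 →L[ℂ] 𝓗, IsSelfAdjoint A → A v = (∑ k ∈ Finset.range N, cfc (c k) A v)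
      + cfc (fun x => max (x - β) 0) A v - cfc (fun x => max (-β - x) 0) A v - β • v := by
    intro A hA
    have h1 : A = (∑ k ∈ Finset.range N, cfc (c k) A)
      + cfc (fun x => max (x - β) 0) A - cfc (fun x => max (-β - x) 0) A - β • 1 := by
      rw [← cfc_sum (a := A) c (Finset.range N) (fun k _ => (hcc k).continuousOn)]
      have hs : (∑ k ∈ Finset.range N, c k) = fun x => ρ 0 x - ρ N x := by
        ext x
        simp only [Finset.sum_apply, hcdef]
        exact Finset.sum_range_sub' (fun k => ρ k x) N
      have hρc : ∀ k, Continuous (ρ k) := fun k => by simp only [hρ]; fun_prop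
      rw [hs, ← Algebra.algebraMap_eq_smul_one, ← cfc_const β A hA,
        ← cfc_add (a := A) (fun x => ρ 0 x - ρ N x) (fun x => max (x - β) 0)
          ((hρc 0).sub (hρc N)).continuousOn (by fun_prop),
        ← cfc_sub (a := A) (fun x => ρ 0 x - ρ N x + max (x - β) 0) (fun x => max (-β - x) 0)
          (Continuous.continuousOn (by fun_prop)) (by fun_prop),
        ← cfc_sub (a := A) (fun x => ρ 0 x - ρ N x + max (x - β) 0 - max (-β - x) 0) (fun _ => β)
          (Continuous.continuousOn (by fun_prop)) (by fun_prop)]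
      conv_lhs => rw [← cfc_id' ℝ A hA]
      refine cfc_congr fun x _ => ?_
      simp only [hρ, ha]
      rw [hηN]
      simp only [Nat.cast_zero, zero_mul, add_zero]
      have e1 : x - (-β + 2 * β) = x - β := by ring
      rw [e1]
      rcases le_total (-β) x with h | h
      · rw [max_eq_left (by linarith : 0 ≤ x - -β), max_eq_right (by linarith : -β - x ≤ 0)]; ring
      · rw [max_eq_right (by linarith : x - -β ≤ 0), max_eq_left (by linarith : 0 ≤ -β - x)]; ring
    have h2 := congrArg (fun B : 𝓗 →L[ℂ] 𝓗 => B v) h1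
    simp only [sub_apply, add_apply, sum_apply, smul_apply] at h2
    exact h2
  have hTt1 : cfc (fun x => max (x - β) 0) T = 0 := by
    rw [cfc_congr (g := fun _ => (0 : ℝ)) (fun x hx => max_eq_right (by linarith [hTβ x hx])),
      cfc_const_zero]
  have hTt2 : cfc (fun x => max (-β - x) 0) T = 0 := by
    rw [cfc_congr (g := fun _ => (0 : ℝ)) (fun x hx => max_eq_right (by linarith [hTβ x hx])),
      cfc_const_zero]
  have hdiff : ∀ i, H i v - T v = (∑ k ∈ Finset.range N, W k i)
      + cfc (fun x => max (x - β) 0) (H i) v - cfc (fun x => max (-β - x) 0) (H i) v := by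
    intro i
    have h1 := hdec (H i) (hsa i)
    have h2 := hdec T hTsa
    rw [hTt1, hTt2, zero_apply] at h2
    rw [h1, h2]
    simp only [hW, Finset.sum_sub_distrib]
    abel
  have hWnorm : ∀ k i, ‖W k i‖ ≤ 2 * η * ‖v‖ := by
    intro k i
    have hb : ∀ A : 𝓗 →L[ℂ] 𝓗, IsSelfAdjoint A → ‖cfc (c k) A v‖ ≤ η * ‖v‖ := by
      intro A hA
      have := aux_normle' A hA (c k) (fun _ => 1) η hη0.le (hcc k).continuousOn (by fun_prop)
        (fun x _ => by
          rw [abs_of_nonneg (hc0 k x).1, abs_one, mul_one]; exact (hc0 k x).2.1) v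
      rw [cfc_const_one ℝ A hA] at this
      exact this
    calc ‖W k i‖ ≤ ‖cfc (c k) (H i) v‖ + ‖cfc (c k) T v‖ := norm_sub_le _ _
      _ ≤ _ := by linarith [hb (H i) (hsa i), hb T hTsa]
  -- asymptotic orthogonality
  have hlt : ∀ j k : ℕ, k < j → Tendsto (fun i => ⟪W j i, W k i⟫_ℂ) l (𝓝 0) := by
    intro j k hkj
    have haj : a (k + 1) ≤ a j := hamono _ _ hkj
    have hsym : ∀ (A : 𝓗 →L[ℂ] 𝓗) (u : ℝ → ℝ) (x y : 𝓗),
        ⟪cfc u A x, y⟫_ℂ = ⟪x, cfc u A y⟫_ℂ := by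
      intro A u x y
      have h2 : IsSelfAdjoint (cfc u A) := cfc_predicate u A
      exact h2.isSymmetric x y
    have hzero : ∀ A : 𝓗 →L[ℂ] 𝓗, ⟪cfc (c j) A v, cfc (n k) A v⟫_ℂ = 0 := by
      intro A
      have : cfc (n k) A * cfc (c j) A = 0 := by
        rw [← cfc_mul (a := A) (n k) (c j) (hnc k).continuousOn (hcc j).continuousOn,
          cfc_congr (g := fun _ => (0 : ℝ)) (fun x _ => by
            simp only
            rcases le_total x (a j) with h | h
            · rw [(hc0 j x).2.2.2.2.1 h, mul_zero]
            · simp only [hndef]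
              rw [(hc0 k x).2.2.2.1 (haj.trans h), sub_self, zero_mul]), cfc_const_zero]
      have h3 : cfc (n k) A (cfc (c j) A v) = 0 := by
        have := congrArg (fun B : 𝓗 →L[ℂ] 𝓗 => B v) this
        exact this
      rw [← hsym, h3, inner_zero_left]
    have hWn : ∀ i, W k i = - (cfc (n k) (H i) v - cfc (n k) T v) := by
      intro i
      have hb : ∀ A : 𝓗 →L[ℂ] 𝓗, IsSelfAdjoint A → cfc (n k) A v = η • v - cfc (c k) A v := by
        intro A hA
        have : cfc (n k) A = η • 1 - cfc (c k) A := by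
          rw [← Algebra.algebraMap_eq_smul_one, ← cfc_const η A hA,
            ← cfc_sub (a := A) (fun _ => η) (c k) (by fun_prop) (hcc k).continuousOn]
        rw [this]; rfl
      rw [hb _ (hsa i), hb _ hTsa]
      simp only [hW]; abel
    have t1 := S1 (a j) (c j) (n k) (hcc j)
      (fun x => by rw [abs_of_nonneg (hc0 j x).1]; exact (hc0 j x).2.2.1) (hnc k)
      (fun x hx => by
        simp only [hndef]; rw [(hc0 k x).2.2.2.1 (haj.trans hx), sub_self]) v
    have t2 := S2 (a (k + 1)) (n k) (c j) (hnc k)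
      (fun x => by
        rw [abs_of_nonneg (by simp only [hndef]; linarith [(hc0 k x).2.1])]
        exact (hc0 k x).2.2.2.2.2) (hcc j)
      (fun x hx => (hc0 j x).2.2.2.2.1 (hx.trans haj)) v
    have t3 : Tendsto (fun i => ⟪v, cfc (c j) (H i) (cfc (n k) T v)⟫_ℂ
        + ⟪cfc (n k) (H i) (cfc (c j) T v), v⟫_ℂ) l (𝓝 0) := by
      have u1 : Tendsto (fun i => ⟪v, cfc (c j) (H i) (cfc (n k) T v)⟫_ℂ) l (𝓝 ⟪v, (0 : 𝓗)⟫_ℂ) :=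
        tendsto_const_nhds.inner t1
      have u2 : Tendsto (fun i => ⟪cfc (n k) (H i) (cfc (c j) T v), v⟫_ℂ) l (𝓝 ⟪(0 : 𝓗), v⟫_ℂ) :=
        t2.inner tendsto_const_nhds
      simpa using u1.add u2
    refine t3.congr fun i => ?_
    rw [hWn i, inner_neg_right]
    simp only [hW]
    rw [inner_sub_right, inner_sub_left, inner_sub_left, hzero, hzero, ← hsym (H i) (c j),
      hsym (H i) (n k)]
    ring
  have hne : ∀ j k : ℕ, j ≠ k → Tendsto (fun i => (⟪W j i, W k i⟫_ℂ).re) l (𝓝 0) := by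
    intro j k hjk
    rcases lt_or_gt_of_ne hjk with h | h
    · have := (Complex.continuous_re.tendsto _).comp (hlt k j h)
      rw [Complex.zero_re] at this
      refine this.congr fun i => ?_
      simp only [Function.comp]
      exact inner_re_symm (𝕜 := ℂ) _ _
    · have := (Complex.continuous_re.tendsto _).comp (hlt j k h)
      rwa [Complex.zero_re] at this
  set S : ι → ℝ := fun i => ∑ j ∈ Finset.range N, ∑ k ∈ Finset.range N,
    if j = k then 0 else (⟪W j i, W k i⟫_ℂ).re with hS
  have hSlim : Tendsto S l (𝓝 0) := by
    have : Tendsto S l (𝓝 (∑ j ∈ Finset.range N, ∑ k ∈ Finset.range N, (0 : ℝ))) := by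
      refine tendsto_finsetSum _ fun j _ => tendsto_finsetSum _ fun k _ => ?_
      by_cases h : j = k
      · simp only [if_pos h]; exact tendsto_const_nhds
      · simp only [if_neg h]; exact hne j k h
    simpa using this
  have hsq : ∀ i, ‖∑ k ∈ Finset.range N, W k i‖ ^ 2 ≤ N * (2 * η * ‖v‖) ^ 2 + S i := by
    intro i
    have h1 : ‖∑ k ∈ Finset.range N, W k i‖ ^ 2 =
        ∑ j ∈ Finset.range N, ∑ k ∈ Finset.range N, (⟪W j i, W k i⟫_ℂ).re := by
      have h := inner_self_eq_norm_sq (𝕜 := ℂ) (∑ k ∈ Finset.range N, W k i)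
      rw [← h, sum_inner]
      simp only [inner_sum, map_sum]
      rfl
    have h2 : ∑ j ∈ Finset.range N, ∑ k ∈ Finset.range N, (⟪W j i, W k i⟫_ℂ).re =
        (∑ j ∈ Finset.range N, ‖W j i‖ ^ 2) + S i := by
      rw [hS, ← Finset.sum_add_distrib]
      refine Finset.sum_congr rfl fun j hj => ?_
      have h3 : ‖W j i‖ ^ 2 = ∑ k ∈ Finset.range N, if j = k then (⟪W j i, W k i⟫_ℂ).re else 0 := by
        rw [Finset.sum_ite_eq, if_pos hj]
        exact (inner_self_eq_norm_sq (𝕜 := ℂ) (W j i)).symm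
      rw [h3, ← Finset.sum_add_distrib]
      refine Finset.sum_congr rfl fun k _ => ?_
      by_cases h : j = k <;> simp [h]
    rw [h1, h2]
    have h4 : ∑ j ∈ Finset.range N, ‖W j i‖ ^ 2 ≤ ∑ j ∈ Finset.range N, (2 * η * ‖v‖) ^ 2 := by
      refine Finset.sum_le_sum fun j _ => ?_
      have := hWnorm j i
      gcongr
    rw [Finset.sum_const, Finset.card_range, nsmul_eq_mul] at h4
    linarith
  have ev1 := hSlim.eventually_lt_const (sub_pos.2 hsmall)
  have ev2 := (tendsto_zero_iff_norm_tendsto_zero.1 tail1).eventually_lt_const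
    (show 0 < ε / 3 by positivity)
  have ev3 := (tendsto_zero_iff_norm_tendsto_zero.1 tail2).eventually_lt_const
    (show 0 < ε / 3 by positivity)
  filter_upwards [ev1, ev2, ev3] with i h1 h2 h3
  have h4 : ‖∑ k ∈ Finset.range N, W k i‖ < ε / 3 := by
    have := hsq i
    refine lt_of_pow_lt_pow_left₀ 2 (by positivity) ?_
    linarith
  rw [hdiff i]
  have h5 := norm_sub_le ((∑ k ∈ Finset.range N, W k i) + cfc (fun x => max (x - β) 0) (H i) v)
    (cfc (fun x => max (-β - x) 0) (H i) v)
  have h6 := norm_add_le (∑ k ∈ Finset.range N, W k i) (cfc (fun x => max (x - β) 0) (H i) v)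
  linarith
end
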